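/- Let d be a positive fundamental discriminant, let g = gcd(3, d), and let K₁, …, K_n be pairwise non-isomorphic totally real cubic number fields, each of discriminant d. For each i define r_i : ℕ → ℕ by r_i(m) = #{x ∈ O_{K_i}^0 : Tr_{K_i/ℚ}(x²) = 2·g·m}. If complex numbers λ₁, …, λ_n satisfy λ₁·r_1(m) + ⋯ + λ_n·r_n(m) = 0 for every natural number m, then λ₁ = ⋯ = λ_n = 0. In other words, the theta series f_{K_1}, …, f_{K_n} are linearly independent over ℂ. -/

import Mathlib

/-- An integer `d` is a fundamental discriminant if `d ≠ 1` and either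
`d ≡ 1 (mod 4)` and `d` is squarefree, or `d ≡ 0 (mod 4)`, `d/4` is squarefree,
and `d/4 ≡ 2` or `3 (mod 4)`. -/
def IsFundamentalDiscriminant (d : ℤ) : Prop :=
  d ≠ 1 ∧
    ((d % 4 = 1 ∧ Squarefree d) ∨
      (d % 4 = 0 ∧ Squarefree (d / 4) ∧ (d / 4 % 4 = 2 ∨ d / 4 % 4 = 3)))

/-
Up to a scalar, the form `Tr(θ²)` on the trace-zero integers of a cubic field `K` of discriminant
`d` is a binary quadratic form of discriminant `D = -3d/gcd(3,d)²`, hence the norm form of an ideal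
of `F = ℚ(√D)`. The Lagrange resolvent of `θ` is a linear form whose cube lies in `F`, so under this
identification the cubic form `N(θ)` becomes `x ↦ Tr(αx³)`, with `N(α)` fixed by the norm of the
ideal. Two consequences follow. The products of the cubes of the ideal classes occurring for `d` are
trivial. Moreover, an ideal class and its inverse (realised by conjugation) both determine `K` up to
isomorphism: an equality of classes matches the cubic forms up to sign, hence also the minimal
polynomials `X³ - Tr(θ²)/2 · X - N(θ)`.

The `m`-th coefficient of the theta series counts the ideals of norm `m` in one ideal class `cᵢ`.
The functions on the class group whose sum over the ideals of each norm vanishes therefore contain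
every relation `∑ aᵢ [cᵢ]` between theta series. They vanish at `1`, and they are stable under the
Hecke operators `f ↦ f(px) + f(p⁻¹x)` for the classes `p` of prime ideals, hence under the
projections to the joint eigenspaces. The eigenspace that contains a character `χ` of odd order is
spanned by `χ` and `χ⁻¹`: if it contained a third character `ψ`, then Euler products would relate
`L(s, ψχ)` and `L(s, ψχ⁻¹)`, which are bounded at `s = 1`, to the zeta function of `F`, which has a
pole. Evaluation at `1` shows that the Fourier coefficients of a relation at `χ` and `χ⁻¹` cancel.
For an arbitrary character `χ` some power of `χ` of odd order sends every `cᵢ` to `χ(cᵢ⁴)`, so `∑ aᵢ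
([cᵢ⁴] + [cᵢ⁻⁴]) = 0`. Since the `cᵢ³` coincide and have order at most two, these terms do not
overlap, and all the `aᵢ` vanish.
-/

namespace CubicTheta
open NumberField Filter Topology

section IdealClass
variable {R : Type*} [CommRing R] [IsDedekindDomain R]

open Classical in
/-- The ideal class of an integral ideal, with junk value `1` at the zero ideal. Having a total
function on ideals avoids carrying nonzero-divisor subtypes through sums over ideals. -/
noncomputable def idealClass (I : Ideal R) : ClassGroup R :=
  if h : I ≠ ⊥ then ClassGroup.mk0 ⟨I, mem_nonZeroDivisors_iff_ne_zero.mpr h⟩ else 1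

lemma idealClass_of_ne_bot {I : Ideal R} (h : I ≠ ⊥) :
    idealClass I = ClassGroup.mk0 ⟨I, mem_nonZeroDivisors_iff_ne_zero.mpr h⟩ :=
  dif_pos h

lemma idealClass_mul {I J : Ideal R} (hI : I ≠ ⊥) (hJ : J ≠ ⊥) :
    idealClass (I * J) = idealClass I * idealClass J := by
  rw [idealClass_of_ne_bot hI, idealClass_of_ne_bot hJ,
    idealClass_of_ne_bot (mul_ne_zero hI hJ), ← map_mul]
  rfl

lemma idealClass_eq_one_iff {I : Ideal R} (hI : I ≠ ⊥) :
    idealClass I = 1 ↔ ∃ x, I = Ideal.span {x} := by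
  rw [idealClass_of_ne_bot hI, ClassGroup.mk0_eq_one_iff]
  exact ⟨fun h => h.principal, fun h => ⟨h⟩⟩

lemma idealClass_span_singleton (x : R) : idealClass (Ideal.span {x}) = 1 := by
  by_cases h : Ideal.span {x} = ⊥
  · exact dif_neg (not_not.mpr h)
  · exact (idealClass_eq_one_iff h).2 ⟨x, rfl⟩

lemma idealClass_one : idealClass (1 : Ideal R) = 1 := by
  rw [Ideal.one_eq_top, ← Ideal.span_singleton_one, idealClass_span_singleton]

lemma idealClass_pow {I : Ideal R} (hI : I ≠ ⊥) (n : ℕ) :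
    idealClass (I ^ n) = idealClass I ^ n := by
  induction n with
  | zero => rw [pow_zero, pow_zero, idealClass_one]
  | succ n ih => rw [pow_succ, pow_succ, idealClass_mul (pow_ne_zero n hI) hI, ih]

lemma exists_idealClass_eq (c : ClassGroup R) : ∃ I : Ideal R, I ≠ ⊥ ∧ idealClass I = c := by
  obtain ⟨I, rfl⟩ := ClassGroup.mk0_surjective c
  have hI : (I : Ideal R) ≠ ⊥ := mem_nonZeroDivisors_iff_ne_zero.mp I.2
  exact ⟨I, hI, idealClass_of_ne_bot hI⟩

/-- Prime ideals generate the class group. -/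
lemma hom_eq_one_of_forall_prime {M : Type*} [Monoid M] {χ : ClassGroup R →* M}
    (h : ∀ P : Ideal R, Prime P → χ (idealClass P) = 1) : χ = 1 := by
  ext c
  obtain ⟨I, hI, rfl⟩ := exists_idealClass_eq c
  induction I using UniqueFactorizationMonoid.induction_on_prime with
  | h₁ => exact absurd rfl hI
  | h₂ I hI' => rw [Ideal.isUnit_iff.1 hI', ← Ideal.one_eq_top, idealClass_one, map_one,
      MonoidHom.one_apply]
  | h₃ I P hI' hP ih =>
    rw [idealClass_mul hP.ne_zero hI', map_mul, ih hI', h P hP, MonoidHom.one_apply, one_mul,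
      MonoidHom.one_apply]

end IdealClass

section Characters
variable {G : Type*} [CommGroup G]

/-- The Fourier coefficient of a function on a finite abelian group at a character. -/
noncomputable def fourierCoeff [Fintype G] (f : G → ℂ) (χ : G →* ℂˣ) : ℂ :=
  ∑ c, f c * (χ c⁻¹ : ℂˣ)

lemma sum_character_apply_eq_zero [Finite G] [Fintype (G →* ℂˣ)] {c : G} (hc : c ≠ 1) :
    ∑ χ : G →* ℂˣ, (χ c : ℂ) = 0 := by
  obtain ⟨χ, hχ⟩ := CommGroup.exists_apply_ne_one_of_hasEnoughRootsOfUnity G ℂ hc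
  exact sum_hom_units_eq_zero ((Units.coeHom ℂ).comp (MonoidHom.eval c))
    fun h => hχ (Units.ext (by simpa using DFunLike.congr_fun h χ))

/-- Eigenvalue of the averaging operator `f ↦ (c ↦ f (c * p) + f (c * p⁻¹))` at a character. -/
noncomputable def heckeEigenvalue (χ : G →* ℂˣ) (p : G) : ℂ := (χ p : ℂ) + (χ p⁻¹ : ℂˣ)

lemma heckeEigenvalue_eq_iff {χ ψ : G →* ℂˣ} {p : G} :
    heckeEigenvalue ψ p = heckeEigenvalue χ p ↔ ψ p = χ p ∨ ψ p = (χ p)⁻¹ := by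
  have hx := (ψ p).ne_zero
  have hy := (χ p).ne_zero
  simp only [heckeEigenvalue, map_inv, Units.val_inv_eq_inv_val, Units.ext_iff]
  rw [← mul_eq_one_iff_eq_inv₀ hy, ← sub_eq_zero (b := (χ p : ℂ)), ← sub_eq_zero (b := (1 : ℂ)),
    ← mul_eq_zero]
  field_simp
  constructor <;> intro h <;> linear_combination h

variable [Fintype G]

lemma fourierCoeff_translate (f : G → ℂ) (p : G) (χ : G →* ℂˣ) :
    fourierCoeff (fun c => f (c * p)) χ = χ p * fourierCoeff f χ := by
  rw [fourierCoeff, ← Fintype.sum_equiv (Equiv.mulRight p⁻¹) _ _ fun _ => rfl, fourierCoeff,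
    Finset.mul_sum]
  exact Finset.sum_congr rfl fun c _ => by simp; ring

lemma fourierCoeff_add (f g : G → ℂ) (χ : G →* ℂˣ) :
    fourierCoeff (f + g) χ = fourierCoeff f χ + fourierCoeff g χ := by
  simp [fourierCoeff, add_mul, Finset.sum_add_distrib]

lemma fourierCoeff_smul (a : ℂ) (f : G → ℂ) (χ : G →* ℂˣ) :
    fourierCoeff (a • f) χ = a * fourierCoeff f χ := by
  simp [fourierCoeff, Finset.mul_sum, mul_assoc]

lemma fourierCoeff_sum_mul_single [DecidableEq G] {ι : Type*} [Fintype ι] (a : ι → ℂ) (c : ι → G)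
    (χ : G →* ℂˣ) :
    fourierCoeff (fun g => ∑ i, a i * if g = c i then 1 else 0) χ = ∑ i, a i * χ (c i)⁻¹ := by
  simp_rw [fourierCoeff, Finset.sum_mul]
  rw [Finset.sum_comm]
  simp

lemma sum_fourierCoeff_mul [Fintype (G →* ℂˣ)] (f : G → ℂ) (c : G) :
    ∑ χ, fourierCoeff f χ * (χ c : ℂ) = Fintype.card (G →* ℂˣ) * f c := by
  classical
  have horth (b : G) : ∑ χ : G →* ℂˣ, ((χ b⁻¹ : ℂˣ) : ℂ) * χ c =
      if b = c then (Fintype.card (G →* ℂˣ) : ℂ) else 0 := by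
    simp_rw [← Units.val_mul, ← map_mul]
    split_ifs with h
    · simp [h]
    · exact sum_character_apply_eq_zero (by rwa [Ne, inv_mul_eq_one])
  simp_rw [fourierCoeff, Finset.sum_mul, mul_assoc]
  rw [Finset.sum_comm]
  simp_rw [← Finset.mul_sum, horth]
  simp [mul_comm]

lemma eq_zero_of_fourierCoeff_eq_zero {f : G → ℂ} (h : ∀ χ, fourierCoeff f χ = 0) : f = 0 := by
  ext c
  have := Fintype.ofFinite (G →* ℂˣ)
  have hc := sum_fourierCoeff_mul f c
  simp_rw [h, zero_mul, Finset.sum_const_zero] at hc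
  exact (mul_eq_zero.1 hc.symm).resolve_left (by simp)

lemma fourierCoeff_hecke (f : G → ℂ) (p : G) (χ : G →* ℂˣ) :
    fourierCoeff (fun c => f (c * p) + f (c * p⁻¹)) χ = heckeEigenvalue χ p * fourierCoeff f χ := by
  rw [heckeEigenvalue, add_mul, ← fourierCoeff_translate, ← fourierCoeff_translate,
    ← fourierCoeff_add]
  rfl

/-- Lagrange interpolation in the averaging operators isolates a joint eigenspace. -/
lemma exists_mem_fourierCoeff_eq {V : Submodule ℂ (G → ℂ)} {T : Set G}
    (hV : ∀ p ∈ T, ∀ f ∈ V, (fun c => f (c * p) + f (c * p⁻¹)) ∈ V) {f : G → ℂ} (hf : f ∈ V)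
    (χ : G →* ℂˣ) (S : Finset (G →* ℂˣ))
    (hS : ∀ ψ ∈ S, ∃ p ∈ T, heckeEigenvalue ψ p ≠ heckeEigenvalue χ p) :
    ∃ g ∈ V, (∀ ψ ∈ S, fourierCoeff g ψ = 0) ∧
      ∀ ψ, (∀ p ∈ T, heckeEigenvalue ψ p = heckeEigenvalue χ p) →
        fourierCoeff g ψ = fourierCoeff f ψ := by
  classical
  induction S using Finset.induction_on with
  | empty => exact ⟨f, hf, by simp, fun _ _ => rfl⟩
  | insert φ S _ ih =>
    obtain ⟨g, hgV, hgS, hgf⟩ := ih fun ψ hψ => hS ψ (Finset.mem_insert_of_mem hψ)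
    obtain ⟨p, hpT, hp⟩ := hS φ (Finset.mem_insert_self _ _)
    have hp' : heckeEigenvalue χ p - heckeEigenvalue φ p ≠ 0 := sub_ne_zero.2 hp.symm
    set g' : G → ℂ := (heckeEigenvalue χ p - heckeEigenvalue φ p)⁻¹ •
      ((fun c => g (c * p) + g (c * p⁻¹)) + (-heckeEigenvalue φ p) • g) with hg'
    have hcoeff (ψ : G →* ℂˣ) : fourierCoeff g' ψ = (heckeEigenvalue χ p - heckeEigenvalue φ p)⁻¹ *
        ((heckeEigenvalue ψ p - heckeEigenvalue φ p) * fourierCoeff g ψ) := by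
      rw [hg', fourierCoeff_smul, fourierCoeff_add, fourierCoeff_hecke, fourierCoeff_smul]
      ring
    refine ⟨g', V.smul_mem _ (V.add_mem (hV p hpT g hgV) (V.smul_mem _ hgV)), ?_, ?_⟩
    · intro ψ hψ
      rcases Finset.mem_insert.1 hψ with rfl | hψ
      · rw [hcoeff, sub_self, zero_mul, mul_zero]
      · rw [hcoeff, hgS ψ hψ, mul_zero, mul_zero]
    · intro ψ hψ
      rw [hcoeff, hψ p hpT, inv_mul_cancel_left₀ hp', hgf ψ hψ]

lemma sum_fourierCoeff_eigenspace_eq_zero [Fintype (G →* ℂˣ)] {V : Submodule ℂ (G → ℂ)} {T : Set G}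
    (hV : ∀ p ∈ T, ∀ f ∈ V, (fun c => f (c * p) + f (c * p⁻¹)) ∈ V) (hV₁ : ∀ f ∈ V, f 1 = 0)
    {f : G → ℂ} (hf : f ∈ V) (χ : G →* ℂˣ)
    [DecidablePred fun ψ : G →* ℂˣ => ∀ p ∈ T, heckeEigenvalue ψ p = heckeEigenvalue χ p] :
    ∑ ψ with ∀ p ∈ T, heckeEigenvalue ψ p = heckeEigenvalue χ p, fourierCoeff f ψ = 0 := by
  obtain ⟨g, hgV, hg₀, hgf⟩ := exists_mem_fourierCoeff_eq hV hf χ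
    {ψ | ¬ ∀ p ∈ T, heckeEigenvalue ψ p = heckeEigenvalue χ p} (by simp)
  calc ∑ ψ with ∀ p ∈ T, heckeEigenvalue ψ p = heckeEigenvalue χ p, fourierCoeff f ψ
      = ∑ ψ, fourierCoeff g ψ := by
        rw [Finset.sum_filter]
        refine Finset.sum_congr rfl fun ψ _ => ?_
        split_ifs with h
        · exact (hgf ψ h).symm
        · exact (hg₀ ψ (by simpa using h)).symm
    _ = 0 := by simpa [hV₁ g hgV] using sum_fourierCoeff_mul g 1

end Characters

section ImaginaryQuadratic
variable {F : Type*} [Field F] [NumberField F] [IsTotallyComplex F]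

lemma card_infinitePlace_eq_one (hF : Module.finrank ℚ F = 2) :
    Fintype.card (InfinitePlace F) = 1 := by
  have hc := IsTotallyComplex.finrank (K := F)
  rw [InfinitePlace.card_eq_nrRealPlaces_add_nrComplexPlaces,
    IsTotallyComplex.nrRealPlaces_eq_zero]
  omega

lemma finite_units (hF : Module.finrank ℚ F = 2) : Finite (𝓞 F)ˣ := by
  have hrank : Units.rank F = 0 := by rw [Units.rank, card_infinitePlace_eq_one hF]
  have : IsEmpty (Fin (Units.rank F)) := by rw [hrank]; infer_instance
  have htop := Units.closure_fundSystem_sup_torsion_eq_top F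
  rw [Set.range_eq_empty, Subgroup.closure_empty, bot_sup_eq] at htop
  have : Finite (⊤ : Subgroup (𝓞 F)ˣ) := htop ▸ inferInstanceAs (Finite (Units.torsion F))
  exact Finite.of_equiv _ Subgroup.topEquiv.toEquiv

lemma norm_embedding_sq (hF : Module.finrank ℚ F = 2) (φ : F →+* ℂ) (x : 𝓞 F) :
    ‖φ x‖ ^ 2 = Ideal.absNorm (Ideal.span {x}) := by
  obtain ⟨w, hw⟩ := Fintype.card_eq_one_iff.1 (card_infinitePlace_eq_one hF)
  have : Unique (InfinitePlace F) := ⟨⟨w⟩, hw⟩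
  have h := InfinitePlace.prod_eq_abs_norm (x : F)
  rw [Fintype.prod_unique, ← Unique.eq_default (InfinitePlace.mk φ), IsTotallyComplex.mult_eq,
    InfinitePlace.apply, ← Algebra.coe_norm_int] at h
  rw [h, Ideal.absNorm_span_singleton, Nat.cast_natAbs]
  norm_cast

end ImaginaryQuadratic

section RealEstimates

lemma abs_rpow_neg_sub_rpow_neg_le {p a b : ℝ} (hp₂ : 2 ≤ p) (hp₄ : p ≤ 4) (ha : 1 ≤ a)
    (hb : 1 ≤ b) :
    |a ^ (-p) - b ^ (-p)| ≤ 4 * |a - b| * ((a ^ 3)⁻¹ + (b ^ 3)⁻¹) := by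
  wlog hab : a ≤ b generalizing a b
  · rw [abs_sub_comm, abs_sub_comm a b, add_comm]
    exact this hb ha (le_of_not_ge hab)
  have ha₀ : 0 < a := by linarith
  have hb₀ : 0 < b := by linarith
  have hmono : b ^ (-p) ≤ a ^ (-p) := Real.rpow_le_rpow_of_nonpos ha₀ hab (by linarith)
  have hlog : Real.log b - Real.log a ≤ (b - a) / a := by
    rw [← Real.log_div hb₀.ne' ha₀.ne', sub_div, div_self ha₀.ne']
    exact Real.log_le_sub_one_of_pos (div_pos hb₀ ha₀)
  have hlog₀ : 0 ≤ Real.log b - Real.log a := sub_nonneg.2 (Real.log_le_log ha₀ hab)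
  have hexp : a ^ (-p) * (1 - p * (Real.log b - Real.log a)) ≤ b ^ (-p) := by
    have hb_eq : b ^ (-p) = a ^ (-p) * Real.exp (-(p * (Real.log b - Real.log a))) := by
      rw [Real.rpow_def_of_pos hb₀, Real.rpow_def_of_pos ha₀, ← Real.exp_add]
      ring_nf
    rw [hb_eq]
    gcongr
    linarith [Real.add_one_le_exp (-(p * (Real.log b - Real.log a)))]
  rw [abs_of_nonneg (by linarith), abs_sub_comm, abs_of_nonneg (by linarith)]
  calc a ^ (-p) - b ^ (-p) ≤ a ^ (-p) * (p * (Real.log b - Real.log a)) := by linarith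
    _ ≤ a ^ (-2 : ℝ) * (4 * ((b - a) / a)) := by gcongr
    _ = 4 * (b - a) * (a ^ 3)⁻¹ := by
        rw [Real.rpow_neg ha₀.le, Real.rpow_two]
        field_simp
    _ ≤ 4 * (b - a) * ((a ^ 3)⁻¹ + (b ^ 3)⁻¹) := by
        refine mul_le_mul_of_nonneg_left (le_add_of_nonneg_right (by positivity)) ?_
        linarith

lemma one_sub_mul_pow_le {x δ : ℝ} {k : ℕ} (hx : 0 ≤ x) (hx' : x ≤ 1 / 2) (hδ : 0 ≤ δ)
    (hδ' : δ ≤ 1) (hk : 2 ≤ k * δ) : (1 - δ * x) ^ k ≤ 1 - x := by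
  have hδx : 0 ≤ δ * x := mul_nonneg hδ hx
  have hinv : 1 - δ * x ≤ (1 + δ * x)⁻¹ := by
    rw [← one_div, le_div_iff₀ (by linarith)]
    nlinarith
  calc (1 - δ * x) ^ k ≤ ((1 + δ * x) ^ k)⁻¹ := by
        rw [← inv_pow]
        exact pow_le_pow_left₀ (by nlinarith) hinv k
    _ ≤ (1 + k * (δ * x))⁻¹ := inv_anti₀ (by positivity) (one_add_mul_le_pow (by linarith) k)
    _ ≤ (1 + 2 * x)⁻¹ := inv_anti₀ (by positivity) (by nlinarith)
    _ ≤ 1 - x := by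
        rw [← one_div, div_le_iff₀ (by positivity)]
        nlinarith

lemma norm_one_sub_lt_two {w : ℂ} {n : ℕ} (hn : Odd n) (hw : w ^ n = 1) : ‖1 - w‖ < 2 := by
  have hw₁ : ‖w‖ = 1 := Complex.norm_eq_one_of_pow_eq_one hw hn.pos.ne'
  have hle : ‖1 - w‖ ≤ 2 := (norm_sub_le _ _).trans_eq (by rw [norm_one, hw₁]; norm_num)
  refine hle.lt_of_ne fun h => ?_
  have heq : w = -1 := by
    have hray : SameRay ℝ (1 : ℂ) (-w) := by
      rw [sameRay_iff_norm_add, ← sub_eq_add_neg, h, norm_neg, norm_one, hw₁]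
      norm_num
    rw [← neg_eq_iff_eq_neg]
    exact ((hray.eq_of_norm_eq (by rw [norm_neg, norm_one, hw₁]))).symm
  rw [heq, hn.neg_one_pow] at hw
  norm_num at hw

lemma norm_one_sub_mul_ofReal_le {w : ℂ} {x δ : ℝ} (hx : 0 ≤ x) (hx' : x ≤ 1)
    (hw : ‖1 - w‖ ≤ 2 - δ) : ‖1 - w * x‖ ≤ 1 + (1 - δ) * x := by
  calc ‖1 - w * x‖ = ‖((1 - x : ℝ) : ℂ) + x * (1 - w)‖ := by push_cast; ring_nf
    _ ≤ (1 - x) + x * ‖1 - w‖ := (norm_add_le _ _).trans_eq (by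
        rw [norm_mul, Complex.norm_real, Complex.norm_real, Real.norm_of_nonneg (by linarith),
          Real.norm_of_nonneg hx])
    _ ≤ 1 + (1 - δ) * x := by nlinarith

end RealEstimates

section Zeta
variable {F : Type*} [Field F] [NumberField F]

/-- The term `N(I)⁻ˢ` of the Dedekind zeta function at a real point. -/
noncomputable def zetaTerm (s : ℝ) (I : Ideal (𝓞 F)) : ℝ := (Ideal.absNorm I : ℝ) ^ (-s)

lemma zetaTerm_nonneg (s : ℝ) (I : Ideal (𝓞 F)) : 0 ≤ zetaTerm s I := by
  unfold zetaTerm; positivity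

lemma zetaTerm_mul (s : ℝ) (I J : Ideal (𝓞 F)) :
    zetaTerm s (I * J) = zetaTerm s I * zetaTerm s J := by
  rw [zetaTerm, map_mul, Nat.cast_mul, Real.mul_rpow (by positivity) (by positivity), zetaTerm,
    zetaTerm]

lemma zetaTerm_bot {s : ℝ} (hs : s ≠ 0) : zetaTerm s (⊥ : Ideal (𝓞 F)) = 0 := by
  rw [zetaTerm, Ideal.absNorm_bot, Nat.cast_zero, Real.zero_rpow (neg_ne_zero.2 hs)]

lemma zetaTerm_one (s : ℝ) : zetaTerm s (1 : Ideal (𝓞 F)) = 1 := by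
  simp [zetaTerm]

lemma zetaTerm_prime_le {s : ℝ} (hs : 1 ≤ s) {P : Ideal (𝓞 F)} (hP : Prime P) :
    zetaTerm s P ≤ 1 / 2 := by
  have h₀ : Ideal.absNorm P ≠ 0 := by rw [Ne, Ideal.absNorm_eq_zero_iff]; exact hP.ne_zero
  have h₁ : Ideal.absNorm P ≠ 1 := by
    rw [Ne, Ideal.absNorm_eq_one_iff]; exact (Ideal.isPrime_of_prime hP).ne_top
  have h₂ : (2 : ℝ) ≤ Ideal.absNorm P := by exact_mod_cast (by omega : 2 ≤ Ideal.absNorm P)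
  calc zetaTerm s P ≤ (2 : ℝ) ^ (-s) :=
        Real.rpow_le_rpow_of_nonpos (by norm_num) h₂ (by linarith)
    _ ≤ (2 : ℝ) ^ (-1 : ℝ) := Real.rpow_le_rpow_of_exponent_le (by norm_num) (by linarith)
    _ = 1 / 2 := by rw [Real.rpow_neg_one, one_div]

/-- The number of integral ideals of `F` of absolute norm `n`. -/
noncomputable def idealCount (F : Type*) [Field F] [NumberField F] (n : ℕ) : ℕ :=
  Nat.card {I : Ideal (𝓞 F) // Ideal.absNorm I = n}

lemma term_idealCount {s : ℝ} (hs : s ≠ 0) (n : ℕ) :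
    LSeries.term (fun n => (idealCount F n : ℂ)) s n =
      ((idealCount F n * (n : ℝ) ^ (-s) : ℝ) : ℂ) := by
  rcases eq_or_ne n 0 with rfl | hn
  · simp [Real.zero_rpow (neg_ne_zero.2 hs)]
  · rw [LSeries.term_of_ne_zero hn, Real.rpow_neg (by positivity), Complex.ofReal_mul,
      Complex.ofReal_inv, Complex.ofReal_cpow (by positivity), div_eq_mul_inv]
    simp

lemma summable_idealCount_mul_rpow {s : ℝ} (hs : 1 < s) :
    Summable fun n : ℕ => (idealCount F n : ℝ) * (n : ℝ) ^ (-s) := by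
  -- An `L`-series that is not summable has junk value `0`, so the nonzero residue at `1` forces
  -- summability at some `t` between `1` and `s`.
  have hne : ∀ᶠ t : ℝ in 𝓝[>] 1, (t - 1 : ℂ) * dedekindZeta F t ≠ 0 :=
    (tendsto_sub_one_mul_dedekindZeta_nhdsGT F).eventually_ne
      (Complex.ofReal_ne_zero.2 (dedekindZeta_residue_ne_zero F))
  obtain ⟨t, ht, hts⟩ := (hne.and (Ioo_mem_nhdsGT hs)).exists
  have hsum : LSeriesSummable (fun n => (idealCount F n : ℂ)) t :=
    not_imp_comm.1 (LSeries.eq_zero_of_not_LSeriesSummable _ _) (right_ne_zero_of_mul ht)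
  refine Complex.summable_ofReal.1 ((summable_congr fun n => ?_).1
    (hsum.of_re_le_re (s' := s) (by simpa using hts.2.le)))
  exact term_idealCount (by linarith) n

lemma tsum_zetaTerm_fiber (s : ℝ) (n : ℕ) :
    ∑' I : {I : Ideal (𝓞 F) // Ideal.absNorm I = n}, zetaTerm s I.1 =
      idealCount F n * (n : ℝ) ^ (-s) := by
  have hterm (I : {I : Ideal (𝓞 F) // Ideal.absNorm I = n}) :
      zetaTerm s I.1 = (n : ℝ) ^ (-s) := by rw [zetaTerm, I.2]
  rw [tsum_congr hterm, tsum_const, nsmul_eq_mul, idealCount]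

lemma summable_zetaTerm {s : ℝ} (hs : 1 < s) : Summable (zetaTerm s : Ideal (𝓞 F) → ℝ) := by
  rw [← (Equiv.sigmaFiberEquiv (Ideal.absNorm : Ideal (𝓞 F) → ℕ)).summable_iff,
    summable_sigma_of_nonneg (by exact fun _ => zetaTerm_nonneg s _)]
  refine ⟨fun n => ?_, ?_⟩
  · have : Finite {I : Ideal (𝓞 F) // Ideal.absNorm I = n} := Ideal.finite_setOfPred_absNorm_eq n
    exact Summable.of_finite
  · simpa only [Function.comp_apply, Equiv.sigmaFiberEquiv_apply, tsum_zetaTerm_fiber] using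
      summable_idealCount_mul_rpow hs

/-- The Dedekind zeta function on the real half-line `s > 1`, as a sum over ideals. -/
noncomputable def realZeta (F : Type*) [Field F] [NumberField F] (s : ℝ) : ℝ :=
  ∑' I : Ideal (𝓞 F), zetaTerm s I

lemma dedekindZeta_eq_realZeta {s : ℝ} (hs : 1 < s) : dedekindZeta F s = realZeta F s := by
  have hsum : Summable fun x => zetaTerm s
      (Equiv.sigmaFiberEquiv (Ideal.absNorm : Ideal (𝓞 F) → ℕ) x) :=
    (Equiv.sigmaFiberEquiv (Ideal.absNorm : Ideal (𝓞 F) → ℕ)).summable_iff.2 (summable_zetaTerm hs)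
  rw [realZeta, ← (Equiv.sigmaFiberEquiv (Ideal.absNorm : Ideal (𝓞 F) → ℕ)).tsum_eq,
    hsum.tsum_sigma, Complex.ofReal_tsum, dedekindZeta, LSeries]
  refine tsum_congr fun n => (term_idealCount (by linarith) n).trans ?_
  exact congrArg Complex.ofReal (tsum_zetaTerm_fiber s n).symm

lemma tendsto_sub_one_mul_realZeta (F : Type*) [Field F] [NumberField F] :
    Tendsto (fun s : ℝ => (s - 1) * realZeta F s) (𝓝[>] 1) (𝓝 (dedekindZeta_residue F)) := by
  have h : Tendsto (fun s : ℝ => (((s - 1) * realZeta F s : ℝ) : ℂ)) (𝓝[>] 1)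
      (𝓝 (dedekindZeta_residue F : ℂ)) := by
    refine (tendsto_sub_one_mul_dedekindZeta_nhdsGT F).congr' ?_
    filter_upwards [self_mem_nhdsWithin] with s hs
    rw [dedekindZeta_eq_realZeta hs]
    push_cast
    rfl
  exact (Complex.continuous_re.tendsto _).comp h

lemma tendsto_realZeta_atTop (F : Type*) [Field F] [NumberField F] :
    Tendsto (realZeta F) (𝓝[>] 1) atTop := by
  have hsub : Tendsto (fun s : ℝ => s - 1) (𝓝[>] 1) (𝓝[>] 0) := by
    refine tendsto_nhdsWithin_iff.2 ⟨tendsto_nhdsWithin_of_tendsto_nhds ?_, ?_⟩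
    · simpa using (continuous_sub_right (1 : ℝ)).tendsto 1
    · filter_upwards [self_mem_nhdsWithin] with s hs using Set.mem_Ioi.2 (sub_pos.2 hs)
  refine ((tendsto_inv_nhdsGT_zero.comp hsub).atTop_mul_pos (dedekindZeta_residue_pos F)
    (tendsto_sub_one_mul_realZeta F)).congr' ?_
  filter_upwards [self_mem_nhdsWithin] with s hs
  exact inv_mul_cancel_left₀ (sub_pos.2 hs).ne' _

end Zeta

section PrincipalMultiples
variable {R : Type*} [CommRing R] [IsDedekindDomain R]

lemma exists_mul_eq_span_singleton {I J : Ideal R} (hI : I ≠ ⊥) (hJ : J ≠ ⊥)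
    (hc : idealClass J = (idealClass I)⁻¹) : ∃ g, g ≠ 0 ∧ I * J = Ideal.span {g} := by
  obtain ⟨g, hg⟩ := (idealClass_eq_one_iff (mul_ne_zero hI hJ)).1
    (by rw [idealClass_mul hI hJ, hc, mul_inv_cancel])
  refine ⟨g, ?_, hg⟩
  rintro rfl
  exact mul_ne_zero hI hJ (by simpa using hg)

lemma exists_mul_eq_span_singleton_of_mem {I : Ideal R} (hI : I ≠ ⊥) {v : R} (hv : v ∈ I)
    (hv₀ : v ≠ 0) : ∃ J ≠ ⊥, idealClass J = (idealClass I)⁻¹ ∧ I * J = Ideal.span {v} := by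
  obtain ⟨J, hJ⟩ : I ∣ Ideal.span {v} := by rwa [Ideal.dvd_span_singleton]
  have hJ₀ : J ≠ ⊥ := by
    rintro rfl
    exact hv₀ (by simpa using hJ)
  refine ⟨J, hJ₀, ?_, hJ.symm⟩
  rw [eq_comm, inv_eq_iff_mul_eq_one, ← idealClass_mul hI hJ₀, ← hJ, idealClass_span_singleton]

/-- The nonzero elements `v` of an ideal `I` are the generators of the ideals `I * J` with `J`
in the inverse class, each of which has as many generators as there are units. -/
lemma exists_equiv_units_prod {I : Ideal R} (hI : I ≠ ⊥) :
    ∃ e : Rˣ × {J : Ideal R // J ≠ ⊥ ∧ idealClass J = (idealClass I)⁻¹} ≃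
        {v : R // v ∈ I ∧ v ≠ 0}, ∀ x, Ideal.span {(e x).1} = I * x.2.1 := by
  choose g hg₀ hg using fun J : {J : Ideal R // J ≠ ⊥ ∧ idealClass J = (idealClass I)⁻¹} =>
    exists_mul_eq_span_singleton hI J.2.1 J.2.2
  have hspan (u : Rˣ) J : Ideal.span {(u : R) * g J} = I * J.1 := by
    rw [hg, Ideal.span_singleton_eq_span_singleton]
    exact associated_unit_mul_left _ _ u.isUnit
  have hmem (u : Rˣ) J : (u : R) * g J ∈ I := by
    rw [← Ideal.span_singleton_le_iff_mem, hspan]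
    exact Ideal.mul_le_left
  let f (x : Rˣ × {J : Ideal R // J ≠ ⊥ ∧ idealClass J = (idealClass I)⁻¹}) :
      {v : R // v ∈ I ∧ v ≠ 0} :=
    ⟨x.1 * g x.2, hmem x.1 x.2, mul_ne_zero x.1.ne_zero (hg₀ x.2)⟩
  have hf : Function.Bijective f := by
    refine ⟨fun ⟨u, J⟩ ⟨u', J'⟩ h => ?_, fun ⟨v, hv, hv₀⟩ => ?_⟩
    · have hval : (u : R) * g J = u' * g J' := congrArg Subtype.val h
      obtain rfl : J = J' :=
        Subtype.ext (mul_left_cancel₀ hI (by rw [← hspan u, ← hspan u', hval]))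
      rw [Units.ext (mul_right_cancel₀ (hg₀ J) hval)]
    · obtain ⟨J, hJ₀, hJc, hJ⟩ := exists_mul_eq_span_singleton_of_mem hI hv hv₀
      have hassoc := hg ⟨J, hJ₀, hJc⟩
      rw [hJ, Ideal.span_singleton_eq_span_singleton] at hassoc
      obtain ⟨u, hu⟩ := hassoc.symm
      exact ⟨⟨u, J, hJ₀, hJc⟩, Subtype.ext ((mul_comm _ _).trans hu)⟩
  exact ⟨Equiv.ofBijective f hf, fun x => hspan x.1 x.2⟩

end PrincipalMultiples

section ClassZeta
variable {F : Type*} [Field F] [NumberField F]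

/-- The partial zeta function of an ideal class at a real point. -/
noncomputable def classZeta (c : ClassGroup (𝓞 F)) (s : ℝ) : ℝ :=
  ∑' J : {J : Ideal (𝓞 F) // idealClass J = c}, zetaTerm s J.1

lemma classZeta_nonneg (c : ClassGroup (𝓞 F)) (s : ℝ) : 0 ≤ classZeta c s :=
  tsum_nonneg fun _ => zetaTerm_nonneg _ _

lemma classZeta_le_realZeta (c : ClassGroup (𝓞 F)) {s : ℝ} (hs : 1 < s) :
    classZeta c s ≤ realZeta F s :=
  (summable_zetaTerm hs).tsum_subtype_le _ {J | idealClass J = c} (zetaTerm_nonneg s)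

/-- The terms `N(v)⁻ˢ` of the zeta function of the lattice `𝓞 F`. -/
noncomputable def latticeTerm (s : ℝ) (v : 𝓞 F) : ℝ := zetaTerm s (Ideal.span {v})

lemma latticeTerm_nonneg (s : ℝ) (v : 𝓞 F) : 0 ≤ latticeTerm s v := zetaTerm_nonneg _ _

lemma latticeTerm_zero {s : ℝ} (hs : s ≠ 0) : latticeTerm s (0 : 𝓞 F) = 0 := by
  rw [latticeTerm, Set.singleton_zero, Ideal.span_zero, zetaTerm_bot hs]

lemma hasSum_zetaTerm_ne_bot (c : ClassGroup (𝓞 F)) {s : ℝ} (hs : 1 < s) :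
    HasSum (fun J : {J : Ideal (𝓞 F) // J ≠ ⊥ ∧ idealClass J = c} => zetaTerm s J.1)
      (classZeta c s) := by
  have h : HasSum (fun J : {J : Ideal (𝓞 F) // idealClass J = c} => zetaTerm s J.1)
      (classZeta c s) :=
    ((summable_zetaTerm hs).comp_injective Subtype.val_injective).hasSum
  have hι : Function.Injective fun J : {J : Ideal (𝓞 F) // J ≠ ⊥ ∧ idealClass J = c} =>
      (⟨J.1, J.2.2⟩ : {J : Ideal (𝓞 F) // idealClass J = c}) :=
    fun J J' hJ => Subtype.ext (congrArg (fun K => K.1) hJ)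
  rw [← hι.hasSum_iff] at h
  · exact h
  · intro J hJ
    have hbot : J.1 = ⊥ := by
      by_contra h₀
      exact hJ ⟨⟨J.1, h₀, J.2⟩, rfl⟩
    rw [hbot, zetaTerm_bot (by linarith)]

lemma hasSum_latticeTerm_mem [Finite (𝓞 F)ˣ] {I : Ideal (𝓞 F)} (hI : I ≠ ⊥) {s : ℝ} (hs : 1 < s) :
    HasSum (fun v : I => latticeTerm s (v : 𝓞 F))
      (Nat.card (𝓞 F)ˣ * (zetaTerm s I * classZeta (idealClass I)⁻¹ s)) := by
  have := Fintype.ofFinite (𝓞 F)ˣ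
  obtain ⟨e, he⟩ := exists_equiv_units_prod hI
  have hι : Function.Injective fun v : {v : 𝓞 F // v ∈ I ∧ v ≠ 0} => (⟨v.1, v.2.1⟩ : I) :=
    fun a b h => Subtype.ext (congrArg (fun x : I => (x : 𝓞 F)) h)
  have hzero (v : I) (hv : v ∉ Set.range fun v : {v : 𝓞 F // v ∈ I ∧ v ≠ 0} =>
      (⟨v.1, v.2.1⟩ : I)) : latticeTerm s (v : 𝓞 F) = 0 := by
    have hv₀ : (v : 𝓞 F) = 0 := by
      by_contra h
      exact hv ⟨⟨v, v.2, h⟩, rfl⟩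
    rw [hv₀, latticeTerm_zero (by linarith)]
  rw [← hι.hasSum_iff hzero, ← e.hasSum_iff]
  have hterm : ((fun v : I => latticeTerm s (v : 𝓞 F)) ∘ fun v : {v : 𝓞 F // v ∈ I ∧ v ≠ 0} =>
      (⟨v.1, v.2.1⟩ : I)) ∘ e = fun x => 1 * (zetaTerm s I * zetaTerm s x.2.1) := by
    funext x
    simp only [Function.comp_apply, latticeTerm, he, zetaTerm_mul, one_mul]
  have hunits : HasSum (fun _ : (𝓞 F)ˣ => (1 : ℝ)) (Nat.card (𝓞 F)ˣ) := by
    simpa using hasSum_fintype fun _ : (𝓞 F)ˣ => (1 : ℝ)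
  have hclass := (hasSum_zetaTerm_ne_bot (idealClass I)⁻¹ hs).mul_left (zetaTerm s I)
  rw [hterm]
  have hprod := hunits.summable.mul_of_nonneg hclass.summable (fun _ => zero_le_one)
    fun _ => mul_nonneg (zetaTerm_nonneg _ _) (zetaTerm_nonneg _ _)
  convert hunits.mul hclass hprod

lemma hasSum_latticeTerm [Finite (𝓞 F)ˣ] {s : ℝ} (hs : 1 < s) :
    HasSum (latticeTerm s : 𝓞 F → ℝ) (Nat.card (𝓞 F)ˣ * classZeta (1 : ClassGroup (𝓞 F)) s) := by
  obtain ⟨I, hI⟩ : ∃ I : Ideal (𝓞 F), I = 1 := ⟨1, rfl⟩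
  have h := hasSum_latticeTerm_mem (hI.trans_ne one_ne_zero) hs
  have hclass : idealClass I = 1 := by rw [hI, idealClass_one]
  have hterm : zetaTerm s I = 1 := by rw [hI, zetaTerm_one]
  rw [hclass, hterm, one_mul, inv_one] at h
  refine (hasSum_subtype_iff_of_support_subset (s := (I : Set (𝓞 F))) fun v _ => ?_).1 h
  simp [hI]

end ClassZeta

lemma exists_equiv_quotient_prod {R : Type*} [CommRing R] (I : Ideal R) :
    ∃ (r : R ⧸ I → R) (e : (R ⧸ I) × I ≃ R), ∀ x, e x = r x.1 + x.2 := by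
  have hmk (q : R ⧸ I) (a : I) : Ideal.Quotient.mk I (q.out + a) = q := by
    rw [map_add, Ideal.Quotient.mk_out, Ideal.Quotient.eq_zero_iff_mem.2 a.2, add_zero]
  have hbij : Function.Bijective fun x : (R ⧸ I) × I => x.1.out + (x.2 : R) := by
    refine ⟨fun ⟨q, a⟩ ⟨q', a'⟩ h => ?_, fun v =>
      ⟨(Ideal.Quotient.mk I v, ⟨v - (Ideal.Quotient.mk I v).out, ?_⟩), ?_⟩⟩
    · have h : q.out + (a : R) = q'.out + a' := h
      obtain rfl : q = q' := by rw [← hmk q a, h, hmk]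
      rw [Subtype.ext (add_left_cancel h)]
    · rw [← Ideal.Quotient.eq_zero_iff_mem, map_sub, Ideal.Quotient.mk_out, sub_self]
    · exact add_sub_cancel _ _
  exact ⟨Quotient.out, Equiv.ofBijective _ hbij, fun _ => rfl⟩

section LatticeComparison
variable {F : Type*} [Field F] [NumberField F] [IsTotallyComplex F]

lemma latticeTerm_eq_norm_rpow (hF : Module.finrank ℚ F = 2) (φ : F →+* ℂ) (s : ℝ) (v : 𝓞 F) :
    latticeTerm s v = ‖φ v‖ ^ (-(2 * s)) := by
  rw [latticeTerm, zetaTerm, ← norm_embedding_sq hF φ, ← Real.rpow_two,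
    ← Real.rpow_mul (norm_nonneg _), mul_neg]

lemma latticeTerm_three_halves (hF : Module.finrank ℚ F = 2) (φ : F →+* ℂ) (v : 𝓞 F) :
    latticeTerm (3 / 2) v = (‖φ v‖ ^ 3)⁻¹ := by
  rw [latticeTerm_eq_norm_rpow hF φ, show (2 * (3 / 2) : ℝ) = (3 : ℕ) by norm_num,
    Real.rpow_neg (norm_nonneg _), Real.rpow_natCast]

lemma one_le_norm_embedding (hF : Module.finrank ℚ F = 2) (φ : F →+* ℂ) {v : 𝓞 F} (hv : v ≠ 0) :
    1 ≤ ‖φ v‖ := by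
  have hnorm : Ideal.absNorm (Ideal.span {v}) ≠ 0 := by
    rwa [Ne, Ideal.absNorm_eq_zero_iff, Ideal.span_singleton_eq_bot]
  rw [← one_le_sq_iff₀ (norm_nonneg _), norm_embedding_sq hF]
  exact_mod_cast Nat.one_le_iff_ne_zero.2 hnorm

lemma latticeTerm_le (hF : Module.finrank ℚ F = 2) (φ : F →+* ℂ) {s : ℝ} (hs : 0 < s) (v : 𝓞 F) :
    latticeTerm s v ≤ ‖φ v‖ ^ 3 * latticeTerm (3 / 2) v := by
  rcases eq_or_ne v 0 with rfl | hv
  · rw [latticeTerm_zero hs.ne', latticeTerm_zero (by norm_num), mul_zero]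
  · have hφ := one_le_norm_embedding hF φ hv
    rw [latticeTerm_three_halves hF φ, mul_inv_cancel₀ (by positivity),
      latticeTerm_eq_norm_rpow hF φ]
    exact Real.rpow_le_one_of_one_le_of_nonpos hφ (by linarith)

lemma abs_latticeTerm_sub_le (hF : Module.finrank ℚ F = 2) (φ : F →+* ℂ) {s : ℝ} (hs : 1 < s)
    (hs' : s ≤ 2) (u v : 𝓞 F) :
    |latticeTerm s u - latticeTerm s v| ≤ (4 * ‖φ (u - v)‖ + ‖φ (u - v)‖ ^ 3) *
      (latticeTerm (3 / 2) u + latticeTerm (3 / 2) v) := by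
  have hle (w : 𝓞 F) : |latticeTerm s w| ≤ (4 * ‖φ w‖ + ‖φ w‖ ^ 3) * latticeTerm (3 / 2) w := by
    rw [abs_of_nonneg (latticeTerm_nonneg _ _), add_mul]
    have := latticeTerm_nonneg (3 / 2) w
    exact (latticeTerm_le hF φ (by linarith) w).trans (le_add_of_nonneg_left (by positivity))
  have hs₀ : s ≠ 0 := by linarith
  have hs₁ : (3 / 2 : ℝ) ≠ 0 := by norm_num
  rcases eq_or_ne u 0 with rfl | hu
  · simpa [latticeTerm_zero hs₀, latticeTerm_zero hs₁] using hle v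
  rcases eq_or_ne v 0 with rfl | hv
  · simpa [latticeTerm_zero hs₀, latticeTerm_zero hs₁] using hle u
  calc |latticeTerm s u - latticeTerm s v|
      ≤ 4 * |‖φ u‖ - ‖φ v‖| * (latticeTerm (3 / 2) u + latticeTerm (3 / 2) v) := by
        simp only [latticeTerm_three_halves hF φ, latticeTerm_eq_norm_rpow hF φ s]
        exact abs_rpow_neg_sub_rpow_neg_le (by linarith) (by linarith)
          (one_le_norm_embedding hF φ hu) (one_le_norm_embedding hF φ hv)
    _ ≤ (4 * ‖φ (u - v)‖ + ‖φ (u - v)‖ ^ 3) *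
          (latticeTerm (3 / 2) u + latticeTerm (3 / 2) v) := by
        refine mul_le_mul_of_nonneg_right ?_
          (add_nonneg (latticeTerm_nonneg _ _) (latticeTerm_nonneg _ _))
        have hsub : |‖φ u‖ - ‖φ v‖| ≤ ‖φ (u - v)‖ := by
          rw [map_sub]; exact abs_norm_sub_norm_le _ _
        exact le_add_of_le_of_nonneg (by gcongr) (by positivity)

lemma summable_latticeTerm (hF : Module.finrank ℚ F = 2) {s : ℝ} (hs : 1 < s) :
    Summable (latticeTerm s : 𝓞 F → ℝ) :=
  have := finite_units hF
  (hasSum_latticeTerm hs).summable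

lemma abs_tsum_coset_sub_le (hF : Module.finrank ℚ F = 2) (φ : F →+* ℂ) (I : Ideal (𝓞 F)) {s : ℝ}
    (hs : 1 < s) (hs' : s ≤ 2) (r : 𝓞 F) :
    |∑' a : I, latticeTerm s (r + (a : 𝓞 F)) - ∑' a : I, latticeTerm s (a : 𝓞 F)| ≤
      (4 * ‖φ r‖ + ‖φ r‖ ^ 3) * (2 * ∑' v : 𝓞 F, latticeTerm (3 / 2) v) := by
  have hinj : Function.Injective fun a : I => r + (a : 𝓞 F) :=
    fun a b h => Subtype.ext (add_left_cancel h)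
  have hsum {t : ℝ} (ht : 1 < t) : Summable fun a : I => latticeTerm t (r + (a : 𝓞 F)) :=
    (summable_latticeTerm hF ht).comp_injective hinj
  have hsum₀ {t : ℝ} (ht : 1 < t) : Summable fun a : I => latticeTerm t (a : 𝓞 F) :=
    (summable_latticeTerm hF ht).comp_injective Subtype.val_injective
  have ht : (1 : ℝ) < 3 / 2 := by norm_num
  have hterm (a : I) : ‖latticeTerm s (r + (a : 𝓞 F)) - latticeTerm s (a : 𝓞 F)‖ ≤
      (4 * ‖φ r‖ + ‖φ r‖ ^ 3) *
        (latticeTerm (3 / 2) (r + (a : 𝓞 F)) + latticeTerm (3 / 2) (a : 𝓞 F)) := by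
    simpa using abs_latticeTerm_sub_le hF φ hs hs' (r + (a : 𝓞 F)) a
  have hbound := tsum_of_norm_bounded
    (((hsum ht).add (hsum₀ ht)).mul_left (4 * ‖φ r‖ + ‖φ r‖ ^ 3)).hasSum hterm
  rw [tsum_mul_left, (hsum ht).tsum_add (hsum₀ ht)] at hbound
  rw [← (hsum hs).tsum_sub (hsum₀ hs), two_mul]
  refine hbound.trans (mul_le_mul_of_nonneg_left (add_le_add ?_ ?_) (by positivity))
  · exact tsum_comp_le_tsum_of_inj (summable_latticeTerm hF ht) (latticeTerm_nonneg _) hinj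
  · exact tsum_comp_le_tsum_of_inj (summable_latticeTerm hF ht) (latticeTerm_nonneg _)
      Subtype.val_injective

lemma exists_abs_tsum_latticeTerm_sub_le (hF : Module.finrank ℚ F = 2) {I : Ideal (𝓞 F)}
    (hI : I ≠ ⊥) : ∃ B : ℝ, ∀ s : ℝ, 1 < s → s ≤ 2 →
      |∑' v : 𝓞 F, latticeTerm s v - Ideal.absNorm I * ∑' v : I, latticeTerm s (v : 𝓞 F)| ≤ B := by
  have := Ideal.finiteQuotientOfFreeOfNeBot I hI
  have := Fintype.ofFinite (𝓞 F ⧸ I)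
  obtain ⟨φ⟩ : Nonempty (F →+* ℂ) := inferInstance
  obtain ⟨r, e, he⟩ := exists_equiv_quotient_prod I
  refine ⟨∑ q, (4 * ‖φ (r q)‖ + ‖φ (r q)‖ ^ 3) * (2 * ∑' v : 𝓞 F, latticeTerm (3 / 2) v),
    fun s hs hs' => ?_⟩
  have hsplit : ∑' v : 𝓞 F, latticeTerm s v = ∑ q, ∑' a : I, latticeTerm s (r q + (a : 𝓞 F)) := by
    have h : Summable fun x => latticeTerm s (e x) :=
      (e.summable_iff (f := latticeTerm s)).2 (summable_latticeTerm hF hs)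
    rw [← e.tsum_eq (latticeTerm s), h.tsum_prod, tsum_fintype]
    simp only [he]
  have hcard : (Ideal.absNorm I : ℝ) = ∑ _ : 𝓞 F ⧸ I, (1 : ℝ) := by
    rw [Finset.sum_const, nsmul_eq_mul, mul_one, Finset.card_univ, Ideal.absNorm_apply,
      Submodule.cardQuot_apply, Nat.card_eq_fintype_card]
  rw [hsplit, hcard, Finset.sum_mul, ← Finset.sum_sub_distrib]
  have hcoset (q : 𝓞 F ⧸ I) : |∑' a : I, latticeTerm s (r q + (a : 𝓞 F)) -
      1 * ∑' a : I, latticeTerm s (a : 𝓞 F)| ≤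
        (4 * ‖φ (r q)‖ + ‖φ (r q)‖ ^ 3) * (2 * ∑' v : 𝓞 F, latticeTerm (3 / 2) v) := by
    rw [one_mul]
    exact abs_tsum_coset_sub_le hF φ I hs hs' (r q)
  exact (Finset.abs_sum_le_sum_abs _ _).trans (Finset.sum_le_sum fun q _ => hcoset q)

lemma exists_eventually_abs_classZeta_sub_le (hF : Module.finrank ℚ F = 2)
    (c : ClassGroup (𝓞 F)) :
    ∃ B : ℝ, ∀ᶠ s in 𝓝[>] (1 : ℝ), |classZeta c s - classZeta (1 : ClassGroup (𝓞 F)) s| ≤ B := by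
  have := finite_units hF
  obtain ⟨I, hI, hIc⟩ := exists_idealClass_eq c⁻¹
  obtain ⟨B, hB⟩ := exists_abs_tsum_latticeTerm_sub_le hF hI
  obtain ⟨Z, hZ⟩ : ∃ Z, ∀ᶠ s in 𝓝[>] (1 : ℝ), (s - 1) * realZeta F s ≤ Z :=
    (tendsto_sub_one_mul_realZeta F).isBoundedUnder_le
  let N : ℝ := Ideal.absNorm I
  have hN : 1 ≤ N :=
    Nat.one_le_cast.2 (Nat.one_le_iff_ne_zero.2 (Ideal.absNorm_eq_zero_iff.not.2 hI))
  refine ⟨Real.log N * Z + B, ?_⟩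
  filter_upwards [hZ, self_mem_nhdsWithin, nhdsWithin_le_nhds (Iic_mem_nhds one_lt_two)]
    with s hsZ (hs : 1 < s) hs'
  have hclass : |classZeta (1 : ClassGroup (𝓞 F)) s - N ^ (1 - s) * classZeta c s| ≤ B := by
    have hunits : (1 : ℝ) ≤ Nat.card (𝓞 F)ˣ := by exact_mod_cast Nat.card_pos
    have h := hB s hs hs'
    rw [(hasSum_latticeTerm hs).tsum_eq, (hasSum_latticeTerm_mem hI hs).tsum_eq, hIc, inv_inv,
      mul_left_comm, ← mul_sub, abs_mul, Nat.abs_cast, zetaTerm, ← mul_assoc,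
      ← Real.rpow_one_add' (by positivity) (by linarith), ← sub_eq_add_neg] at h
    exact (le_mul_of_one_le_left (abs_nonneg _) hunits).trans h
  have hpow : 1 - N ^ (1 - s) ≤ (s - 1) * Real.log N := by
    rw [Real.rpow_def_of_pos (by linarith)]
    linarith [Real.add_one_le_exp (Real.log N * (1 - s))]
  have hpow₀ : 0 ≤ 1 - N ^ (1 - s) :=
    sub_nonneg.2 (Real.rpow_le_one_of_one_le_of_nonpos hN (by linarith))
  calc |classZeta c s - classZeta 1 s|
      = |(1 - N ^ (1 - s)) * classZeta c s - (classZeta 1 s - N ^ (1 - s) * classZeta c s)| := by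
        ring_nf
    _ ≤ |(1 - N ^ (1 - s)) * classZeta c s| + |classZeta 1 s - N ^ (1 - s) * classZeta c s| :=
        abs_sub _ _
    _ = (1 - N ^ (1 - s)) * classZeta c s + |classZeta 1 s - N ^ (1 - s) * classZeta c s| := by
        rw [abs_of_nonneg (mul_nonneg hpow₀ (classZeta_nonneg c s))]
    _ ≤ (s - 1) * Real.log N * realZeta F s + B :=
        add_le_add (mul_le_mul hpow (classZeta_le_realZeta c hs) (classZeta_nonneg c s)
          (hpow₀.trans hpow)) hclass
    _ = Real.log N * ((s - 1) * realZeta F s) + B := by ring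
    _ ≤ Real.log N * Z + B := by gcongr

end LatticeComparison

section LFunction
variable {F : Type*} [Field F] [NumberField F]

lemma norm_character {G : Type*} [Group G] [Finite G] (χ : G →* ℂˣ) (g : G) : ‖(χ g : ℂ)‖ = 1 := by
  refine Complex.norm_eq_one_of_pow_eq_one (n := Nat.card G) ?_ Nat.card_pos.ne'
  rw [← Units.val_pow_eq_pow_val, ← map_pow, pow_card_eq_one', map_one, Units.val_one]

/-- The terms of the `L`-function of a class group character at a real point. -/
noncomputable def lTerm (χ : ClassGroup (𝓞 F) →* ℂˣ) (s : ℝ) (I : Ideal (𝓞 F)) : ℂ :=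
  χ (idealClass I) * zetaTerm s I

lemma norm_lTerm (χ : ClassGroup (𝓞 F) →* ℂˣ) (s : ℝ) (I : Ideal (𝓞 F)) :
    ‖lTerm χ s I‖ = zetaTerm s I := by
  rw [lTerm, norm_mul, norm_character, one_mul, Complex.norm_real,
    Real.norm_of_nonneg (zetaTerm_nonneg s I)]

lemma summable_lTerm (χ : ClassGroup (𝓞 F) →* ℂˣ) {s : ℝ} (hs : 1 < s) :
    Summable (lTerm χ s) :=
  .of_norm ((summable_zetaTerm hs).congr fun I => (norm_lTerm χ s I).symm)

/-- The `L`-function of a class group character on the real half-line `s > 1`. -/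
noncomputable def lSeries (χ : ClassGroup (𝓞 F) →* ℂˣ) (s : ℝ) : ℂ :=
  ∑' I : Ideal (𝓞 F), lTerm χ s I

lemma lSeries_eq_sum_classZeta (χ : ClassGroup (𝓞 F) →* ℂˣ) {s : ℝ} (hs : 1 < s) :
    lSeries χ s = ∑ c, (χ c : ℂ) * classZeta c s := by
  let e := Equiv.sigmaFiberEquiv (idealClass : Ideal (𝓞 F) → ClassGroup (𝓞 F))
  have h : Summable fun x => lTerm χ s (e x) :=
    (e.summable_iff (f := lTerm χ s)).2 (summable_lTerm χ hs)
  have hfiber (c : ClassGroup (𝓞 F)) (I : {I : Ideal (𝓞 F) // idealClass I = c}) :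
      lTerm χ s (e ⟨c, I⟩) = χ c * zetaTerm s I.1 := by
    rw [lTerm, Equiv.sigmaFiberEquiv_apply, I.2]
  rw [lSeries, ← e.tsum_eq, h.tsum_sigma, tsum_fintype]
  refine Finset.sum_congr rfl fun c _ => ?_
  rw [classZeta, Complex.ofReal_tsum, ← tsum_mul_left, tsum_congr (hfiber c)]

lemma sum_character_eq_zero {G : Type*} [Group G] [Fintype G] {χ : G →* ℂˣ} (hχ : χ ≠ 1) :
    ∑ g, (χ g : ℂ) = 0 := by
  refine sum_hom_units_eq_zero ((Units.coeHom ℂ).comp χ) fun h => hχ ?_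
  exact MonoidHom.ext fun c => Units.ext (DFunLike.congr_fun h c)

lemma exists_eventually_norm_lSeries_le [IsTotallyComplex F] (hF : Module.finrank ℚ F = 2)
    {χ : ClassGroup (𝓞 F) →* ℂˣ} (hχ : χ ≠ 1) :
    ∃ B : ℝ, ∀ᶠ s in 𝓝[>] (1 : ℝ), ‖lSeries χ s‖ ≤ B := by
  choose B hB using exists_eventually_abs_classZeta_sub_le (F := F) hF
  refine ⟨∑ c, B c, ?_⟩
  filter_upwards [eventually_all.2 hB, self_mem_nhdsWithin] with s hs (hs₁ : 1 < s)
  let z : ℝ := classZeta (1 : ClassGroup (𝓞 F)) s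
  have hsub : lSeries χ s = ∑ c, (χ c : ℂ) * ((classZeta c s - z : ℝ) : ℂ) := by
    rw [lSeries_eq_sum_classZeta χ hs₁, ← sub_eq_zero, ← Finset.sum_sub_distrib]
    calc ∑ c, ((χ c : ℂ) * classZeta c s - (χ c : ℂ) * ((classZeta c s - z : ℝ) : ℂ))
        = (∑ c, (χ c : ℂ)) * z := by
          rw [Finset.sum_mul]
          exact Finset.sum_congr rfl fun c _ => by push_cast; ring
      _ = 0 := by rw [sum_character_eq_zero hχ, zero_mul]
  rw [hsub]
  have hterm (c : ClassGroup (𝓞 F)) : ‖(χ c : ℂ) * ((classZeta c s - z : ℝ) : ℂ)‖ ≤ B c := by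
    rw [norm_mul, norm_character, one_mul, Complex.norm_real]
    exact hs c
  exact norm_sum_le_of_le _ fun c _ => hterm c

end LFunction

section EulerProduct
variable {R : Type*} [CommRing R]

/-- The ideals that survive sieving by the primes in `S`. -/
def sievedIdeals (S : Finset {P : Ideal R // Prime P}) : Set (Ideal R) :=
  {J | ∀ P ∈ S, ¬ P.1 ∣ J}

lemma one_mem_sievedIdeals (S : Finset {P : Ideal R // Prime P}) : 1 ∈ sievedIdeals S :=
  fun P _ h => P.2.not_isUnit (isUnit_of_dvd_one h)

lemma mem_sievedIdeals_insert_iff [DecidableEq {P : Ideal R // Prime P}]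
    {S : Finset {P : Ideal R // Prime P}} {Q : {P : Ideal R // Prime P}} {J : Ideal R} :
    J ∈ sievedIdeals (insert Q S) ↔ ¬ Q.1 ∣ J ∧ J ∈ sievedIdeals S :=
  Finset.forall_mem_insert ..

variable [IsDedekindDomain R]

lemma mul_mem_sievedIdeals_iff {S : Finset {P : Ideal R // Prime P}} {Q : {P : Ideal R // Prime P}}
    (hQ : Q ∉ S) {J : Ideal R} : Q.1 * J ∈ sievedIdeals S ↔ J ∈ sievedIdeals S := by
  refine forall₂_congr fun P hP => not_congr ?_
  rw [P.2.dvd_mul, or_iff_right]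
  intro hPQ
  have hPQ : P = Q := Subtype.ext (associated_iff_eq.1 ((P.2.dvd_prime_iff_associated Q.2).1 hPQ))
  exact hQ (hPQ ▸ hP)

lemma exists_prime_dvd {J : Ideal R} (h₀ : J ≠ ⊥) (h₁ : J ≠ 1) :
    ∃ P : Ideal R, Prime P ∧ P ∣ J := by
  obtain ⟨P, hP, hPJ⟩ := WfDvdMonoid.exists_irreducible_factor
    (by rwa [Ideal.isUnit_iff, ← Ideal.one_eq_top]) h₀
  exact ⟨P, hP.prime, hPJ⟩

variable {𝕜 : Type*} [NormedField 𝕜] {f : Ideal R → 𝕜}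

lemma tendsto_indicator_sievedIdeals (hbot : f ⊥ = 0) (J : Ideal R) :
    Tendsto (fun S => (sievedIdeals S).indicator f J) atTop
      (𝓝 (({1} : Set (Ideal R)).indicator f J)) := by
  refine tendsto_const_nhds.congr' ?_
  rcases eq_or_ne J 1 with rfl | h₁
  · filter_upwards with S
    rw [Set.indicator_of_mem (Set.mem_singleton _), Set.indicator_of_mem (one_mem_sievedIdeals S)]
  rw [Set.indicator_of_notMem (by simpa using h₁)]
  rcases eq_or_ne J ⊥ with rfl | h₀
  · filter_upwards with S
    exact ((Set.indicator_apply_eq_zero).2 fun _ => hbot).symm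
  · obtain ⟨P, hP, hPJ⟩ := exists_prime_dvd h₀ h₁
    filter_upwards [eventually_ge_atTop {⟨P, hP⟩}] with S hS
    have hJ : J ∉ sievedIdeals S := fun h => h ⟨P, hP⟩ (hS (Finset.mem_singleton_self _)) hPJ
    exact (Set.indicator_of_notMem hJ f).symm

variable [CompleteSpace 𝕜]

lemma tsum_indicator_sievedIdeals_insert [DecidableEq {P : Ideal R // Prime P}]
    (hmul : ∀ I J, f (I * J) = f I * f J) (hf : Summable f) {S : Finset {P : Ideal R // Prime P}}
    {Q : {P : Ideal R // Prime P}} (hQ : Q ∉ S) :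
    ∑' J, (sievedIdeals (insert Q S)).indicator f J =
      (1 - f Q.1) * ∑' J, (sievedIdeals S).indicator f J := by
  let g := (sievedIdeals S).indicator f
  have hg : Summable g := hf.indicator _
  have hsplit : (sievedIdeals (insert Q S)).indicator f = g - {J | Q.1 ∣ J}.indicator g := by
    funext J
    by_cases hQJ : Q.1 ∣ J <;> by_cases hJ : J ∈ sievedIdeals S <;>
      simp [g, Set.indicator, mem_sievedIdeals_insert_iff, hQJ, hJ]
  have hmultiples : ∑' J, {J | Q.1 ∣ J}.indicator g J = f Q.1 * ∑' J, g J := by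
    rw [← (mul_right_injective₀ Q.2.ne_zero).tsum_eq, ← tsum_mul_left]
    · refine tsum_congr fun J => ?_
      by_cases hJ : J ∈ sievedIdeals S <;>
        simp [g, Set.indicator, mul_mem_sievedIdeals_iff hQ, hJ, hmul]
    · intro J hJ
      obtain ⟨I, rfl⟩ : Q.1 ∣ J :=
        Set.mem_of_indicator_ne_zero (s := {J | Q.1 ∣ J}) hJ
      exact ⟨I, rfl⟩
  calc ∑' J, (sievedIdeals (insert Q S)).indicator f J
      = ∑' J, g J - ∑' J, {J | Q.1 ∣ J}.indicator g J := by
        rw [hsplit, ← hg.tsum_sub (hg.indicator _)]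
        rfl
    _ = (1 - f Q.1) * ∑' J, g J := by rw [hmultiples]; ring

lemma prod_one_sub_mul_tsum (hmul : ∀ I J, f (I * J) = f I * f J) (hf : Summable f)
    (S : Finset {P : Ideal R // Prime P}) :
    (∏ P ∈ S, (1 - f P.1)) * ∑' J, f J = ∑' J, (sievedIdeals S).indicator f J := by
  classical
  induction S using Finset.induction_on with
  | empty => simp [sievedIdeals]
  | insert Q S hQ ih =>
    rw [Finset.prod_insert hQ, mul_assoc, ih, tsum_indicator_sievedIdeals_insert hmul hf hQ]

lemma tendsto_prod_one_sub_mul_tsum (hmul : ∀ I J, f (I * J) = f I * f J) (hbot : f ⊥ = 0)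
    (hf : Summable fun I => ‖f I‖) :
    Tendsto (fun S : Finset {P : Ideal R // Prime P} => (∏ P ∈ S, (1 - f P.1)) * ∑' J, f J) atTop
      (𝓝 (f 1)) := by
  have hlim : ∑' J, ({1} : Set (Ideal R)).indicator f J = f 1 := by
    rw [tsum_eq_single 1 fun J hJ => Set.indicator_of_notMem (by simpa using hJ) f]
    simp
  simp only [prod_one_sub_mul_tsum hmul hf.of_norm, ← hlim]
  exact tendsto_tsum_of_dominated_convergence hf (tendsto_indicator_sievedIdeals hbot)
    (.of_forall fun S J => norm_indicator_le_norm_self f J)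

end EulerProduct

section NonVanishing
variable {F : Type*} [Field F] [NumberField F]

lemma lTerm_mul (χ : ClassGroup (𝓞 F) →* ℂˣ) {s : ℝ} (hs : s ≠ 0) (I J : Ideal (𝓞 F)) :
    lTerm χ s (I * J) = lTerm χ s I * lTerm χ s J := by
  rcases eq_or_ne I ⊥ with rfl | hI
  · rw [Ideal.bot_mul, lTerm, zetaTerm_bot hs, Complex.ofReal_zero, mul_zero, zero_mul]
  rcases eq_or_ne J ⊥ with rfl | hJ
  · rw [Ideal.mul_bot, lTerm, zetaTerm_bot hs, Complex.ofReal_zero, mul_zero, mul_zero]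
  · rw [lTerm, idealClass_mul hI hJ, map_mul, zetaTerm_mul, lTerm, lTerm]
    push_cast
    ring

lemma tendsto_prod_one_sub_lTerm_mul_lSeries (χ : ClassGroup (𝓞 F) →* ℂˣ) {s : ℝ} (hs : 1 < s) :
    Tendsto (fun S : Finset {P : Ideal (𝓞 F) // Prime P} =>
      (∏ P ∈ S, (1 - lTerm χ s P.1)) * lSeries χ s) atTop (𝓝 1) := by
  have hs₀ : s ≠ 0 := by linarith
  have hbot : lTerm χ s ⊥ = 0 := by rw [lTerm, zetaTerm_bot hs₀, Complex.ofReal_zero, mul_zero]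
  have hone : lTerm χ s 1 = 1 := by
    rw [lTerm, idealClass_one, map_one, zetaTerm_one, Units.val_one, Complex.ofReal_one, mul_one]
  have h := tendsto_prod_one_sub_mul_tsum (lTerm_mul χ hs₀) hbot (summable_lTerm χ hs).norm
  rwa [hone] at h

lemma tendsto_prod_one_sub_zetaTerm_mul_realZeta {s : ℝ} (hs : 1 < s) :
    Tendsto (fun S : Finset {P : Ideal (𝓞 F) // Prime P} =>
      (∏ P ∈ S, (1 - zetaTerm s P.1)) * realZeta F s) atTop (𝓝 1) := by
  have h := tendsto_prod_one_sub_mul_tsum (zetaTerm_mul (F := F) s) (zetaTerm_bot (by linarith))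
    (summable_zetaTerm hs).norm
  rwa [zetaTerm_one] at h

lemma exists_norm_one_sub_character_le {G : Type*} [Finite G] [Group G] {χ : G →* ℂˣ}
    {n : ℕ} (hn : Odd n) (hχ : ∀ g, χ g ^ n = 1) :
    ∃ δ > 0, ∀ g, ‖1 - (χ g : ℂ)‖ ≤ 2 - δ := by
  have := Fintype.ofFinite G
  obtain ⟨g₀, hg₀⟩ := Finite.exists_max fun g => ‖1 - (χ g : ℂ)‖
  refine ⟨2 - ‖1 - (χ g₀ : ℂ)‖, sub_pos.2 (norm_one_sub_lt_two hn ?_), fun g => ?_⟩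
  · rw [← Units.val_pow_eq_pow_val, hχ, Units.val_one]
  · rw [sub_sub_cancel]
    exact hg₀ g

/-- At a prime where one of the two Euler factors is that of the zeta function, the other one is
not small enough to compensate for it. -/
lemma norm_mul_norm_pow_le {χ₁ χ₂ : ClassGroup (𝓞 F) →* ℂˣ} {δ : ℝ} {k : ℕ} (hδ : 0 ≤ δ)
    (hδ' : δ ≤ 1) (hk : 2 ≤ k * δ) (h₁ : ∀ c, ‖1 - (χ₁ c : ℂ)‖ ≤ 2 - δ)
    (h₂ : ∀ c, ‖1 - (χ₂ c : ℂ)‖ ≤ 2 - δ) {s : ℝ} (hs : 1 ≤ s) {P : Ideal (𝓞 F)} (hP : Prime P)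
    (h : χ₁ (idealClass P) = 1 ∨ χ₂ (idealClass P) = 1) :
    (‖1 - lTerm χ₁ s P‖ * ‖1 - lTerm χ₂ s P‖) ^ k ≤ 1 - zetaTerm s P := by
  wlog hχ : χ₁ (idealClass P) = 1 generalizing χ₁ χ₂
  · rw [mul_comm]
    exact this h₂ h₁ h.symm (h.resolve_left hχ)
  have hx := zetaTerm_nonneg s P
  have hx' := zetaTerm_prime_le hs hP
  have hfactor₁ : ‖1 - lTerm χ₁ s P‖ = 1 - zetaTerm s P := by
    rw [lTerm, hχ, Units.val_one, one_mul, ← Complex.ofReal_one, ← Complex.ofReal_sub,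
      Complex.norm_real, Real.norm_of_nonneg (by linarith)]
  have hfactor₂ : ‖1 - lTerm χ₂ s P‖ ≤ 1 + (1 - δ) * zetaTerm s P :=
    norm_one_sub_mul_ofReal_le hx (by linarith) (h₂ _)
  calc (‖1 - lTerm χ₁ s P‖ * ‖1 - lTerm χ₂ s P‖) ^ k ≤ (1 - δ * zetaTerm s P) ^ k := by
        refine pow_le_pow_left₀ (by positivity) ?_ k
        rw [hfactor₁]
        nlinarith [mul_nonneg (mul_nonneg (sub_nonneg.2 hδ') hx) hx]
    _ ≤ 1 - zetaTerm s P := one_sub_mul_pow_le hx hx' hδ hδ' hk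

lemma realZeta_le_pow {χ₁ χ₂ : ClassGroup (𝓞 F) →* ℂˣ} {k : ℕ} {s : ℝ} (hs : 1 < s)
    (h : ∀ P : Ideal (𝓞 F), Prime P →
      (‖1 - lTerm χ₁ s P‖ * ‖1 - lTerm χ₂ s P‖) ^ k ≤ 1 - zetaTerm s P) :
    realZeta F s ≤ (‖lSeries χ₁ s‖ * ‖lSeries χ₂ s‖) ^ k := by
  have hlim := ((tendsto_prod_one_sub_lTerm_mul_lSeries χ₁ hs).norm.mul
    (tendsto_prod_one_sub_lTerm_mul_lSeries χ₂ hs).norm).pow k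
  have hleft := hlim.mul_const (realZeta F s)
  have hright := (tendsto_prod_one_sub_zetaTerm_mul_realZeta (F := F) hs).mul_const
    ((‖lSeries χ₁ s‖ * ‖lSeries χ₂ s‖) ^ k)
  rw [norm_one, mul_one, one_pow, one_mul] at hleft
  rw [one_mul] at hright
  refine le_of_tendsto_of_tendsto' hleft hright fun S => ?_
  have hprod : ((∏ P ∈ S, ‖1 - lTerm χ₁ s P.1‖) * ∏ P ∈ S, ‖1 - lTerm χ₂ s P.1‖) ^ k ≤
      ∏ P ∈ S, (1 - zetaTerm s P.1) := by
    rw [← Finset.prod_mul_distrib, ← Finset.prod_pow]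
    exact Finset.prod_le_prod (fun P _ => by positivity) fun P _ => h P.1 P.2
  have hζ : 0 ≤ realZeta F s := tsum_nonneg fun I => zetaTerm_nonneg s I
  calc _ = ((∏ P ∈ S, ‖1 - lTerm χ₁ s P.1‖) * ∏ P ∈ S, ‖1 - lTerm χ₂ s P.1‖) ^ k *
        (realZeta F s * (‖lSeries χ₁ s‖ * ‖lSeries χ₂ s‖) ^ k) := by
        rw [norm_mul, norm_mul, norm_prod, norm_prod]
        ring
    _ ≤ (∏ P ∈ S, (1 - zetaTerm s P.1)) *
        (realZeta F s * (‖lSeries χ₁ s‖ * ‖lSeries χ₂ s‖) ^ k) := by gcongr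
    _ = _ := by ring

theorem exists_prime_character_ne_one [IsTotallyComplex F] (hF : Module.finrank ℚ F = 2)
    {χ₁ χ₂ : ClassGroup (𝓞 F) →* ℂˣ} {n : ℕ} (hn : Odd n) (h₁ : χ₁ ^ n = 1) (h₂ : χ₂ ^ n = 1)
    (hχ₁ : χ₁ ≠ 1) (hχ₂ : χ₂ ≠ 1) :
    ∃ P : Ideal (𝓞 F), Prime P ∧ χ₁ (idealClass P) ≠ 1 ∧ χ₂ (idealClass P) ≠ 1 := by
  by_contra! hcontra
  obtain ⟨δ₁, hδ₁, hle₁⟩ := exists_norm_one_sub_character_le hn (DFunLike.congr_fun h₁)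
  obtain ⟨δ₂, hδ₂, hle₂⟩ := exists_norm_one_sub_character_le hn (DFunLike.congr_fun h₂)
  obtain ⟨δ, hδ, hδ', hδ₁', hδ₂'⟩ : ∃ δ > 0, δ ≤ 1 ∧ δ ≤ δ₁ ∧ δ ≤ δ₂ :=
    ⟨min 1 (min δ₁ δ₂), by positivity, by simp, by simp, by simp⟩
  obtain ⟨k, hk⟩ := exists_nat_ge (2 / δ)
  rw [div_le_iff₀ hδ] at hk
  obtain ⟨B₁, hB₁⟩ := exists_eventually_norm_lSeries_le hF hχ₁
  obtain ⟨B₂, hB₂⟩ := exists_eventually_norm_lSeries_le hF hχ₂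
  obtain ⟨s, hζ, hs₁, hs₂, hs⟩ := ((tendsto_realZeta_atTop F).eventually_gt_atTop
    ((B₁ * B₂) ^ k)).and (hB₁.and (hB₂.and self_mem_nhdsWithin)) |>.exists
  have hs : 1 < s := hs
  have hle := realZeta_le_pow hs fun P hP => norm_mul_norm_pow_le hδ.le hδ' hk
    (fun c => (hle₁ c).trans (by linarith)) (fun c => (hle₂ c).trans (by linarith)) hs.le hP
    (or_iff_not_imp_left.2 (hcontra P hP))
  have hpow : (‖lSeries χ₁ s‖ * ‖lSeries χ₂ s‖) ^ k ≤ (B₁ * B₂) ^ k := by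
    have := (norm_nonneg _).trans hs₁
    gcongr
  exact absurd (hle.trans hpow) (not_le.2 hζ)

end NonVanishing

section NormRelations
variable {F : Type*} [Field F] [NumberField F]

/-- The integral ideals of `F` of absolute norm `m`. -/
noncomputable def idealsOfNorm (F : Type*) [Field F] [NumberField F] (m : ℕ) :
    Finset (Ideal (𝓞 F)) :=
  (Ideal.finite_setOfPred_absNorm_eq (S := 𝓞 F) m).toFinset

lemma mem_idealsOfNorm {m : ℕ} {J : Ideal (𝓞 F)} : J ∈ idealsOfNorm F m ↔ Ideal.absNorm J = m := by
  simp [idealsOfNorm]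

lemma ne_bot_of_absNorm_eq {J : Ideal (𝓞 F)} {m : ℕ} (hm : m ≠ 0) (h : Ideal.absNorm J = m) :
    J ≠ ⊥ := fun h0 => hm (by rw [← h, h0, Ideal.absNorm_bot])

/-- The functions on the class group whose sum over the ideals of each positive norm vanishes,
that is, the linear relations between the partial zeta functions of the ideal classes. -/
def normRelations (F : Type*) [Field F] [NumberField F] :
    Submodule ℂ (ClassGroup (𝓞 F) → ℂ) where
  carrier := {f | ∀ m ≠ 0, ∑ J ∈ idealsOfNorm F m, f (idealClass J) = 0}
  add_mem' hf hg m hm := by simp [Finset.sum_add_distrib, hf m hm, hg m hm]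
  zero_mem' := by simp
  smul_mem' a f hf m hm := by simp [← Finset.mul_sum, hf m hm]

lemma apply_one_of_mem_normRelations {f : ClassGroup (𝓞 F) → ℂ} (hf : f ∈ normRelations F) :
    f 1 = 0 := by
  have h : idealsOfNorm F 1 = {1} := by
    ext J
    rw [mem_idealsOfNorm, Ideal.absNorm_eq_one_iff, Finset.mem_singleton, Ideal.one_eq_top]
  simpa only [h, Finset.sum_singleton, idealClass_one] using hf 1 one_ne_zero

lemma sum_idealClass_mul {P : Ideal (𝓞 F)} (hP : P ≠ ⊥) {m : ℕ} (hm : m ≠ 0)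
    (f : ClassGroup (𝓞 F) → ℂ) [DecidablePred (P ∣ ·)] :
    ∑ J ∈ idealsOfNorm F m, f (idealClass J * idealClass P) =
      ∑ J ∈ idealsOfNorm F (m * Ideal.absNorm P) with P ∣ J, f (idealClass J) := by
  have hN : Ideal.absNorm P ≠ 0 := by rwa [Ne, Ideal.absNorm_eq_zero_iff]
  refine Finset.sum_bij (fun J _ => J * P) (fun J hJ => ?_)
    (fun J _ J' _ h => mul_right_cancel₀ hP h) (fun K hK => ?_) fun J hJ => ?_
  · rw [Finset.mem_filter, mem_idealsOfNorm, map_mul, mem_idealsOfNorm.1 hJ]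
    exact ⟨rfl, dvd_mul_left _ _⟩
  · obtain ⟨hK, J, rfl⟩ := Finset.mem_filter.1 hK
    rw [mem_idealsOfNorm, map_mul, mul_comm] at hK
    exact ⟨J, mem_idealsOfNorm.2 (mul_right_cancel₀ hN hK), mul_comm _ _⟩
  · rw [idealClass_mul (ne_bot_of_absNorm_eq hm (mem_idealsOfNorm.1 hJ)) hP]

lemma dvd_or_dvd_of_dvd_absNorm {P Q : Ideal (𝓞 F)} {p : ℕ} (hp : p.Prime) (hP : Prime P)
    (hQ : Prime Q) (hPQ : P * Q = Ideal.span {(p : 𝓞 F)}) {J : Ideal (𝓞 F)}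
    (hJ : p ∣ Ideal.absNorm J) : P ∣ J ∨ Q ∣ J := by
  obtain ⟨M, hM, hMp, hMJ⟩ := Ideal.exists_isMaximal_dvd_of_dvd_absNorm' hp J hJ
  have hpM : (p : 𝓞 F) ∈ M := by
    have : (p : ℤ) ∈ M.under ℤ := by rw [hMp]; exact Ideal.mem_span_singleton_self _
    simpa [Ideal.mem_comap] using this
  have hle : P * Q ≤ M := by rwa [hPQ, Ideal.span_singleton_le_iff_mem]
  refine ((hM.isPrime.mul_le).1 hle).imp (fun h => ?_) fun h => ?_
  · rwa [((Ideal.isPrime_of_prime hP).isMaximal hP.ne_zero).eq_of_le hM.ne_top h]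
  · rwa [((Ideal.isPrime_of_prime hQ).isMaximal hQ.ne_zero).eq_of_le hM.ne_top h]

lemma translate_add_translate_mem_normRelations {P Q : Ideal (𝓞 F)} {p : ℕ} (hp : p.Prime)
    (hP : Prime P) (hQ : Prime Q) (hPQ : P * Q = Ideal.span {(p : 𝓞 F)})
    (hNP : Ideal.absNorm P = p) (hNQ : Ideal.absNorm Q = p) (hne : P ≠ Q)
    {f : ClassGroup (𝓞 F) → ℂ} (hf : f ∈ normRelations F) :
    (fun c => f (c * idealClass P) + f (c * idealClass Q)) ∈ normRelations F := by
  classical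
  intro m hm
  have hcop : IsCoprime P Q := Ideal.isCoprime_iff_sup_eq.2 <| Ideal.IsMaximal.coprime_of_ne
    ((Ideal.isPrime_of_prime hP).isMaximal hP.ne_zero)
    ((Ideal.isPrime_of_prime hQ).isMaximal hQ.ne_zero) hne
  have hor : {J ∈ idealsOfNorm F (m * p) | P ∣ J ∨ Q ∣ J} = idealsOfNorm F (m * p) :=
    Finset.filter_true_of_mem fun J hJ => dvd_or_dvd_of_dvd_absNorm hp hP hQ hPQ
      (mem_idealsOfNorm.1 hJ ▸ dvd_mul_left _ _)
  have hand : ∀ J ∈ idealsOfNorm F (m * p), P ∣ J ∧ Q ∣ J ↔ P * Q ∣ J := fun J _ =>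
    ⟨fun h => hcop.mul_dvd h.1 h.2, fun h => ⟨dvd_of_mul_right_dvd h, dvd_of_mul_left_dvd h⟩⟩
  rw [Finset.sum_add_distrib, sum_idealClass_mul hP.ne_zero hm, sum_idealClass_mul hQ.ne_zero hm,
    hNP, hNQ, ← Finset.sum_union_inter, ← Finset.filter_or, ← Finset.filter_and, hor,
    hf _ (mul_ne_zero hm hp.ne_zero), zero_add, Finset.filter_congr hand]
  have hNPQ : Ideal.absNorm (P * Q) = p * p := by rw [map_mul, hNP, hNQ]
  by_cases hd : p ∣ m
  · obtain ⟨k, rfl⟩ := hd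
    have hk : k ≠ 0 := right_ne_zero_of_mul hm
    rw [show p * k * p = k * Ideal.absNorm (P * Q) by rw [hNPQ]; ring,
      ← sum_idealClass_mul (mul_ne_zero hP.ne_zero hQ.ne_zero) hk, ← hf k hk]
    simp [hPQ, idealClass_span_singleton]
  · rw [Finset.filter_false_of_mem, Finset.sum_empty]
    rintro K hK ⟨J, rfl⟩
    rw [mem_idealsOfNorm, map_mul, hNPQ] at hK
    exact hd ⟨Ideal.absNorm J, Nat.eq_of_mul_eq_mul_right hp.pos (by rw [← hK]; ring)⟩

lemma translate_mem_normRelations_of_sq {P : Ideal (𝓞 F)} {p : ℕ} (hp : p.Prime) (hP : Prime P)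
    (hPP : P * P = Ideal.span {(p : 𝓞 F)}) (hNP : Ideal.absNorm P = p)
    {f : ClassGroup (𝓞 F) → ℂ} (hf : f ∈ normRelations F) :
    (fun c => f (c * idealClass P)) ∈ normRelations F := by
  classical
  intro m hm
  rw [sum_idealClass_mul hP.ne_zero hm, Finset.filter_true_of_mem, hNP]
  · exact hf _ (mul_ne_zero hm hp.ne_zero)
  · intro J hJ
    exact or_self_iff.1 (dvd_or_dvd_of_dvd_absNorm hp hP hP hPP
      (by rw [mem_idealsOfNorm.1 hJ, hNP]; exact dvd_mul_left _ _))

lemma idealClass_eq_one_or_exists_conjugate (hF : Module.finrank ℚ F = 2) {P : Ideal (𝓞 F)}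
    (hP : Prime P) :
    idealClass P = 1 ∨ ∃ (p : ℕ) (Q : Ideal (𝓞 F)), p.Prime ∧ Prime Q ∧
      P * Q = Ideal.span {(p : 𝓞 F)} ∧ Ideal.absNorm P = p ∧ Ideal.absNorm Q = p ∧
      idealClass Q = (idealClass P)⁻¹ := by
  have := (Ideal.isPrime_of_prime hP).isMaximal hP.ne_zero
  have : Finite (𝓞 F ⧸ P) := Ideal.finiteQuotientOfFreeOfNeBot P hP.ne_zero
  obtain ⟨p, k, hk, hpP, hp, hN⟩ := Ideal.exists_prime_and_absNorm_eq_pow P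
  obtain ⟨Q, hQ⟩ := (Ideal.dvd_span_singleton (I := P)).2 hpP
  have hnorm : p ^ 2 = p ^ k * Ideal.absNorm Q := by
    rw [← hF, ← RingOfIntegers.rank, ← Ideal.absNorm_span_natCast, hQ, map_mul, hN]
  have hQ0 : Q ≠ ⊥ := by
    rintro rfl
    simp [hp.ne_zero] at hnorm
  have hk2 : k ≤ 2 := (Nat.pow_dvd_pow_iff_le_right hp.one_lt).1 ⟨_, hnorm⟩
  interval_cases k
  · have hNQ : Ideal.absNorm Q = p :=
      Nat.eq_of_mul_eq_mul_left hp.pos (by rw [← sq, hnorm, pow_one])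
    have hQp : Q.IsPrime := Ideal.isPrime_of_irreducible_absNorm (by rwa [hNQ])
    refine .inr ⟨p, Q, hp, Ideal.prime_of_isPrime hQ0 hQp, hQ.symm, by simpa using hN, hNQ, ?_⟩
    rw [eq_inv_iff_mul_eq_one, mul_comm, ← idealClass_mul hP.ne_zero hQ0, ← hQ,
      idealClass_span_singleton]
  · have hNQ : Ideal.absNorm Q = 1 :=
      Nat.eq_of_mul_eq_mul_left (pow_pos hp.pos 2) (by rw [← hnorm, mul_one])
    rw [Ideal.absNorm_eq_one_iff, ← Ideal.one_eq_top] at hNQ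
    exact .inl (by rw [← mul_one P, ← hNQ, ← hQ, idealClass_span_singleton])

lemma hecke_mem_normRelations (hF : Module.finrank ℚ F = 2) {P : Ideal (𝓞 F)} (hP : Prime P)
    {f : ClassGroup (𝓞 F) → ℂ} (hf : f ∈ normRelations F) :
    (fun c => f (c * idealClass P) + f (c * (idealClass P)⁻¹)) ∈ normRelations F := by
  rcases idealClass_eq_one_or_exists_conjugate hF hP with
    h | ⟨p, Q, hp, hQ, hPQ, hNP, hNQ, hclass⟩
  · simp only [h, mul_one, inv_one]
    exact (normRelations F).add_mem hf hf
  rw [← hclass]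
  by_cases hne : P = Q
  · subst hne
    have h := translate_mem_normRelations_of_sq hp hP hPQ hNP hf
    exact (normRelations F).add_mem h h
  · exact translate_add_translate_mem_normRelations hp hP hQ hPQ hNP hNQ hne hf

end NormRelations

section LinearIndependence
variable {F : Type*} [Field F] [NumberField F]

/-- If no prime separates `ψ` from both `χ` and `χ⁻¹`, then `ψ` has odd order as well and
`exists_prime_character_ne_one` applies to `ψ * χ⁻¹` and `ψ * χ`. -/
lemma eq_or_eq_inv_of_heckeEigenvalue_eq [IsTotallyComplex F] (hF : Module.finrank ℚ F = 2)
    {χ ψ : ClassGroup (𝓞 F) →* ℂˣ} (hχ : Odd (orderOf χ))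
    (h : ∀ P : Ideal (𝓞 F), Prime P →
      heckeEigenvalue ψ (idealClass P) = heckeEigenvalue χ (idealClass P)) :
    ψ = χ ∨ ψ = χ⁻¹ := by
  simp_rw [heckeEigenvalue_eq_iff] at h
  have hχpow (c : ClassGroup (𝓞 F)) : χ c ^ orderOf χ = 1 := by
    rw [← MonoidHom.pow_apply, pow_orderOf_eq_one, MonoidHom.one_apply]
  have hψpow (c : ClassGroup (𝓞 F)) : ψ c ^ orderOf χ = 1 := by
    rw [← MonoidHom.pow_apply, hom_eq_one_of_forall_prime (χ := ψ ^ orderOf χ), MonoidHom.one_apply]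
    intro P hP
    rcases h P hP with h | h <;> simp [h, hχpow]
  by_contra! hne
  obtain ⟨P, hP, h₁, h₂⟩ := exists_prime_character_ne_one hF (χ₁ := ψ * χ⁻¹) (χ₂ := ψ * χ) hχ
    (MonoidHom.ext fun c => by simp [mul_pow, hχpow, hψpow])
    (MonoidHom.ext fun c => by simp [mul_pow, hχpow, hψpow])
    (fun h => hne.1 (MonoidHom.ext fun c => mul_inv_eq_one.1 (DFunLike.congr_fun h c)))
    fun h => hne.2 (MonoidHom.ext fun c => mul_eq_one_iff_eq_inv.1 (DFunLike.congr_fun h c))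
  rcases h P hP with h | h
  · exact h₁ (by simp [h])
  · exact h₂ (by simp [h])

lemma fourierCoeff_add_fourierCoeff_inv_eq_zero [IsTotallyComplex F]
    (hF : Module.finrank ℚ F = 2) {f : ClassGroup (𝓞 F) → ℂ} (hf : f ∈ normRelations F)
    {χ : ClassGroup (𝓞 F) →* ℂˣ} (hχ : Odd (orderOf χ)) :
    fourierCoeff f χ + fourierCoeff f χ⁻¹ = 0 := by
  classical
  have := Fintype.ofFinite (ClassGroup (𝓞 F) →* ℂˣ)
  have hsum := sum_fourierCoeff_eigenspace_eq_zero (T := idealClass '' {P : Ideal (𝓞 F) | Prime P})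
    (Set.forall_mem_image.2 fun P hP _ hg => hecke_mem_normRelations hF hP hg)
    (fun _ => apply_one_of_mem_normRelations) hf χ
  have hfilter : Finset.univ.filter (fun ψ : ClassGroup (𝓞 F) →* ℂˣ =>
      ∀ p ∈ idealClass '' {P : Ideal (𝓞 F) | Prime P}, heckeEigenvalue ψ p = heckeEigenvalue χ p) =
      {χ, χ⁻¹} := by
    ext ψ
    simp only [Finset.mem_filter, Finset.mem_univ, true_and, Finset.mem_insert,
      Finset.mem_singleton, Set.forall_mem_image]
    refine ⟨fun h => eq_or_eq_inv_of_heckeEigenvalue_eq hF hχ fun P hP => h hP, ?_⟩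
    rintro (rfl | rfl) P -
    · rfl
    · exact heckeEigenvalue_eq_iff.2 (.inr rfl)
  rw [hfilter] at hsum
  by_cases hinv : χ = χ⁻¹
  · rw [← hinv, Finset.pair_eq_singleton, Finset.sum_singleton] at hsum
    rw [← hinv, hsum, add_zero]
  · rwa [Finset.sum_pair hinv] at hsum

/-- The exponent works for every character of a finite group: `4 ^ k` kills its `2`-part, and acts
on elements of order dividing `6` as the fourth power. -/
lemma exists_odd_orderOf_forall_pow_eq {G : Type*} [CommGroup G] [Finite G] (χ : G →* ℂˣ) :
    ∃ ψ : G →* ℂˣ, Odd (orderOf ψ) ∧ ∀ c : G, c ^ 6 = 1 → ψ c = χ (c ^ 4) := by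
  obtain ⟨a, m, hm, hcard⟩ := Nat.exists_eq_two_pow_mul_odd (Nat.card_pos (α := G)).ne'
  refine ⟨χ ^ 4 ^ (a + 1), hm.of_dvd_nat (orderOf_dvd_of_pow_eq_one ?_), fun c hc => ?_⟩
  · ext c
    have hexp : 4 ^ (a + 1) * m = Nat.card G * 2 ^ (a + 2) := by
      rw [hcard, show (4 : ℕ) = 2 ^ 2 by rfl, ← pow_mul]; ring
    simp only [← pow_mul, hexp, MonoidHom.pow_apply, MonoidHom.one_apply, ← map_pow]
    rw [pow_mul, pow_card_eq_one', one_pow, map_one]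
  · have hmod (k : ℕ) : 4 ^ (k + 1) % 6 = 4 := by
      induction k with
      | zero => rfl
      | succ k ih => rw [pow_succ, Nat.mul_mod, ih]
    rw [MonoidHom.pow_apply, ← map_pow, pow_eq_pow_mod _ hc, hmod]

/-- The number of integral ideals of norm `m` in the ideal class `c`. -/
noncomputable def classCount (c : ClassGroup (𝓞 F)) (m : ℕ) : ℕ :=
  Nat.card {J : Ideal (𝓞 F) // Ideal.absNorm J = m ∧ idealClass J = c}

lemma sum_single_mem_normRelations [DecidableEq (ClassGroup (𝓞 F))] {ι : Type*} [Fintype ι]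
    {c : ι → ClassGroup (𝓞 F)} {a : ι → ℂ}
    (h : ∀ m ≠ 0, ∑ i, a i * (classCount (c i) m : ℂ) = 0) :
    (fun g => ∑ i, a i * if g = c i then 1 else 0) ∈ normRelations F := by
  intro m hm
  refine Eq.trans ?_ (h m hm)
  rw [Finset.sum_comm]
  refine Finset.sum_congr rfl fun i _ => ?_
  rw [← Finset.mul_sum, Finset.sum_boole, classCount,
    Nat.subtype_card ((idealsOfNorm F m).filter (idealClass · = c i)) (by simp [mem_idealsOfNorm])]

theorem eq_zero_of_sum_mul_classCount_eq_zero [IsTotallyComplex F] (hF : Module.finrank ℚ F = 2)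
    {ι : Type*} [Fintype ι] {c : ι → ClassGroup (𝓞 F)} {a : ι → ℂ}
    (hc : ∀ i j, c i ^ 3 * c j ^ 3 = 1) (hinj : Function.Injective c)
    (hinv : ∀ i j, c i = (c j)⁻¹ → i = j)
    (h : ∀ m ≠ 0, ∑ i, a i * (classCount (c i) m : ℂ) = 0) : a = 0 := by
  classical
  have hf := sum_single_mem_normRelations h
  have hc6 (i : ι) : c i ^ 6 = 1 := by rw [← hc i i, ← pow_add]
  have hcube (i j : ι) : c i ^ 3 = c j ^ 3 := mul_right_cancel ((hc i j).trans (hc j j).symm)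
  have hcoeff (χ : ClassGroup (𝓞 F) →* ℂˣ) :
      fourierCoeff (fun g => ∑ i, a i * if g = c i ^ 4 then 1 else 0) χ +
        fourierCoeff (fun g => ∑ i, a i * if g = (c i ^ 4)⁻¹ then 1 else 0) χ = 0 := by
    obtain ⟨ψ, hψ, hψχ⟩ := exists_odd_orderOf_forall_pow_eq χ
    have hzero := fourierCoeff_add_fourierCoeff_inv_eq_zero hF hf hψ
    rw [fourierCoeff_sum_mul_single, fourierCoeff_sum_mul_single] at hzero ⊢
    simpa [hψχ _ (hc6 _)] using hzero
  have hfun := eq_zero_of_fourierCoeff_eq_zero fun χ => (fourierCoeff_add _ _ χ).trans (hcoeff χ)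
  ext j
  have hj := congrFun hfun (c j ^ 4)
  have hpow {i : ι} : c j ^ 4 = c i ^ 4 ↔ j = i := by
    rw [pow_succ, pow_succ (c i), hcube j i, mul_right_inj, hinj.eq_iff]
  have hpow_inv {i : ι} (hij : c j ^ 4 = (c i ^ 4)⁻¹) : j = i := by
    refine hinv j i ?_
    rw [pow_succ, pow_succ (c i), mul_inv, ← eq_inv_of_mul_eq_one_left (hc j i)] at hij
    exact mul_left_cancel hij
  simp only [Pi.add_apply, Pi.zero_apply, ← Finset.sum_add_distrib, ← mul_add] at hj
  rw [Finset.sum_eq_single j (fun i _ hij => ?_) (by simp)] at hj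
  · refine (mul_eq_zero.1 hj).resolve_right ?_
    rw [if_pos rfl]
    split_ifs <;> norm_num
  · rw [if_neg fun h => hij (hpow.1 h).symm, if_neg fun h => hij (hpow_inv h).symm, add_zero,
      mul_zero]

end LinearIndependence

section QuadraticConjugation
variable {F : Type*} [Field F] [NumberField F]

/-- `τ` is the nontrivial automorphism of a quadratic field, encoded by the trace and norm formulas
that it satisfies. -/
def IsConj (τ : F ≃ₐ[ℚ] F) : Prop :=
  ∀ x : F, (Algebra.trace ℚ F x : F) = x + τ x ∧ (Algebra.norm ℚ x : F) = x * τ x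

open scoped Classical in
lemma exists_isConj (hF : Module.finrank ℚ F = 2) : ∃ τ : F ≃ₐ[ℚ] F, IsConj τ := by
  have : Algebra.IsQuadraticExtension ℚ F := ⟨hF⟩
  have hcard : Fintype.card Gal(F/ℚ) = 2 := by
    rw [← Nat.card_eq_fintype_card, IsGalois.card_aut_eq_finrank, hF]
  obtain ⟨τ, hτ⟩ := Fintype.exists_ne_of_one_lt_card (hcard ▸ one_lt_two) (1 : Gal(F/ℚ))
  have huniv : (Finset.univ : Finset Gal(F/ℚ)) = {1, τ} :=
    (Finset.eq_univ_of_card _ (by rw [Finset.card_pair hτ.symm, hcard])).symm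
  refine ⟨τ, fun x => ⟨?_, ?_⟩⟩
  · rw [← eq_ratCast (algebraMap ℚ F), trace_eq_sum_automorphisms, huniv,
      Finset.sum_pair hτ.symm, AlgEquiv.one_apply]
  · rw [← eq_ratCast (algebraMap ℚ F), Algebra.norm_eq_prod_automorphisms, huniv,
      Finset.prod_pair hτ.symm, AlgEquiv.one_apply]

lemma sq_eq_trace_mul_sub_norm (hF : Module.finrank ℚ F = 2) (x : F) :
    x ^ 2 = Algebra.trace ℚ F x * x - Algebra.norm ℚ x := by
  obtain ⟨τ, hτ⟩ := exists_isConj hF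
  rw [(hτ x).1, (hτ x).2]
  ring

lemma isIntegral_of_trace_norm (hF : Module.finrank ℚ F = 2) {x : F} {t n : ℤ}
    (ht : Algebra.trace ℚ F x = t) (hn : Algebra.norm ℚ x = n) : IsIntegral ℤ x := by
  refine ⟨.X ^ 2 - .C t * .X + .C n, by monicity!, ?_⟩
  simp only [Polynomial.eval₂_add, Polynomial.eval₂_sub, Polynomial.eval₂_mul, Polynomial.eval₂_pow,
    Polynomial.eval₂_X, Polynomial.eval₂_C, sq_eq_trace_mul_sub_norm hF x, ht, hn]
  simp

lemma IsConj.apply_apply {τ : F ≃ₐ[ℚ] F} (hτ : IsConj τ) (x : F) : τ (τ x) = x := by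
  have h := congrArg τ (hτ x).1
  rw [map_ratCast, (hτ x).1, map_add] at h
  linear_combination -h

lemma IsConj.trace_mul {τ : F ≃ₐ[ℚ] F} (hτ : IsConj τ) (x y : F) :
    Algebra.trace ℚ F (τ x * y) =
      Algebra.norm ℚ (x + y) - Algebra.norm ℚ x - Algebra.norm ℚ y := by
  apply Rat.cast_injective (α := F)
  push_cast
  simp only [(hτ _).1, (hτ _).2, map_add, map_mul, hτ.apply_apply]
  ring

open scoped Classical in
lemma algebraNorm_nonneg [IsTotallyComplex F] (hF : Module.finrank ℚ F = 2) (x : F) :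
    0 ≤ Algebra.norm ℚ x := by
  have φ : F →ₐ[ℚ] ℂ := IsAlgClosed.lift
  have hne : φ ≠ (Complex.conjAe.restrictScalars ℚ).toAlgHom.comp φ := fun h =>
    IsTotallyComplex.complexEmbedding_not_isReal (φ : F →+* ℂ)
      (RingHom.ext fun y => (DFunLike.congr_fun h y).symm)
  have huniv : (Finset.univ : Finset (F →ₐ[ℚ] ℂ)) = {φ, _} :=
    (Finset.eq_univ_of_card _ (by rw [Finset.card_pair hne, AlgHom.card, hF])).symm
  have h : (Algebra.norm ℚ x : ℂ) = Complex.normSq (φ x) := by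
    rw [← eq_ratCast (algebraMap ℚ ℂ), Algebra.norm_eq_prod_embeddings, huniv,
      Finset.prod_pair hne, ← Complex.mul_conj]
    rfl
  have h' : (Algebra.norm ℚ x : ℝ) = Complex.normSq (φ x) := by exact_mod_cast h
  exact_mod_cast h' ▸ Complex.normSq_nonneg _

lemma absNorm_span_eq_algebraNorm [IsTotallyComplex F] (hF : Module.finrank ℚ F = 2) (x : 𝓞 F) :
    (Ideal.absNorm (Ideal.span {x}) : ℚ) = Algebra.norm ℚ (x : F) := by
  rw [Ideal.absNorm_span_singleton, Nat.cast_natAbs, Int.cast_abs, Algebra.coe_norm_int,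
    abs_of_nonneg (algebraNorm_nonneg hF _)]

end QuadraticConjugation

section IdealLemmas
variable {R : Type*} [CommRing R]

open scoped nonZeroDivisors in
lemma spanSingleton_mul_span_le_one {K : Type*} [Field K] [Algebra R K] [IsFractionRing R K]
    {x : K} {S : Set R}
    (h : ∀ y ∈ S, x * algebraMap R K y ∈ (1 : FractionalIdeal R⁰ K)) :
    FractionalIdeal.spanSingleton R⁰ x * (Ideal.span S : FractionalIdeal R⁰ K) ≤ 1 := by
  have hle : Ideal.span S ≤ Submodule.comap ((LinearMap.mulLeft R x).comp (Algebra.linearMap R K))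
      (1 : FractionalIdeal R⁰ K).coeToSubmodule := Ideal.span_le.2 h
  refine FractionalIdeal.spanSingleton_mul_le_iff.2 fun z hz => ?_
  obtain ⟨y, hy, rfl⟩ := (FractionalIdeal.mem_coeIdeal _).1 hz
  exact hle hy

variable [IsDedekindDomain R]

lemma span_image_pow {I : Ideal R} (hI : I ≠ ⊥) (n : ℕ) :
    Ideal.span ((· ^ n) '' (I : Set R)) = I ^ n := by
  have hle : Ideal.span ((· ^ n) '' (I : Set R)) ≤ I ^ n :=
    Ideal.span_le.2 (Set.image_subset_iff.2 fun x hx => Ideal.pow_mem_pow hx n)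
  obtain ⟨T, hT⟩ := Ideal.dvd_iff_le.2 hle
  suffices T = ⊤ by rw [hT, this, Ideal.mul_top]
  by_contra hT'
  obtain ⟨M, hM, hTM⟩ := Ideal.exists_le_maximal T hT'
  have hM₀ : M ≠ ⊥ := by
    rintro rfl
    obtain ⟨x, hx, hx₀⟩ := Submodule.exists_mem_ne_zero_of_ne_bot hI
    have h : x ^ n ∈ Ideal.span ((· ^ n) '' (I : Set R)) := Ideal.subset_span ⟨x, hx, rfl⟩
    rw [hT, le_bot_iff.1 hTM, Ideal.mul_bot] at h
    exact pow_ne_zero n hx₀ h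
  have hlt : ¬ I ≤ I * M := fun h => by
    have hIM : I * M = I := le_antisymm Ideal.mul_le_left h
    exact hM.ne_top (((mul_eq_left₀ hI).1 hIM).trans Ideal.one_eq_top)
  obtain ⟨x, hx, hxM⟩ := SetLike.not_le_iff_exists.1 hlt
  obtain ⟨S, hS⟩ := Ideal.dvd_span_singleton.2 hx
  have hpow : x ^ n ∈ I ^ n * M :=
    Ideal.mul_mono_right hTM (hT ▸ Ideal.subset_span ⟨x, hx, rfl⟩)
  have hMS : M ∣ S ^ n := by
    rw [← Ideal.dvd_span_singleton, ← Ideal.span_singleton_pow, hS, mul_pow] at hpow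
    exact (mul_dvd_mul_iff_left (pow_ne_zero n hI)).1 hpow
  obtain ⟨S', rfl⟩ := (Ideal.prime_of_isPrime hM₀ hM.isPrime).dvd_of_dvd_pow hMS
  refine hxM (Ideal.dvd_span_singleton.1 ⟨S', ?_⟩)
  rw [hS, mul_assoc]

variable {K : Type*} [Field K] [Algebra R K] [IsFractionRing R K]
open scoped nonZeroDivisors

lemma idealClass_eq_one_of_spanSingleton_mul_eq_one {x : K} {I : Ideal R}
    (h : FractionalIdeal.spanSingleton R⁰ x * (I : FractionalIdeal R⁰ K) = 1) :
    idealClass I = 1 := by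
  have hx : x ≠ 0 := by
    rintro rfl
    simp at h
  have hI : (I : FractionalIdeal R⁰ K) = FractionalIdeal.spanSingleton R⁰ x⁻¹ := by
    rw [← mul_one (FractionalIdeal.spanSingleton R⁰ x⁻¹), ← h, ← mul_assoc,
      FractionalIdeal.spanSingleton_mul_spanSingleton, inv_mul_cancel₀ hx,
      FractionalIdeal.spanSingleton_one, one_mul]
  obtain ⟨y, -, hy⟩ := (FractionalIdeal.mem_coeIdeal _).1
    (hI.symm ▸ FractionalIdeal.mem_spanSingleton_self R⁰ x⁻¹)
  rw [← hy, ← FractionalIdeal.coeIdeal_span_singleton, FractionalIdeal.coeIdeal_inj] at hI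
  rw [hI, idealClass_span_singleton]

end IdealLemmas

section NumberFieldIdeals
variable {R : Type*} [CommRing R] [IsDedekindDomain R] [Module.Free ℤ R]

lemma eq_of_le_of_absNorm_eq {I J : Ideal R} (hI : Ideal.absNorm I ≠ 0) (hle : I ≤ J)
    (h : Ideal.absNorm I = Ideal.absNorm J) : I = J := by
  obtain ⟨T, rfl⟩ := Ideal.dvd_iff_le.2 hle
  rw [map_mul, Nat.mul_eq_left (by rintro h'; simp [h'] at hI), Ideal.absNorm_eq_one_iff] at h
  rw [h, Ideal.mul_top]

lemma absNorm_map_ringEquiv (e : R ≃+* R) (I : Ideal R) :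
    Ideal.absNorm (I.map e) = Ideal.absNorm I := by
  rw [Ideal.absNorm_apply, Ideal.absNorm_apply, Submodule.cardQuot_apply, Submodule.cardQuot_apply]
  exact (Nat.card_congr (Ideal.quotientEquiv I _ e rfl).toEquiv).symm

end NumberFieldIdeals

section ConjugateIdeal
variable {F : Type*} [Field F] [NumberField F] {τ : F ≃ₐ[ℚ] F}

/-- The image of an ideal under (the restriction to the ring of integers of) an automorphism. -/
noncomputable def conjIdeal (τ : F ≃ₐ[ℚ] F) (I : Ideal (𝓞 F)) : Ideal (𝓞 F) :=
  I.map (RingOfIntegers.mapRingEquiv τ.toRingEquiv)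

lemma absNorm_conjIdeal (τ : F ≃ₐ[ℚ] F) (I : Ideal (𝓞 F)) :
    Ideal.absNorm (conjIdeal τ I) = Ideal.absNorm I :=
  absNorm_map_ringEquiv _ I

lemma exists_algebraNorm_eq_mul_absNorm {I : Ideal (𝓞 F)} {x : 𝓞 F} (hx : x ∈ I) :
    ∃ n : ℤ, Algebra.norm ℚ (x : F) = n * Ideal.absNorm I := by
  obtain ⟨n, hn⟩ := Ideal.absNorm_dvd_norm_of_mem hx
  exact ⟨n, by rw [← Algebra.coe_norm_int, hn]; push_cast; ring⟩

lemma conjIdeal_ne_bot (τ : F ≃ₐ[ℚ] F) {I : Ideal (𝓞 F)} (hI : I ≠ ⊥) : conjIdeal τ I ≠ ⊥ := by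
  rwa [ne_eq, ← Ideal.absNorm_eq_zero_iff, absNorm_conjIdeal, Ideal.absNorm_eq_zero_iff]

lemma isIntegral_conj_mul_div_absNorm (hF : Module.finrank ℚ F = 2) (hτ : IsConj τ)
    {I : Ideal (𝓞 F)} (hI : I ≠ ⊥) {x y : 𝓞 F} (hx : x ∈ I) (hy : y ∈ I) :
    IsIntegral ℤ (τ x * y / Ideal.absNorm I : F) := by
  have hN : (Ideal.absNorm I : ℚ) ≠ 0 := by simpa [Ideal.absNorm_eq_zero_iff] using hI
  obtain ⟨m, hm⟩ := exists_algebraNorm_eq_mul_absNorm hx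
  obtain ⟨n, hn⟩ := exists_algebraNorm_eq_mul_absNorm hy
  obtain ⟨k, hk⟩ := exists_algebraNorm_eq_mul_absNorm (I.add_mem hx hy)
  have hscale : τ x * y / Ideal.absNorm I = (Ideal.absNorm I : ℚ)⁻¹ • (τ x * y) := by
    rw [Rat.smul_def, div_eq_inv_mul, Rat.cast_inv, Rat.cast_natCast]
  refine isIntegral_of_trace_norm hF (t := k - m - n) (n := m * n) ?_ ?_
  · rw [hscale, map_smul, hτ.trace_mul, hm, hn, ← map_add (algebraMap (𝓞 F) F), hk, smul_eq_mul]
    push_cast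
    field_simp
  · rw [hscale, Rat.smul_def, map_mul, ← eq_ratCast (algebraMap ℚ F), Algebra.norm_algebraMap,
      hF, map_mul, Algebra.norm_eq_of_algEquiv, hm, hn]
    push_cast
    field_simp

lemma conjIdeal_mul_self (hF : Module.finrank ℚ F = 2) (hτ : IsConj τ) {I : Ideal (𝓞 F)}
    (hI : I ≠ ⊥) : conjIdeal τ I * I = Ideal.span {(Ideal.absNorm I : 𝓞 F)} := by
  have hN : (Ideal.absNorm I : F) ≠ 0 := by simpa [Ideal.absNorm_eq_zero_iff] using hI
  refine eq_of_le_of_absNorm_eq ?_ (Ideal.mul_le.2 fun x' hx' y hy => ?_) ?_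
  · simpa [absNorm_conjIdeal, Ideal.absNorm_eq_zero_iff] using hI
  · obtain ⟨x, hx, rfl⟩ := (Ideal.mem_map_of_equiv _ x').1 hx'
    refine Ideal.mem_span_singleton.2
      ⟨⟨_, isIntegral_conj_mul_div_absNorm hF hτ hI hx hy⟩, RingOfIntegers.ext ?_⟩
    simp only [map_mul, RingOfIntegers.mapRingEquiv_apply]
    exact (mul_div_cancel₀ _ hN).symm
  · rw [map_mul, absNorm_conjIdeal, Ideal.absNorm_span_natCast, RingOfIntegers.rank, hF, sq]

lemma idealClass_conjIdeal (hF : Module.finrank ℚ F = 2) (hτ : IsConj τ) {I : Ideal (𝓞 F)}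
    (hI : I ≠ ⊥) : idealClass (conjIdeal τ I) = (idealClass I)⁻¹ := by
  rw [eq_inv_iff_mul_eq_one, ← idealClass_mul (conjIdeal_ne_bot τ hI) hI,
    conjIdeal_mul_self hF hτ hI,
    idealClass_span_singleton]

end ConjugateIdeal

section CubicRepresentation

/-- The trace-zero lattice of a field `K`, with the quadratic form `Tr(θ²)` and the cubic form
`N(θ)`, identified with an ideal of a quadratic field `F`: up to scaling the quadratic form becomes
the norm form of the ideal, and the cubic form becomes `x ↦ Tr(α x³)`. -/
structure CubicRepresentation (F K : Type*) [Field F] [NumberField F] [Field K] [NumberField K]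
    (g : ℕ) where
  /-- The ideal whose norm form is the quadratic form. -/
  ideal : Ideal (𝓞 F)
  ideal_ne_bot : ideal ≠ ⊥
  /-- The element `α` defining the cubic form. -/
  coeff : F
  norm_coeff : Algebra.norm ℚ coeff * (3 * Ideal.absNorm ideal) ^ 3 = g ^ 3
  /-- The identification of the ideal with the trace-zero lattice. -/
  equiv : ideal ≃ {θ : 𝓞 K // Algebra.trace ℚ K θ = 0}
  trace_sq {x : 𝓞 F} (hx : x ∈ ideal) :
    Algebra.trace ℚ K ((equiv ⟨x, hx⟩ : 𝓞 K) ^ 2 : K) * Ideal.absNorm ideal =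
      2 * g * Algebra.norm ℚ (x : F)
  norm_equiv {x : 𝓞 F} (hx : x ∈ ideal) :
    Algebra.norm ℚ ((equiv ⟨x, hx⟩ : 𝓞 K) : K) = Algebra.trace ℚ F (coeff * (x : F) ^ 3)

namespace CubicRepresentation
variable {F K K' : Type*} [Field F] [NumberField F] [Field K] [NumberField K] [Field K']
  [NumberField K'] {g v : ℕ}

lemma absNorm_ideal_ne_zero (R : CubicRepresentation F K g) :
    (Ideal.absNorm R.ideal : ℚ) ≠ 0 := by
  simpa [Ideal.absNorm_eq_zero_iff] using R.ideal_ne_bot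

lemma norm_coeff_mul (R : CubicRepresentation F K g) (hv : g * v = 3) :
    Algebra.norm ℚ R.coeff * (v * Ideal.absNorm R.ideal) ^ 3 = 1 := by
  have hv' : (g * v : ℚ) = 3 := by exact_mod_cast hv
  have hg : (g : ℚ) ≠ 0 := fun h => by simp [h] at hv'
  have h := R.norm_coeff
  rw [← hv'] at h
  apply mul_left_cancel₀ (pow_ne_zero 3 hg)
  linear_combination h

/-- The complex conjugate of a representation, which realises the inverse ideal class. -/
noncomputable def conj (τ : F ≃ₐ[ℚ] F) (R : CubicRepresentation F K g) :
    CubicRepresentation F K g where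
  ideal := conjIdeal τ R.ideal
  ideal_ne_bot := conjIdeal_ne_bot τ R.ideal_ne_bot
  coeff := τ R.coeff
  norm_coeff := by rw [Algebra.norm_eq_of_algEquiv, absNorm_conjIdeal, R.norm_coeff]
  equiv := ((RingOfIntegers.mapRingEquiv τ.toRingEquiv).symm.toEquiv.subtypeEquiv
    fun _ => Ideal.symm_apply_mem_of_equiv_iff.symm).trans R.equiv
  trace_sq {x} hx := by
    rw [absNorm_conjIdeal, ← Algebra.norm_eq_of_algEquiv τ.symm (x : F)]
    exact R.trace_sq (Ideal.symm_apply_mem_of_equiv_iff.2 hx)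
  norm_equiv {x} hx := by
    rw [← Algebra.trace_eq_of_algEquiv τ.symm, map_mul, map_pow, τ.symm_apply_apply]
    exact R.norm_equiv (Ideal.symm_apply_mem_of_equiv_iff.2 hx)

lemma isIntegral_scaled_value (R : CubicRepresentation F K g) (hF : Module.finrank ℚ F = 2)
    (hv : g * v = 3) {x : 𝓞 F} (hx : x ∈ R.ideal) :
    IsIntegral ℤ ((v : F) ^ 3 * (R.coeff * x ^ 3)) ∧
      IsIntegral ℤ ((v : F) ^ 3 * (R.coeff * x ^ 3) ^ 2) := by
  set A : F := R.coeff * (x : F) ^ 3 with hA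
  obtain ⟨t, ht⟩ : ∃ t : ℤ, Algebra.trace ℚ F A = t :=
    ⟨Algebra.norm ℤ (R.equiv ⟨x, hx⟩ : 𝓞 K), by rw [Algebra.coe_norm_int, R.norm_equiv hx]⟩
  obtain ⟨n, hn⟩ := exists_algebraNorm_eq_mul_absNorm hx
  have hk : v ^ 3 * Algebra.norm ℚ A = (n ^ 3 : ℤ) := by
    rw [hA, map_mul, map_pow, hn]
    push_cast
    linear_combination (n ^ 3 : ℚ) * R.norm_coeff_mul hv
  have hk' : (v : F) ^ 3 * Algebra.norm ℚ A = (n ^ 3 : ℤ) := by exact_mod_cast hk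
  have hsmul : (v : F) ^ 3 * A = (v ^ 3 : ℚ) • A := by
    rw [Rat.smul_def, Rat.cast_pow, Rat.cast_natCast]
  have hint : IsIntegral ℤ ((v : F) ^ 3 * A) := by
    refine isIntegral_of_trace_norm hF (t := v ^ 3 * t) (n := v ^ 3 * n ^ 3) ?_ ?_
    · rw [hsmul, map_smul, ht, smul_eq_mul]
      push_cast
      rfl
    · rw [hsmul, Rat.smul_def, map_mul, ← eq_ratCast (algebraMap ℚ F), Algebra.norm_algebraMap, hF]
      push_cast at hk ⊢
      rw [← hk]
      ring
  refine ⟨hint, ?_⟩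
  have hsq : (v : F) ^ 3 * A ^ 2 = t * ((v : F) ^ 3 * A) - (n ^ 3 : ℤ) := by
    rw [sq_eq_trace_mul_sub_norm hF A, ht, ← hk', Rat.cast_intCast]
    ring
  rw [hsq]
  exact ((isIntegral_intCast _).mul hint).sub (isIntegral_intCast _)

lemma isIntegral_mul_value (R : CubicRepresentation F K g) (R' : CubicRepresentation F K' g)
    (hF : Module.finrank ℚ F = 2) (hv : g * v = 3) {x y : 𝓞 F} (hx : x ∈ R.ideal)
    (hy : y ∈ R'.ideal) :
    IsIntegral ℤ ((v : F) ^ 3 * R.coeff * R'.coeff * (x ^ 3 * y ^ 3)) := by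
  refine IsIntegral.of_pow two_pos ?_
  have h := (R.isIntegral_scaled_value hF hv hx).2.mul (R'.isIntegral_scaled_value hF hv hy).2
  have hsq : ((v : F) ^ 3 * R.coeff * R'.coeff * (x ^ 3 * y ^ 3)) ^ 2 =
      (v : F) ^ 3 * (R.coeff * x ^ 3) ^ 2 * ((v : F) ^ 3 * (R'.coeff * y ^ 3) ^ 2) := by ring
  rwa [hsq]

open scoped nonZeroDivisors
open FractionalIdeal

-- The fractional ideal on the left is integral and has norm `1`.
lemma spanSingleton_mul_ideal_cubes (R : CubicRepresentation F K g)
    (R' : CubicRepresentation F K' g) (hF : Module.finrank ℚ F = 2) (hv : g * v = 3) :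
    spanSingleton (𝓞 F)⁰ ((v : F) ^ 3 * R.coeff * R'.coeff) *
      ((R.ideal ^ 3 * R'.ideal ^ 3 : Ideal (𝓞 F)) : FractionalIdeal (𝓞 F)⁰ F) = 1 := by
  have hle : spanSingleton (𝓞 F)⁰ ((v : F) ^ 3 * R.coeff * R'.coeff) *
      ((R.ideal ^ 3 * R'.ideal ^ 3 : Ideal (𝓞 F)) : FractionalIdeal (𝓞 F)⁰ F) ≤ 1 := by
    rw [← span_image_pow R.ideal_ne_bot, ← span_image_pow R'.ideal_ne_bot, Ideal.span_mul_span']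
    refine spanSingleton_mul_span_le_one ?_
    rintro _ ⟨_, ⟨x, hx, rfl⟩, _, ⟨y, hy, rfl⟩, rfl⟩
    rw [mem_one_iff]
    exact ⟨⟨_, R.isIntegral_mul_value R' hF hv hx hy⟩, by simp only [map_mul, map_pow]; rfl⟩
  obtain ⟨I, hI⟩ := le_one_iff_exists_coeIdeal.1 hle
  have hN : absNorm (I : FractionalIdeal (𝓞 F)⁰ F) = 1 := by
    rw [hI, map_mul, absNorm_span_singleton, coeIdeal_absNorm]
    have h := congrArg abs (R.norm_coeff_mul hv)
    have h' := congrArg abs (R'.norm_coeff_mul hv)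
    have hv' : Algebra.norm ℚ (v : F) = v ^ 2 := by
      rw [← map_natCast (algebraMap ℚ F), Algebra.norm_algebraMap, hF]
    simp only [map_mul, map_pow, abs_mul, abs_pow, Nat.abs_cast, abs_one, hv', Nat.cast_mul,
      Nat.cast_pow] at h h' ⊢
    linear_combination |Algebra.norm ℚ R'.coeff| * (v * Ideal.absNorm R'.ideal : ℚ) ^ 3 * h + h'
  rw [coeIdeal_absNorm, Nat.cast_eq_one, Ideal.absNorm_eq_one_iff] at hN
  rw [← hI, hN, coeIdeal_top]

lemma idealClass_pow_mul_idealClass_pow (R : CubicRepresentation F K g)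
    (R' : CubicRepresentation F K' g) (hF : Module.finrank ℚ F = 2) (hv : g * v = 3) :
    idealClass R.ideal ^ 3 * idealClass R'.ideal ^ 3 = 1 := by
  have h := idealClass_eq_one_of_spanSingleton_mul_eq_one
    (R.spanSingleton_mul_ideal_cubes R' hF hv)
  rwa [idealClass_mul (pow_ne_zero 3 R.ideal_ne_bot) (pow_ne_zero 3 R'.ideal_ne_bot),
    idealClass_pow R.ideal_ne_bot, idealClass_pow R'.ideal_ne_bot] at h

end CubicRepresentation
end CubicRepresentation

section TraceZeroCubic
open Polynomial
variable {K K' : Type*} [Field K] [NumberField K] [Field K'] [NumberField K']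

lemma exists_equiv_algHom {n : ℕ} (hK : Module.finrank ℚ K = n) :
    Nonempty (Fin n ≃ (K →ₐ[ℚ] ℂ)) :=
  ⟨(Fintype.equivFinOfCardEq ((AlgHom.card ℚ K ℂ).trans hK)).symm⟩

lemma trace_eq_sum_equiv {n : ℕ} (σ : Fin n ≃ (K →ₐ[ℚ] ℂ)) (x : K) :
    (Algebra.trace ℚ K x : ℂ) = ∑ i, σ i x := by
  rw [σ.sum_comp fun φ => φ x, ← trace_eq_sum_embeddings, eq_ratCast]

lemma norm_eq_prod_equiv {n : ℕ} (σ : Fin n ≃ (K →ₐ[ℚ] ℂ)) (x : K) :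
    (Algebra.norm ℚ x : ℂ) = ∏ i, σ i x := by
  rw [σ.prod_comp fun φ => φ x, ← Algebra.norm_eq_prod_embeddings, eq_ratCast]

lemma cube_eq_of_trace_eq_zero (hK : Module.finrank ℚ K = 3) {θ : K}
    (hθ : Algebra.trace ℚ K θ = 0) :
    θ ^ 3 = algebraMap ℚ K (Algebra.trace ℚ K (θ ^ 2) / 2) * θ +
      algebraMap ℚ K (Algebra.norm ℚ θ) := by
  obtain ⟨σ⟩ := exists_equiv_algHom hK
  have hT := trace_eq_sum_equiv σ θ
  have hT₂ := trace_eq_sum_equiv σ (θ ^ 2)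
  have hN := norm_eq_prod_equiv σ θ
  simp only [Fin.sum_univ_three, Fin.prod_univ_three, map_pow, hθ, Rat.cast_zero] at hT hT₂ hN
  apply (σ 0).toRingHom.injective
  change σ 0 _ = σ 0 _
  simp only [map_add, map_mul, map_pow, map_div₀, map_ratCast, map_ofNat, eq_ratCast, hT₂, hN]
  linear_combination (-(σ 0 θ) ^ 2 / 2 + (σ 0 θ) * (σ 1 θ + σ 2 θ) / 2) * hT

lemma notMem_range_of_trace_eq_zero {θ : K} (hθ₀ : θ ≠ 0) (hθ : Algebra.trace ℚ K θ = 0) :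
    θ ∉ Set.range (algebraMap ℚ K) := by
  rintro ⟨q, rfl⟩
  rw [Algebra.trace_algebraMap, nsmul_eq_mul, mul_eq_zero, Nat.cast_eq_zero] at hθ
  exact hθ.elim Module.finrank_pos.ne' fun h => hθ₀ (by rw [h, map_zero])

lemma natDegree_minpoly_of_notMem_range {p : ℕ} (hp : p.Prime) (hK : Module.finrank ℚ K = p)
    {θ : K} (hθ : θ ∉ Set.range (algebraMap ℚ K)) : (minpoly ℚ θ).natDegree = p := by
  have hdvd := minpoly.degree_dvd (Algebra.IsIntegral.isIntegral (R := ℚ) θ)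
  rw [hK] at hdvd
  exact ((Nat.dvd_prime hp).1 hdvd).resolve_left fun h => hθ (minpoly.natDegree_eq_one_iff.1 h)

lemma minpoly_eq_of_trace_eq_zero (hK : Module.finrank ℚ K = 3) {θ : K} (hθ₀ : θ ≠ 0)
    (hθ : Algebra.trace ℚ K θ = 0) :
    minpoly ℚ θ =
      X ^ 3 - (C (Algebra.trace ℚ K (θ ^ 2) / 2) * X + C (Algebra.norm ℚ θ)) := by
  have hdeg := natDegree_minpoly_of_notMem_range Nat.prime_three hK
    (notMem_range_of_trace_eq_zero hθ₀ hθ)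
  refine (eq_of_monic_of_dvd_of_natDegree_le
    (minpoly.monic (Algebra.IsIntegral.isIntegral θ)) ?_ (minpoly.dvd ℚ θ ?_) ?_).symm
  · exact monic_X_pow_sub (degree_linear_le.trans_lt (by norm_num))
  · simp [cube_eq_of_trace_eq_zero hK hθ]
  · rw [hdeg]
    compute_degree

lemma nonempty_ringEquiv_of_minpoly_eq {x : K} {y : K'} (h : minpoly ℚ x = minpoly ℚ y)
    (hx : (minpoly ℚ x).natDegree = Module.finrank ℚ K)
    (hy : (minpoly ℚ y).natDegree = Module.finrank ℚ K') : Nonempty (K ≃+* K') := by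
  have hix : IsIntegral ℚ x := Algebra.IsIntegral.isIntegral x
  have hiy : IsIntegral ℚ y := Algebra.IsIntegral.isIntegral y
  rw [← Field.primitive_element_iff_minpoly_natDegree_eq] at hx hy
  let e := (IntermediateField.adjoin.powerBasis hix).equivOfMinpoly
    (IntermediateField.adjoin.powerBasis hiy) <| by
      simpa only [IntermediateField.adjoin.powerBasis_gen, IntermediateField.minpoly_gen] using h
  rw [hx, hy] at e
  exact ⟨((IntermediateField.topEquiv.symm.trans e).trans IntermediateField.topEquiv).toRingEquiv⟩

lemma nonempty_ringEquiv_of_trace_norm_eq (hK : Module.finrank ℚ K = 3)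
    (hK' : Module.finrank ℚ K' = 3) {θ : K} {θ' : K'} (hθ₀ : θ ≠ 0) (hθ₀' : θ' ≠ 0)
    (hθ : Algebra.trace ℚ K θ = 0) (hθ' : Algebra.trace ℚ K' θ' = 0)
    (hsq : Algebra.trace ℚ K (θ ^ 2) = Algebra.trace ℚ K' (θ' ^ 2))
    (hnorm : Algebra.norm ℚ θ = Algebra.norm ℚ θ') : Nonempty (K ≃+* K') := by
  refine nonempty_ringEquiv_of_minpoly_eq (x := θ) (y := θ') ?_ ?_ ?_
  · rw [minpoly_eq_of_trace_eq_zero hK hθ₀ hθ, minpoly_eq_of_trace_eq_zero hK' hθ₀' hθ', hsq, hnorm]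
  · rw [hK, natDegree_minpoly_of_notMem_range Nat.prime_three hK
      (notMem_range_of_trace_eq_zero hθ₀ hθ)]
  · rw [hK', natDegree_minpoly_of_notMem_range Nat.prime_three hK'
      (notMem_range_of_trace_eq_zero hθ₀' hθ')]

lemma algebraNorm_neg_of_odd_finrank (hK : Odd (Module.finrank ℚ K)) (x : K) :
    Algebra.norm ℚ (-x) = -Algebra.norm ℚ x := by
  rw [← neg_one_mul, ← map_one (algebraMap ℚ K), ← map_neg, map_mul, Algebra.norm_algebraMap,
    hK.neg_one_pow, neg_one_mul]

end TraceZeroCubic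

section IdealCounting
variable {F : Type*} [Field F] [NumberField F]

lemma card_absNorm_span_eq_mul {I : Ideal (𝓞 F)} (hI : I ≠ ⊥) {m : ℕ} (hm : m ≠ 0) :
    Nat.card {x : 𝓞 F // x ∈ I ∧ Ideal.absNorm (Ideal.span {x}) = Ideal.absNorm I * m} =
      Nat.card (𝓞 F)ˣ * classCount (idealClass I)⁻¹ m := by
  have hN : Ideal.absNorm I ≠ 0 := by rwa [ne_eq, Ideal.absNorm_eq_zero_iff]
  have hzero {x : 𝓞 F} (hx : Ideal.absNorm (Ideal.span {x}) = Ideal.absNorm I * m) : x ≠ 0 := by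
    rintro rfl
    rw [Ideal.span_singleton_zero, Ideal.absNorm_bot] at hx
    exact mul_ne_zero hN hm hx.symm
  obtain ⟨e, he⟩ := exists_equiv_units_prod hI
  calc Nat.card {x : 𝓞 F // x ∈ I ∧ Ideal.absNorm (Ideal.span {x}) = Ideal.absNorm I * m}
      = Nat.card {x : 𝓞 F // (x ∈ I ∧ x ≠ 0) ∧
          Ideal.absNorm (Ideal.span {x}) = Ideal.absNorm I * m} :=
        Nat.card_congr <| Equiv.subtypeEquivRight fun x =>
          ⟨fun h => ⟨⟨h.1, hzero h.2⟩, h.2⟩, fun h => ⟨h.1.1, h.2⟩⟩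
    _ = Nat.card {y : {J : Ideal (𝓞 F) // J ≠ ⊥ ∧ idealClass J = (idealClass I)⁻¹} × (𝓞 F)ˣ //
          Ideal.absNorm y.1.1 = m} := by
        rw [← Nat.card_congr (Equiv.subtypeSubtypeEquivSubtypeInter (fun x => x ∈ I ∧ x ≠ 0)
          fun x => Ideal.absNorm (Ideal.span {x}) = Ideal.absNorm I * m)]
        exact Nat.card_congr (((Equiv.prodComm _ _).trans e).subtypeEquiv fun y => by
          rw [Equiv.trans_apply, he, map_mul, Nat.mul_right_inj hN]; rfl).symm
    _ = Nat.card ({J : {J : Ideal (𝓞 F) // J ≠ ⊥ ∧ idealClass J = (idealClass I)⁻¹} //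
          Ideal.absNorm J.1 = m} × (𝓞 F)ˣ) :=
        Nat.card_congr (Equiv.prodSubtypeFstEquivSubtypeProd
          (p := fun J : {J : Ideal (𝓞 F) // J ≠ ⊥ ∧ idealClass J = (idealClass I)⁻¹} =>
            Ideal.absNorm J.1 = m))
    _ = Nat.card (𝓞 F)ˣ * classCount (idealClass I)⁻¹ m := by
        rw [Nat.card_prod, mul_comm, classCount,
          Nat.card_congr (Equiv.subtypeSubtypeEquivSubtypeInter (fun J : Ideal (𝓞 F) =>
            J ≠ ⊥ ∧ idealClass J = (idealClass I)⁻¹) fun J => Ideal.absNorm J = m)]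
        exact congrArg _ <| Nat.card_congr <| Equiv.subtypeEquivRight fun J =>
          ⟨fun h => ⟨h.2, h.1.2⟩, fun h => ⟨⟨ne_bot_of_absNorm_eq hm h.1, h.2⟩, h.1⟩⟩

end IdealCounting

section CubicRepresentationClass
namespace CubicRepresentation
variable {F K K' : Type*} [Field F] [NumberField F] [Field K] [NumberField K] [Field K']
  [NumberField K'] {g v : ℕ}

lemma card_trace_sq_eq [IsTotallyComplex F] (R : CubicRepresentation F K g)
    (hF : Module.finrank ℚ F = 2) (hg : g ≠ 0) {m : ℕ} (hm : m ≠ 0) :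
    Nat.card {θ : 𝓞 K // Algebra.trace ℚ K θ = 0 ∧ Algebra.trace ℚ K (θ ^ 2 : K) = 2 * g * m} =
      Nat.card (𝓞 F)ˣ * classCount (idealClass R.ideal)⁻¹ m := by
  rw [← card_absNorm_span_eq_mul R.ideal_ne_bot hm,
    ← Nat.card_congr (Equiv.subtypeSubtypeEquivSubtypeInter (· ∈ R.ideal) fun x =>
      Ideal.absNorm (Ideal.span {x}) = Ideal.absNorm R.ideal * m)]
  refine Nat.card_congr (.symm <| .trans (R.equiv.subtypeEquiv fun x => ?_)
    (Equiv.subtypeSubtypeEquivSubtypeInter _ fun θ : 𝓞 K =>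
      Algebra.trace ℚ K (θ ^ 2 : K) = 2 * g * m))
  have hN := R.absNorm_ideal_ne_zero
  have h2g : (2 * g : ℚ) ≠ 0 := by simpa using hg
  rw [← mul_left_inj' hN, R.trace_sq x.2, ← absNorm_span_eq_algebraNorm hF, mul_assoc _ (m : ℚ),
    mul_right_inj' h2g, mul_comm (m : ℚ)]
  exact_mod_cast Iff.rfl

lemma coeff_ne_zero (R : CubicRepresentation F K g) (hg : g ≠ 0) : R.coeff ≠ 0 := by
  intro h
  have := R.norm_coeff
  rw [h, Algebra.norm_zero, zero_mul] at this
  exact pow_ne_zero 3 hg (by exact_mod_cast this.symm)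

lemma equiv_ne_zero [IsTotallyComplex F] (R : CubicRepresentation F K g) (hg : g ≠ 0) {x : 𝓞 F}
    (hx : x ∈ R.ideal) (hx₀ : x ≠ 0) : ((R.equiv ⟨x, hx⟩ : 𝓞 K) : K) ≠ 0 := by
  intro h
  have hsq := R.trace_sq hx
  rw [h, zero_pow two_ne_zero, map_zero, zero_mul, eq_comm, mul_eq_zero,
    Algebra.norm_eq_zero_iff] at hsq
  refine hsq.elim (by simpa using hg) fun h => hx₀ (by exact_mod_cast h)

open scoped nonZeroDivisors
open FractionalIdeal

-- Comparing the ideal generators `α * α`, `α * α'` of the inverse cubes for the pairs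
-- `(R, R)`, `(R, R')` determines `α' / α` up to a unit.
lemma coeff_mul_pow_eq_or_eq_neg (R : CubicRepresentation F K g)
    (R' : CubicRepresentation F K' g) (hF : Module.finrank ℚ F = 2) (hv : g * v = 3)
    (hu : ∀ u : (𝓞 F)ˣ, u = 1 ∨ u = -1) {x y : 𝓞 F}
    (h : Ideal.span {x} * R.ideal = Ideal.span {y} * R'.ideal) :
    R'.coeff * x ^ 3 = R.coeff * y ^ 3 ∨ R'.coeff * x ^ 3 = -(R.coeff * y ^ 3) := by
  have hg : g ≠ 0 := by rintro rfl; simp at hv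
  have hv₀ : v ≠ 0 := by rintro rfl; simp at hv
  set I := (R.ideal : FractionalIdeal (𝓞 F)⁰ F)
  set I' := (R'.ideal : FractionalIdeal (𝓞 F)⁰ F)
  have hI : spanSingleton (𝓞 F)⁰ (x : F) * I = spanSingleton (𝓞 F)⁰ (y : F) * I' := by
    simpa only [coeIdeal_mul, coeIdeal_span_singleton] using
      congrArg (fun J : Ideal (𝓞 F) => (J : FractionalIdeal (𝓞 F)⁰ F)) h
  have h₁ := R.spanSingleton_mul_ideal_cubes R hF hv
  have h₂ := R.spanSingleton_mul_ideal_cubes R' hF hv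
  simp only [coeIdeal_mul, coeIdeal_pow] at h₁ h₂
  have hspan : spanSingleton (𝓞 F)⁰ ((v : F) ^ 3 * R.coeff * (R.coeff * y ^ 3)) =
      spanSingleton (𝓞 F)⁰ ((v : F) ^ 3 * R.coeff * (R'.coeff * x ^ 3)) := by
    simp only [← spanSingleton_mul_spanSingleton, ← spanSingleton_pow] at h₁ h₂ ⊢
    generalize spanSingleton (𝓞 F)⁰ (x : F) = X at hI ⊢
    generalize spanSingleton (𝓞 F)⁰ (y : F) = Y at hI ⊢
    generalize spanSingleton (𝓞 F)⁰ (v : F) = V at h₁ h₂ ⊢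
    generalize spanSingleton (𝓞 F)⁰ R.coeff = A at h₁ h₂ ⊢
    generalize spanSingleton (𝓞 F)⁰ R'.coeff = A' at h₁ h₂ ⊢
    calc V ^ 3 * A * (A * Y ^ 3)
        = V ^ 3 * A * A * Y ^ 3 * (V ^ 3 * A * A' * (I ^ 3 * I' ^ 3)) := by rw [h₂]; ring
      _ = V ^ 3 * A * A * I ^ 3 * (V ^ 3 * A * A') * (Y * I') ^ 3 := by ring
      _ = V ^ 3 * A * A * (I ^ 3 * I ^ 3) * (V ^ 3 * A * (A' * X ^ 3)) := by rw [← hI]; ring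
      _ = V ^ 3 * A * (A' * X ^ 3) := by rw [h₁, one_mul]
  have hc : (v : F) ^ 3 * R.coeff ≠ 0 :=
    mul_ne_zero (pow_ne_zero 3 (Nat.cast_ne_zero.2 hv₀)) (R.coeff_ne_zero hg)
  obtain ⟨u, hu'⟩ := spanSingleton_eq_spanSingleton.1 hspan
  rcases hu u with rfl | rfl
  · exact .inl (mul_left_cancel₀ hc (by rw [← hu', one_smul]))
  · exact .inr (mul_left_cancel₀ hc (by rw [← hu', Units.neg_smul, one_smul, mul_neg]))

lemma trace_sq_equiv_eq [IsTotallyComplex F] (R : CubicRepresentation F K g)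
    (R' : CubicRepresentation F K' g) (hF : Module.finrank ℚ F = 2) {x y s t : 𝓞 F} (hy : y ≠ 0)
    (h : Ideal.span {x} * R.ideal = Ideal.span {y} * R'.ideal) (hst : x * s = y * t)
    (hs : s ∈ R.ideal) (ht : t ∈ R'.ideal) :
    Algebra.trace ℚ K ((R.equiv ⟨s, hs⟩ : 𝓞 K) ^ 2 : K) =
      Algebra.trace ℚ K' ((R'.equiv ⟨t, ht⟩ : 𝓞 K') ^ 2 : K') := by
  have hN : Algebra.norm ℚ (x : F) * Algebra.norm ℚ (s : F) =
      Algebra.norm ℚ (y : F) * Algebra.norm ℚ (t : F) := by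
    simpa using congrArg (fun z : 𝓞 F => Algebra.norm ℚ (z : F)) hst
  have hNI : Algebra.norm ℚ (x : F) * Ideal.absNorm R.ideal =
      Algebra.norm ℚ (y : F) * Ideal.absNorm R'.ideal := by
    have h := congrArg Ideal.absNorm h
    rw [map_mul, map_mul] at h
    simp only [← absNorm_span_eq_algebraNorm hF]
    exact_mod_cast h
  have hy' : Algebra.norm ℚ (y : F) ≠ 0 := by simpa [Algebra.norm_eq_zero_iff] using hy
  apply mul_right_cancel₀ R.absNorm_ideal_ne_zero
  apply mul_right_cancel₀ R'.absNorm_ideal_ne_zero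
  apply mul_left_cancel₀ hy'
  linear_combination Algebra.norm ℚ (y : F) * Ideal.absNorm R'.ideal * R.trace_sq hs -
    Algebra.norm ℚ (y : F) * Ideal.absNorm R.ideal * R'.trace_sq ht -
    2 * g * Algebra.norm ℚ (s : F) * hNI + 2 * g * Ideal.absNorm R.ideal * hN

lemma norm_equiv_eq_or_eq_neg (R : CubicRepresentation F K g) (R' : CubicRepresentation F K' g)
    (hF : Module.finrank ℚ F = 2) (hv : g * v = 3) (hu : ∀ u : (𝓞 F)ˣ, u = 1 ∨ u = -1)
    {x y s t : 𝓞 F} (hy : y ≠ 0) (h : Ideal.span {x} * R.ideal = Ideal.span {y} * R'.ideal)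
    (hst : x * s = y * t) (hs : s ∈ R.ideal) (ht : t ∈ R'.ideal) :
    Algebra.norm ℚ ((R'.equiv ⟨t, ht⟩ : 𝓞 K') : K') =
        Algebra.norm ℚ ((R.equiv ⟨s, hs⟩ : 𝓞 K) : K) ∨
      Algebra.norm ℚ ((R'.equiv ⟨t, ht⟩ : 𝓞 K') : K') =
        -Algebra.norm ℚ ((R.equiv ⟨s, hs⟩ : 𝓞 K) : K) := by
  have hcube : (x : F) ^ 3 * s ^ 3 = y ^ 3 * t ^ 3 := by
    rw [← mul_pow, ← mul_pow]
    simpa using congrArg (fun z : 𝓞 F => (z : F) ^ 3) hst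
  have hy' : (y : F) ^ 3 ≠ 0 := pow_ne_zero 3 (by exact_mod_cast hy)
  rw [R.norm_equiv hs, R'.norm_equiv ht, ← map_neg]
  refine (R.coeff_mul_pow_eq_or_eq_neg R' hF hv hu h).imp ?_ ?_ <;>
  exact fun h => congrArg _ (mul_right_cancel₀ hy' (by
    linear_combination (s : F) ^ 3 * h - R'.coeff * hcube))

lemma nonempty_ringEquiv_of_idealClass_eq [IsTotallyComplex F] (R : CubicRepresentation F K g)
    (R' : CubicRepresentation F K' g) (hF : Module.finrank ℚ F = 2)
    (hK : Module.finrank ℚ K = 3) (hK' : Module.finrank ℚ K' = 3) (hv : g * v = 3)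
    (hu : ∀ u : (𝓞 F)ˣ, u = 1 ∨ u = -1) (h : idealClass R.ideal = idealClass R'.ideal) :
    Nonempty (K ≃+* K') := by
  have hg : g ≠ 0 := by rintro rfl; simp at hv
  rw [idealClass_of_ne_bot R.ideal_ne_bot, idealClass_of_ne_bot R'.ideal_ne_bot,
    ClassGroup.mk0_eq_mk0_iff] at h
  obtain ⟨x, y, hx, hy, hxy⟩ := h
  obtain ⟨s, hs, hs₀⟩ := Submodule.exists_mem_ne_zero_of_ne_bot R.ideal_ne_bot
  obtain ⟨t, ht, hst⟩ := ((Ideal.span_singleton_mul_eq_span_singleton_mul _ _).1 hxy).1 s hs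
  have ht₀ : t ≠ 0 := by
    rintro rfl
    simp [hx, hs₀] at hst
  have hsq := R.trace_sq_equiv_eq R' hF hy hxy hst hs ht
  rcases R.norm_equiv_eq_or_eq_neg R' hF hv hu hy hxy hst hs ht with hnorm | hnorm
  · exact nonempty_ringEquiv_of_trace_norm_eq hK hK' (R.equiv_ne_zero hg hs hs₀)
      (R'.equiv_ne_zero hg ht ht₀) (R.equiv _).2 (R'.equiv _).2 hsq hnorm.symm
  · refine nonempty_ringEquiv_of_trace_norm_eq hK hK' (R.equiv_ne_zero hg hs hs₀)
      (neg_ne_zero.2 (R'.equiv_ne_zero hg ht ht₀)) (R.equiv _).2 ?_ ?_ ?_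
    · rw [map_neg, (R'.equiv _).2, neg_zero]
    · rw [neg_sq, hsq]
    · rw [algebraNorm_neg_of_odd_finrank (hK' ▸ Nat.odd_iff.2 rfl), hnorm, neg_neg]

end CubicRepresentation
end CubicRepresentationClass

section ImaginaryQuadratic

lemma exists_intCast_eq_of_sq_mul_squarefree {s : ℤ} (hs : Squarefree s) {q : ℚ} {k : ℤ}
    (h : q ^ 2 * s = k) : ∃ n : ℤ, q = n := by
  have hdvd : (q.den : ℤ) * q.den ∣ q.num ^ 2 * s := by
    refine ⟨k, ?_⟩
    have hq : (q.num : ℚ) = q * q.den := (Rat.mul_den_eq_num q).symm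
    have : (q.num ^ 2 * s : ℚ) = q.den * q.den * k := by rw [hq, ← h]; ring
    exact_mod_cast this
  have hcop : IsCoprime ((q.den : ℤ) * q.den) (q.num ^ 2) := by
    have : IsCoprime (q.den : ℤ) q.num := by
      simpa [Int.isCoprime_iff_nat_coprime] using q.reduced.symm
    exact (this.mul_left this).pow_right
  have hden := hs _ (hcop.dvd_of_dvd_mul_left hdvd)
  rw [Int.ofNat_isUnit, Nat.isUnit_iff] at hden
  exact ⟨q.num, (Rat.coe_int_num_of_den_eq_one hden).symm⟩

lemma even_of_sq_mul_emod_four_eq {s n m : ℤ} (hs : s % 4 = 2 ∨ s % 4 = 3)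
    (h : n ^ 2 * s % 4 = m ^ 2 % 4) : Even n := by
  by_contra hn
  have hn := Int.sq_mod_four_eq_one_of_odd (Int.not_even_iff_odd.1 hn)
  rw [Int.mul_emod, hn] at h
  rcases Int.even_or_odd m with ⟨r, rfl⟩ | hm
  · ring_nf at h
    omega
  · rw [Int.sq_mod_four_eq_one_of_odd hm] at h
    omega

lemma exists_intCast_eq_of_sq_mul_fundamentalDiscriminant {D : ℤ}
    (hD : IsFundamentalDiscriminant D) {q : ℚ} {m k : ℤ} (h : q ^ 2 * D = m ^ 2 - 4 * k) :
    ∃ n : ℤ, q = n := by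
  rcases hD.2 with ⟨-, hs⟩ | ⟨h₄, hs, hmod⟩
  · exact exists_intCast_eq_of_sq_mul_squarefree hs (k := m ^ 2 - 4 * k) (by rw [h]; push_cast; rfl)
  · obtain ⟨s, rfl⟩ := Int.dvd_of_emod_eq_zero h₄
    rw [Int.mul_ediv_cancel_left s four_ne_zero] at hs hmod
    have h' : (2 * q) ^ 2 * s = (m ^ 2 - 4 * k : ℤ) := by
      push_cast at h ⊢
      rw [← h]
      ring
    obtain ⟨n, hn⟩ := exists_intCast_eq_of_sq_mul_squarefree hs h'
    rw [hn] at h'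
    have hnat : n ^ 2 * s = m ^ 2 - 4 * k := by exact_mod_cast h'
    obtain ⟨r, rfl⟩ := even_of_sq_mul_emod_four_eq (n := n) (m := m) hmod (by omega)
    exact ⟨r, by push_cast at hn; linarith⟩

lemma exists_quadraticField {D : ℤ} (hD : D < 0) :
    ∃ (F : Type) (_ : Field F) (_ : NumberField F) (δ : F),
      Module.finrank ℚ F = 2 ∧ δ ^ 2 = (D : F) := by
  have : Fact (∀ r : ℚ, r ^ 2 ≠ (D : ℚ) + 0 * r) := ⟨fun r h => by
    have : (D : ℚ) < 0 := by exact_mod_cast hD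
    nlinarith [sq_nonneg r]⟩
  have hfin : Module.finrank ℚ (QuadraticAlgebra ℚ (D : ℚ) 0) = 2 :=
    QuadraticAlgebra.finrank_eq_two _ _
  have hfd : Module.Finite ℚ (QuadraticAlgebra ℚ (D : ℚ) 0) := inferInstance
  refine ⟨QuadraticAlgebra ℚ (D : ℚ) 0, inferInstance,
    { to_charZero := inferInstance, to_finiteDimensional := by convert hfd },
    QuadraticAlgebra.omega, by convert hfin, ?_⟩
  ext <;> simp [sq]

variable {F : Type*} [Field F] {δ : F} {D : ℤ}

lemma isTotallyComplex_of_sq_eq_intCast (hδ : δ ^ 2 = (D : F)) (hD : D < 0) :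
    IsTotallyComplex F := by
  refine ⟨fun v => InfinitePlace.not_isReal_iff_isComplex.1 fun ⟨φ, hφ, _⟩ => ?_⟩
  have him : (φ δ).im = 0 := Complex.conj_eq_iff_im.1 (RingHom.congr_fun hφ δ)
  have hsq : ((φ δ) ^ 2).re = D := by rw [← map_pow, hδ, map_intCast, Complex.intCast_re]
  rw [sq, Complex.mul_re, him] at hsq
  have : (D : ℝ) < 0 := by exact_mod_cast hD
  nlinarith [sq_nonneg (φ δ).re]

variable [NumberField F]

lemma trace_eq_zero_of_sq_eq_intCast (hF : Module.finrank ℚ F = 2) (hδ : δ ^ 2 = (D : F))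
    (hD : D < 0) : Algebra.trace ℚ F δ = 0 := by
  by_contra ht
  have h := sq_eq_trace_mul_sub_norm hF δ
  have hrat : δ = (((D + Algebra.norm ℚ δ) / Algebra.trace ℚ F δ : ℚ) : F) := by
    have ht' : (Algebra.trace ℚ F δ : F) ≠ 0 := by exact_mod_cast ht
    push_cast
    rw [eq_div_iff ht', ← hδ, h]
    ring
  generalize (D + Algebra.norm ℚ δ) / Algebra.trace ℚ F δ = r at hrat
  rw [hrat] at hδ
  have hr : r ^ 2 = D := by exact_mod_cast hδ
  have hD' : (D : ℚ) < 0 := by exact_mod_cast hD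
  nlinarith [sq_nonneg r]

lemma IsConj.apply_of_sq_eq_intCast {τ : F ≃ₐ[ℚ] F} (hτ : IsConj τ)
    (hF : Module.finrank ℚ F = 2) (hδ : δ ^ 2 = (D : F)) (hD : D < 0) : τ δ = -δ := by
  have h := (hτ δ).1
  rw [trace_eq_zero_of_sq_eq_intCast hF hδ hD, Rat.cast_zero] at h
  exact (neg_eq_of_add_eq_zero_right h.symm).symm

lemma trace_norm_of_two_mul_eq (hF : Module.finrank ℚ F = 2) (hδ : δ ^ 2 = (D : F)) (hD : D < 0)
    {x : F} {p q : ℚ} (hx : 2 * x = p + q * δ) :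
    Algebra.trace ℚ F x = p ∧ 4 * Algebra.norm ℚ x = p ^ 2 - q ^ 2 * D := by
  obtain ⟨τ, hτ⟩ := exists_isConj hF
  have hx' : 2 * τ x = p - q * δ := by
    simpa [hτ.apply_of_sq_eq_intCast hF hδ hD, sub_eq_add_neg, map_ofNat τ 2] using congrArg τ hx
  constructor <;> apply Rat.cast_injective (α := F) <;> push_cast
  · rw [(hτ x).1]
    linear_combination (hx + hx') / 2
  · rw [(hτ x).2, ← hδ]
    linear_combination 2 * τ x * hx + (p + q * δ) * hx'

lemma two_mul_eq_trace_add (hF : Module.finrank ℚ F = 2) (hδ : δ ^ 2 = (D : F)) (hD : D < 0)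
    (x : F) : 2 * x = Algebra.trace ℚ F x + ((Algebra.trace ℚ F (x * δ) / D : ℚ) : F) * δ := by
  obtain ⟨τ, hτ⟩ := exists_isConj hF
  have hD₀ : (D : F) ≠ 0 := Int.cast_ne_zero.2 hD.ne
  push_cast
  rw [(hτ x).1, (hτ (x * δ)).1, map_mul, hτ.apply_of_sq_eq_intCast hF hδ hD]
  field_simp
  linear_combination -(x - τ x) * hδ

lemma exists_int_two_mul_eq (hF : Module.finrank ℚ F = 2) (hδ : δ ^ 2 = (D : F)) (hD : D < 0)
    (hfund : IsFundamentalDiscriminant D) (x : 𝓞 F) :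
    ∃ m n : ℤ, 2 * (x : F) = m + n * δ ∧ m ^ 2 - n ^ 2 * D = 4 * Algebra.norm ℤ x := by
  have h := two_mul_eq_trace_add hF hδ hD (x : F)
  have hnorm := (trace_norm_of_two_mul_eq hF hδ hD h).2
  rw [← Algebra.coe_trace_int, ← Algebra.coe_norm_int] at hnorm
  obtain ⟨n, hn⟩ := exists_intCast_eq_of_sq_mul_fundamentalDiscriminant hfund
    (q := Algebra.trace ℚ F (x * δ) / D) (m := Algebra.trace ℤ (𝓞 F) x)
    (k := Algebra.norm ℤ x) (by linear_combination hnorm)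
  rw [← Algebra.coe_trace_int, hn] at h
  rw [hn] at hnorm
  exact ⟨Algebra.trace ℤ (𝓞 F) x, n, by simpa using h, by exact_mod_cast hnorm.symm⟩

lemma units_eq_one_or_neg_one (hF : Module.finrank ℚ F = 2) (hδ : δ ^ 2 = (D : F)) (hD : D < -4)
    (hfund : IsFundamentalDiscriminant D) (u : (𝓞 F)ˣ) : u = 1 ∨ u = -1 := by
  have hD₀ : D < 0 := by omega
  have := isTotallyComplex_of_sq_eq_intCast hδ hD₀
  obtain ⟨m, n, hmn, hnorm⟩ := exists_int_two_mul_eq hF hδ hD₀ hfund (u : 𝓞 F)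
  have hone : Algebra.norm ℤ (u : 𝓞 F) = 1 := by
    have h := absNorm_span_eq_algebraNorm hF (u : 𝓞 F)
    rw [Ideal.span_singleton_eq_top.2 u.isUnit, Ideal.absNorm_top, ← Algebra.coe_norm_int] at h
    exact_mod_cast h.symm
  rw [hone] at hnorm
  have hn : n = 0 := by
    by_contra hn
    nlinarith [sq_nonneg m, pow_pos (abs_pos.2 hn) 2, sq_abs n]
  have hm : (m - 2) * (m + 2) = 0 := by rw [hn] at hnorm; linarith
  refine (mul_eq_zero.1 hm).imp (fun h => ?_) fun h => ?_ <;>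
  · ext
    have hm' : (m : F) = (_ : ℤ) := congrArg _ (eq_neg_of_add_eq_zero_left h)
    rw [hn, hm'] at hmn
    apply mul_left_cancel₀ (two_ne_zero (α := F))
    simp [hmn]

end ImaginaryQuadratic

section FormIdeal

lemma exists_basis_of_pair {R M : Type*} [CommRing R] [AddCommGroup M] [Module R M] {x y : M}
    (hli : ∀ s t : R, s • x + t • y = 0 → s = 0 ∧ t = 0)
    (hspan : ∀ z, ∃ s t : R, s • x + t • y = z) :
    ∃ B : Module.Basis (Fin 2) R M, B 0 = x ∧ B 1 = y := by
  refine ⟨Module.Basis.mk (v := ![x, y]) (LinearIndependent.pair_iff.2 hli) fun z _ => ?_, ?_, ?_⟩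
  · rw [Matrix.range_cons_cons_empty, Submodule.mem_span_pair]
    exact hspan z
  · simp
  · simp

lemma mem_span_pair_iff_of_sq_eq {S : Type*} [CommRing S] {a b c : ℤ} {θ : S}
    (hθ : θ ^ 2 = b * θ - a * c) (hspan : ∀ z : S, ∃ s t : ℤ, s + t * θ = z) {x : S} :
    x ∈ Ideal.span {(a : S), θ} ↔ ∃ s t : ℤ, a * s + t * θ = x := by
  rw [Ideal.mem_span_pair]
  constructor
  · rintro ⟨y, z, rfl⟩
    obtain ⟨m, n, rfl⟩ := hspan y
    obtain ⟨m', n', rfl⟩ := hspan z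
    refine ⟨m - n' * c, a * n + m' + n' * b, ?_⟩
    push_cast
    linear_combination -(n' : S) * hθ
  · rintro ⟨s, t, rfl⟩
    exact ⟨s, t, by ring⟩

variable {F : Type*} [Field F] [NumberField F] {δ : F} {D a b c : ℤ}

lemma exists_two_mul_eq_add (hF : Module.finrank ℚ F = 2) (hδ : δ ^ 2 = (D : F)) (hD : D < 0)
    (hdisc : b ^ 2 - 4 * a * c = D) : ∃ θ : 𝓞 F, 2 * (θ : F) = b + δ := by
  have hx : 2 * ((b + δ) / 2) = ((b : ℚ) : F) + ((1 : ℚ) : F) * δ := by push_cast; ring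
  have h := trace_norm_of_two_mul_eq hF hδ hD hx
  refine ⟨⟨(b + δ) / 2, isIntegral_of_trace_norm hF h.1 (n := a * c) ?_⟩,
    mul_div_cancel₀ _ two_ne_zero⟩
  have hdisc' : (b : ℚ) ^ 2 - 4 * a * c = D := by exact_mod_cast hdisc
  push_cast
  linear_combination h.2 / 4 + hdisc' / 4

variable {θ : 𝓞 F}

lemma sq_eq_of_two_mul_eq_add (hδ : δ ^ 2 = (D : F)) (hdisc : b ^ 2 - 4 * a * c = D)
    (hθ : 2 * (θ : F) = b + δ) : θ ^ 2 = b * θ - a * c := by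
  have hdisc' : (b : F) ^ 2 - 4 * a * c = D := by exact_mod_cast congrArg (Int.cast (R := F)) hdisc
  ext
  simp only [map_pow, map_sub, map_mul, map_intCast]
  linear_combination (2 * θ - b + δ) / 4 * hθ + (hδ - hdisc') / 4

lemma eq_zero_of_add_mul_eq_zero (hF : Module.finrank ℚ F = 2) (hδ : δ ^ 2 = (D : F)) (hD : D < 0)
    (hθ : 2 * (θ : F) = b + δ) {s t : ℤ} (h : (s : 𝓞 F) + t * θ = 0) : s = 0 ∧ t = 0 := by
  have h' : (2 : F) * 0 = ((2 * s + t * b : ℤ) : ℚ) + ((t : ℤ) : ℚ) * δ := by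
    have := congrArg (algebraMap (𝓞 F) F) h
    simp only [map_add, map_mul, map_intCast, map_zero] at this
    push_cast
    linear_combination -2 * this + t * hθ
  obtain ⟨hs, ht⟩ := trace_norm_of_two_mul_eq hF hδ hD h'
  rw [← hs, map_zero (Algebra.trace ℚ F), Algebra.norm_zero] at ht
  have ht' : t = 0 := by
    have : t ^ 2 * D = 0 := by
      exact_mod_cast (by linear_combination ht : (t : ℚ) ^ 2 * D = 0)
    simpa [hD.ne] using this
  rw [map_zero] at hs
  have : 2 * s + t * b = 0 := by exact_mod_cast hs.symm
  subst ht'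
  exact ⟨by linarith, rfl⟩

lemma exists_add_mul_eq (hF : Module.finrank ℚ F = 2) (hδ : δ ^ 2 = (D : F)) (hD : D < 0)
    (hfund : IsFundamentalDiscriminant D) (hdisc : b ^ 2 - 4 * a * c = D)
    (hθ : 2 * (θ : F) = b + δ) (x : 𝓞 F) : ∃ s t : ℤ, (s : 𝓞 F) + t * θ = x := by
  obtain ⟨m, n, hx, hnorm⟩ := exists_int_two_mul_eq hF hδ hD hfund x
  have heven : Even (m - n * b) := by
    have h : Even (m ^ 2 - (n * b) ^ 2) := by
      rw [← hdisc] at hnorm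
      exact ⟨2 * Algebra.norm ℤ x - 2 * n ^ 2 * a * c, by linear_combination hnorm⟩
    simpa [Int.even_sub, Int.even_pow] using h
  obtain ⟨r, hr⟩ := heven
  refine ⟨r, n, ?_⟩
  have hr' : (m - n * b : F) = r + r := by exact_mod_cast congrArg (Int.cast (R := F)) hr
  ext
  simp only [map_add, map_mul, map_intCast]
  linear_combination -hx / 2 - hr' / 2 + n * hθ / 2

lemma exists_basis_span_pair (hF : Module.finrank ℚ F = 2) (hδ : δ ^ 2 = (D : F)) (hD : D < 0)
    (hfund : IsFundamentalDiscriminant D) (ha : a ≠ 0) (hdisc : b ^ 2 - 4 * a * c = D)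
    (hθ : 2 * (θ : F) = b + δ) :
    ∃ B : Module.Basis (Fin 2) ℤ (Ideal.span {(a : 𝓞 F), θ}),
      (B 0 : 𝓞 F) = a ∧ (B 1 : 𝓞 F) = θ := by
  have ha' : (a : 𝓞 F) ∈ Ideal.span {(a : 𝓞 F), θ} := Ideal.subset_span (by simp)
  have hθ' : θ ∈ Ideal.span {(a : 𝓞 F), θ} := Ideal.subset_span (by simp)
  obtain ⟨B, hB₀, hB₁⟩ := exists_basis_of_pair (R := ℤ)
    (x := (⟨a, ha'⟩ : Ideal.span {(a : 𝓞 F), θ})) (y := ⟨θ, hθ'⟩)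
    (fun s t h => by
      have h' : ((s * a : ℤ) : 𝓞 F) + t * θ = 0 := by simpa using congrArg Subtype.val h
      simpa [ha] using eq_zero_of_add_mul_eq_zero hF hδ hD hθ h')
    fun z => by
      obtain ⟨s, t, h⟩ := (mem_span_pair_iff_of_sq_eq (sq_eq_of_two_mul_eq_add hδ hdisc hθ)
        (exists_add_mul_eq hF hδ hD hfund hdisc hθ)).1 z.2
      exact ⟨s, t, Subtype.ext (by simpa [mul_comm] using h)⟩
  exact ⟨B, by rw [hB₀], by rw [hB₁]⟩

lemma absNorm_span_pair (hF : Module.finrank ℚ F = 2) (hδ : δ ^ 2 = (D : F)) (hD : D < 0)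
    (hfund : IsFundamentalDiscriminant D) (ha : a ≠ 0) (hdisc : b ^ 2 - 4 * a * c = D)
    (hθ : 2 * (θ : F) = b + δ) : Ideal.absNorm (Ideal.span {(a : 𝓞 F), θ}) = a.natAbs := by
  obtain ⟨B, hB₀, hB₁⟩ := exists_basis_span_pair hF hδ hD hfund ha hdisc hθ
  obtain ⟨B', hB'₀, hB'₁⟩ := exists_basis_of_pair (R := ℤ) (x := (1 : 𝓞 F)) (y := θ)
    (fun s t h => eq_zero_of_add_mul_eq_zero hF hδ hD hθ (by simpa using h))
    fun z => by simpa using exists_add_mul_eq hF hδ hD hfund hdisc hθ z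
  have hB : Subtype.val ∘ B = fun i => (![a, 1] i : ℤ) • B' i := by
    funext i
    fin_cases i <;> simp [hB₀, hB₁, hB'₀, hB'₁]
  rw [← Ideal.natAbs_det_basis_change B' _ B, hB, AlternatingMap.map_smul_univ]
  simp [B'.det_self]

end FormIdeal

section LagrangeResolvent
variable {K : Type*} [Field K] [NumberField K]

/-- The Lagrange resolvent `x₀ + ω x₁ + ω² x₂` of an element of a cubic field, where the `xᵢ` are
its conjugates under the enumeration `σ` of the complex embeddings; `ω` is meant to be a primitive
cube root of unity. -/
noncomputable def lagrangeResolvent (σ : Fin 3 ≃ (K →ₐ[ℚ] ℂ)) (ω : ℂ) (x : K) : ℂ :=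
  σ 0 x + ω * σ 1 x + ω ^ 2 * σ 2 x

/-- The area form `x₀ y₁ - x₁ y₀` on the trace-zero elements of a cubic field, which measures
sublattices of trace-zero integers. -/
noncomputable def areaForm (σ : Fin 3 ≃ (K →ₐ[ℚ] ℂ)) (x y : K) : ℂ :=
  σ 0 x * σ 1 y - σ 1 x * σ 0 y

variable (σ : Fin 3 ≃ (K →ₐ[ℚ] ℂ)) {ω : ℂ} {x y : K}

lemma lagrangeResolvent_add (x y : K) :
    lagrangeResolvent σ ω (x + y) = lagrangeResolvent σ ω x + lagrangeResolvent σ ω y := by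
  simp only [lagrangeResolvent, map_add]
  ring

lemma lagrangeResolvent_intCast_mul (n : ℤ) (x : K) :
    lagrangeResolvent σ ω (n * x) = n * lagrangeResolvent σ ω x := by
  simp only [lagrangeResolvent, map_mul, map_intCast]
  ring

lemma apply_two_of_trace_eq_zero (hx : Algebra.trace ℚ K x = 0) : σ 2 x = -(σ 0 x + σ 1 x) := by
  have h := trace_eq_sum_equiv σ x
  rw [hx, Fin.sum_univ_three, Rat.cast_zero] at h
  exact (neg_eq_of_add_eq_zero_right h.symm).symm

lemma two_mul_lagrangeResolvent (hω : ω ^ 2 + ω + 1 = 0) (hx : Algebra.trace ℚ K x = 0) :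
    2 * lagrangeResolvent σ ω x = 3 * σ 0 x + (2 * ω + 1) * (σ 0 x + 2 * σ 1 x) := by
  rw [lagrangeResolvent, apply_two_of_trace_eq_zero σ hx]
  linear_combination (-2 * (σ 0 x + σ 1 x)) * hω

lemma two_mul_lagrangeResolvent_sq (hω : ω ^ 2 + ω + 1 = 0) (hx : Algebra.trace ℚ K x = 0) :
    2 * lagrangeResolvent σ (ω ^ 2) x = 3 * σ 0 x - (2 * ω + 1) * (σ 0 x + 2 * σ 1 x) := by
  have hω' : (ω ^ 2) ^ 2 + ω ^ 2 + 1 = 0 := by linear_combination (ω ^ 2 - ω + 1) * hω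
  rw [two_mul_lagrangeResolvent σ hω' hx]
  linear_combination 2 * (σ 0 x + 2 * σ 1 x) * hω

lemma two_mul_lagrangeResolvent_mul (hω : ω ^ 2 + ω + 1 = 0) (hx : Algebra.trace ℚ K x = 0)
    (hy : Algebra.trace ℚ K y = 0) :
    2 * (lagrangeResolvent σ (ω ^ 2) x * lagrangeResolvent σ ω y) =
      3 * Algebra.trace ℚ K (x * y) + 3 * (2 * ω + 1) * areaForm σ x y := by
  have hx' := two_mul_lagrangeResolvent_sq σ hω hx
  have hy' := two_mul_lagrangeResolvent σ hω hy
  simp only [areaForm, trace_eq_sum_equiv σ, Fin.sum_univ_three, map_mul,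
    apply_two_of_trace_eq_zero σ hx, apply_two_of_trace_eq_zero σ hy]
  linear_combination lagrangeResolvent σ ω y * hx' +
    (3 * σ 0 x - (2 * ω + 1) * (σ 0 x + 2 * σ 1 x)) / 2 * hy' -
    2 * (σ 0 x + 2 * σ 1 x) * (σ 0 y + 2 * σ 1 y) * hω

lemma two_mul_lagrangeResolvent_pow_three (hω : ω ^ 2 + ω + 1 = 0)
    (hx : Algebra.trace ℚ K x = 0) :
    2 * lagrangeResolvent σ ω x ^ 3 = 27 * Algebra.norm ℚ x -
      3 * (2 * ω + 1) * areaForm σ x (3 * x ^ 2 - (Algebra.trace ℚ K (x ^ 2) : K)) := by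
  have h := congrArg (· ^ 3) (two_mul_lagrangeResolvent σ hω hx)
  simp only [areaForm, trace_eq_sum_equiv σ, norm_eq_prod_equiv σ, Fin.sum_univ_three,
    Fin.prod_univ_three, map_mul, map_pow, map_sub, map_ratCast, map_ofNat,
    apply_two_of_trace_eq_zero σ hx]
  linear_combination h / 4 + (9 * σ 0 x + (2 * ω + 1) * (σ 0 x + 2 * σ 1 x)) *
    (σ 0 x + 2 * σ 1 x) ^ 2 * hω

lemma trace_mul_trace_sub_sq (hx : Algebra.trace ℚ K x = 0) (hy : Algebra.trace ℚ K y = 0) :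
    (Algebra.trace ℚ K (x ^ 2) * Algebra.trace ℚ K (y ^ 2) - Algebra.trace ℚ K (x * y) ^ 2 : ℂ) =
      3 * areaForm σ x y ^ 2 := by
  simp only [areaForm, trace_eq_sum_equiv σ, Fin.sum_univ_three, map_mul, map_pow,
    apply_two_of_trace_eq_zero σ hx, apply_two_of_trace_eq_zero σ hy]
  ring

lemma trace_sq_pow_three_eq (hx : Algebra.trace ℚ K x = 0) :
    (Algebra.trace ℚ K (x ^ 2) : ℂ) ^ 3 = 54 * Algebra.norm ℚ x ^ 2 +
      2 * areaForm σ x (3 * x ^ 2 - (Algebra.trace ℚ K (x ^ 2) : K)) ^ 2 := by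
  simp only [areaForm, trace_eq_sum_equiv σ, norm_eq_prod_equiv σ, Fin.sum_univ_three,
    Fin.prod_univ_three, map_mul, map_pow, map_sub, map_ratCast, map_ofNat,
    apply_two_of_trace_eq_zero σ hx]
  ring

end LagrangeResolvent

section TraceZeroLattice
variable {K : Type*} [Field K] [NumberField K]

lemma discr_eq_det_embeddings_sq {n : ℕ} (σ : Fin n ≃ (K →ₐ[ℚ] ℂ))
    (B : Module.Basis (Fin n) ℤ (𝓞 K)) :
    (discr K : ℂ) = (Matrix.of fun i j => σ j (B i)).det ^ 2 := by
  have h := Algebra.discr_localizationLocalization ℤ (Rₘ := ℚ) (nonZeroDivisors ℤ) K B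
  rw [discr_eq_discr K B] at h
  have h' := Algebra.discr_eq_det_embeddingsMatrixReindex_pow_two ℚ ℂ
    (B.localizationLocalization ℚ (nonZeroDivisors ℤ) K) σ
  rw [h, eq_intCast, eq_ratCast, Rat.cast_intCast] at h'
  rw [h']
  congr 2
  ext i j
  simp [Algebra.embeddingsMatrixReindex, Algebra.embeddingsMatrix]

lemma pow_finrank_dvd_discr {p : ℤ} (h : ∀ x : 𝓞 K, p ∣ Algebra.trace ℤ (𝓞 K) x) :
    p ^ Module.finrank ℚ K ∣ discr K := by
  choose q hq using h
  have hM : Algebra.traceMatrix ℤ (RingOfIntegers.basis K) =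
      p • Matrix.of fun i j => q (RingOfIntegers.basis K i * RingOfIntegers.basis K j) := by
    ext i j
    simpa [Algebra.traceMatrix_apply, Algebra.traceForm_apply] using hq _
  rw [discr, Algebra.discr_def, hM, Matrix.det_smul,
    ← Module.finrank_eq_card_basis (RingOfIntegers.basis K), RingOfIntegers.rank]
  exact dvd_mul_right _ _

lemma exists_trace_eq_one {p : ℕ} (hp : p.Prime) (hK : Module.finrank ℚ K = p)
    (hd : ¬ (p : ℤ) ^ p ∣ discr K) : ∃ t : 𝓞 K, Algebra.trace ℤ (𝓞 K) t = 1 := by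
  have hmax : (Ideal.span {(p : ℤ)}).IsMaximal :=
    PrincipalIdealRing.isMaximal_of_irreducible (Nat.prime_iff_prime_int.1 hp).irreducible
  have hle : Ideal.span {(p : ℤ)} ≤ LinearMap.range (Algebra.trace ℤ (𝓞 K)) := by
    rw [Ideal.span_singleton_le_iff_mem]
    refine ⟨1, ?_⟩
    have h := Algebra.trace_algebraMap (R := ℤ) (S := 𝓞 K) 1
    rwa [map_one, RingOfIntegers.rank, hK, nsmul_one] at h
  by_contra hne
  have hrange := hmax.eq_of_le (fun h => hne (LinearMap.range_eq_top.1 h 1)) hle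
  have hdvd (x : 𝓞 K) : (p : ℤ) ∣ Algebra.trace ℤ (𝓞 K) x := by
    rw [← Ideal.mem_span_singleton, hrange]
    exact ⟨x, rfl⟩
  have hpow := pow_finrank_dvd_discr hdvd
  rw [hK] at hpow
  exact hd hpow

lemma exists_basis_eq_cons {n : ℕ} (hK : Module.finrank ℚ K = n + 1) {t : 𝓞 K}
    (ht : Algebra.trace ℤ (𝓞 K) t = 1) :
    ∃ (B : Module.Basis (Fin n) ℤ (LinearMap.ker (Algebra.trace ℤ (𝓞 K))))
      (B' : Module.Basis (Fin (n + 1)) ℤ (𝓞 K)), ⇑B' = Fin.cons t (Subtype.val ∘ B) := by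
  set L := LinearMap.ker (Algebra.trace ℤ (𝓞 K))
  have hli (c : ℤ) (x : 𝓞 K) (hx : x ∈ L) (h : c • t + x = 0) : c = 0 := by
    have h' := congrArg (Algebra.trace ℤ (𝓞 K)) h
    rwa [map_add, map_smul, ht, LinearMap.mem_ker.1 hx, smul_eq_mul, mul_one, add_zero,
      map_zero] at h'
  have hspan (z : 𝓞 K) : ∃ c : ℤ, z + c • t ∈ L :=
    ⟨-Algebra.trace ℤ (𝓞 K) z, by
      rw [LinearMap.mem_ker, map_add, map_smul, ht, smul_eq_mul, mul_one, add_neg_cancel]⟩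
  have hL : Module.finrank ℤ L = n := by
    have h := Module.finrank_eq_card_basis
      (Module.Basis.mkFinCons t (Module.finBasis ℤ L) hli hspan)
    rw [RingOfIntegers.rank, hK, Fintype.card_fin] at h
    omega
  exact ⟨Module.finBasisOfFinrankEq ℤ L hL, _, Module.Basis.coe_mkFinCons t _ hli hspan⟩

variable (σ : Fin 3 ≃ (K →ₐ[ℚ] ℂ))

lemma exists_basis_areaForm_sq_eq_discr (hK : Module.finrank ℚ K = 3) {t : 𝓞 K}
    (ht : Algebra.trace ℤ (𝓞 K) t = 1) :
    ∃ B : Module.Basis (Fin 2) ℤ (LinearMap.ker (Algebra.trace ℤ (𝓞 K))),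
      areaForm σ (B 0 : 𝓞 K) (B 1 : 𝓞 K) ^ 2 = discr K := by
  obtain ⟨B, B', hB⟩ := exists_basis_eq_cons hK ht
  refine ⟨B, ?_⟩
  have htr (x : 𝓞 K) : (Algebra.trace ℤ (𝓞 K) x : ℂ) = σ 0 x + σ 1 x + σ 2 x := by
    rw [← Rat.cast_intCast, Algebra.coe_trace_int, trace_eq_sum_equiv σ, Fin.sum_univ_three]
  have ht' := htr t
  have hu := htr (B 0)
  have hv := htr (B 1)
  rw [LinearMap.mem_ker.1 (B _).2, Int.cast_zero] at hu hv
  rw [ht, Int.cast_one] at ht'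
  have hB₀ : B' 0 = t := by rw [hB, Fin.cons_zero]
  have hB₁ : B' 1 = B 0 := by rw [hB]; rfl
  have hB₂ : B' 2 = B 1 := by rw [hB]; rfl
  rw [discr_eq_det_embeddings_sq σ B', Matrix.det_fin_three]
  simp only [Matrix.of_apply, hB₀, hB₁, hB₂]
  congr 1
  rw [areaForm]
  linear_combination (σ 0 (B 0 : 𝓞 K) * σ 1 (B 1 : 𝓞 K) - σ 1 (B 0 : 𝓞 K) * σ 0 (B 1 : 𝓞 K)) * ht' -
    (σ 0 t * σ 1 (B 1 : 𝓞 K) - σ 1 t * σ 0 (B 1 : 𝓞 K)) * hu +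
    (σ 0 t * σ 1 (B 0 : 𝓞 K) - σ 1 t * σ 0 (B 0 : 𝓞 K)) * hv

variable {σ}

lemma exists_int_areaForm_eq (B : Module.Basis (Fin 2) ℤ (LinearMap.ker (Algebra.trace ℤ (𝓞 K))))
    {x y : 𝓞 K} (hx : Algebra.trace ℤ (𝓞 K) x = 0) (hy : Algebra.trace ℤ (𝓞 K) y = 0) :
    ∃ n : ℤ, areaForm σ x y = n * areaForm σ (B 0 : 𝓞 K) (B 1 : 𝓞 K) := by
  have hrepr {z : 𝓞 K} (hz : Algebra.trace ℤ (𝓞 K) z = 0) :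
      ∃ s t : ℤ, (z : K) = s * (B 0 : 𝓞 K) + t * (B 1 : 𝓞 K) := by
    have h := B.sum_repr ⟨z, LinearMap.mem_ker.2 hz⟩
    rw [Fin.sum_univ_two] at h
    exact ⟨_, _, by simpa using congrArg (algebraMap (𝓞 K) K ∘ Subtype.val) h.symm⟩
  obtain ⟨s, t, hst⟩ := hrepr hx
  obtain ⟨s', t', hst'⟩ := hrepr hy
  refine ⟨s * t' - t * s', ?_⟩
  rw [hst, hst']
  simp only [areaForm, map_add, map_mul, map_intCast]
  push_cast
  ring

lemma exists_int_areaForm_sq_eq (hK : Module.finrank ℚ K = 3)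
    (B : Module.Basis (Fin 2) ℤ (LinearMap.ker (Algebra.trace ℤ (𝓞 K))))
    {x : 𝓞 K} (hx : Algebra.trace ℤ (𝓞 K) x = 0) :
    ∃ n : ℤ, areaForm σ x (3 * (x : K) ^ 2 - (Algebra.trace ℚ K ((x : K) ^ 2) : K)) =
      n * areaForm σ (B 0 : 𝓞 K) (B 1 : 𝓞 K) := by
  have hy : Algebra.trace ℤ (𝓞 K) (3 * x ^ 2 - (Algebra.trace ℤ (𝓞 K) (x ^ 2) : ℤ)) = 0 := by
    have h₃ : (3 * x ^ 2 : 𝓞 K) = (3 : ℤ) • x ^ 2 := by simp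
    have h := Algebra.trace_algebraMap (R := ℤ) (S := 𝓞 K) (Algebra.trace ℤ (𝓞 K) (x ^ 2))
    rw [RingOfIntegers.rank, hK, eq_intCast] at h
    rw [h₃, map_sub, map_smul, h]
    simp
  obtain ⟨n, hn⟩ := exists_int_areaForm_eq (σ := σ) B hx hy
  refine ⟨n, hn ▸ ?_⟩
  rw [← map_pow, ← Algebra.coe_trace_int]
  simp [map_ofNat (algebraMap (𝓞 K) K) 3]

lemma two_mul_gcd_dvd_of_pow_three_eq {d t n k : ℤ}
    (h : t ^ 3 = 54 * n ^ 2 + 2 * d * k ^ 2) : 2 * (Int.gcd 3 d : ℤ) ∣ t := by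
  have h₂ : 2 ∣ t := Int.prime_two.dvd_of_dvd_pow ⟨27 * n ^ 2 + d * k ^ 2, h.trans (by ring)⟩
  have h₃ : (Int.gcd 3 d : ℤ) ∣ t := by
    by_cases hd : (3 : ℤ) ∣ d
    · rw [Int.gcd_eq_left (by norm_num) hd]
      obtain ⟨e, rfl⟩ := hd
      exact Int.prime_three.dvd_of_dvd_pow ⟨18 * n ^ 2 + 2 * e * k ^ 2, h.trans (by ring)⟩
    · rw [Int.isCoprime_iff_gcd_eq_one.1 ((Int.prime_three.coprime_iff_not_dvd).2 hd)]
      simp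
  refine IsCoprime.mul_dvd ?_ h₂ h₃
  exact (show IsCoprime (2 : ℤ) 3 by norm_num).of_isCoprime_of_dvd_right (Int.gcd_dvd_left ..)

end TraceZeroLattice

section TraceForm
variable {K : Type*} [Field K]

lemma isTotallyReal_of_im_eq_zero (h : ∀ (φ : K →+* ℂ) (x : K), (φ x).im = 0) :
    IsTotallyReal K where
  isReal v := by
    rw [InfinitePlace.isReal_iff, ComplexEmbedding.isReal_iff]
    ext x
    exact Complex.conj_eq_iff_im.2 (h _ x)

variable [NumberField K]

lemma twenty_lt_abs_discr [IsTotallyReal K] (hK : Module.finrank ℚ K = 3) : 20 < |discr K| := by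
  have h := abs_discr_ge' K
  rw [IsTotallyReal.nrComplexPlaces_eq_zero, hK] at h
  norm_num [Nat.factorial] at h
  have h' : (20 : ℝ) < |discr K| := by
    rw [Int.cast_abs]
    linarith
  exact_mod_cast h'

lemma apply_eq_re [IsTotallyReal K] (φ : K →ₐ[ℚ] ℂ) (x : K) : φ x = (φ x).re :=
  (Complex.conj_eq_iff_re.1 (RingHom.congr_fun
    (ComplexEmbedding.isReal_iff.1 (IsTotallyReal.complexEmbedding_isReal φ.toRingHom)) x)).symm

lemma trace_sq_pos [IsTotallyReal K] {x : K} (hx : x ≠ 0) : 0 < Algebra.trace ℚ K (x ^ 2) := by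
  have h : ((Algebra.trace ℚ K (x ^ 2) : ℝ) : ℂ) =
      ((∑ φ : K →ₐ[ℚ] ℂ, (φ x).re ^ 2 : ℝ) : ℂ) := by
    have h' := trace_eq_sum_embeddings ℂ (K := ℚ) (x := x ^ 2)
    rw [eq_ratCast] at h'
    rw [Complex.ofReal_ratCast, h', Complex.ofReal_sum]
    refine Finset.sum_congr rfl fun φ _ => ?_
    rw [map_pow, Complex.ofReal_pow, ← apply_eq_re]
  rw [← Rat.cast_pos (K := ℝ), Complex.ofReal_injective h]
  refine Finset.sum_pos (fun φ _ => sq_pos_of_ne_zero fun h₀ => hx ?_)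
    ⟨IsAlgClosed.lift, Finset.mem_univ _⟩
  rw [← map_eq_zero φ, apply_eq_re, h₀, Complex.ofReal_zero]

variable {σ : Fin 3 ≃ (K →ₐ[ℚ] ℂ)}
  {B : Module.Basis (Fin 2) ℤ (LinearMap.ker (Algebra.trace ℤ (𝓞 K)))}

lemma two_mul_gcd_dvd_trace_sq (hK : Module.finrank ℚ K = 3)
    (hW : areaForm σ (B 0 : 𝓞 K) (B 1 : 𝓞 K) ^ 2 = discr K)
    {x : 𝓞 K} (hx : Algebra.trace ℤ (𝓞 K) x = 0) :
    2 * (Int.gcd 3 (discr K) : ℤ) ∣ Algebra.trace ℤ (𝓞 K) (x ^ 2) := by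
  obtain ⟨k, hk⟩ := exists_int_areaForm_sq_eq (σ := σ) hK B hx
  refine two_mul_gcd_dvd_of_pow_three_eq (n := Algebra.norm ℤ x) (k := k) ?_
  have hx' : Algebra.trace ℚ K (x : K) = 0 := by rw [← Algebra.coe_trace_int, hx, Int.cast_zero]
  have h := trace_sq_pow_three_eq σ hx'
  rw [hk, mul_pow, hW, ← map_pow, ← Algebra.coe_trace_int, ← Algebra.coe_norm_int] at h
  push_cast at h
  have h' : ((Algebra.trace ℤ (𝓞 K) (x ^ 2) ^ 3 : ℤ) : ℂ) =
      (54 * Algebra.norm ℤ x ^ 2 + 2 * discr K * k ^ 2 : ℤ) := by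
    push_cast
    rw [h]
    ring
  exact_mod_cast h'

lemma exists_traceForm [IsTotallyReal K] (hK : Module.finrank ℚ K = 3)
    (hW : areaForm σ (B 0 : 𝓞 K) (B 1 : 𝓞 K) ^ 2 = discr K) {D : ℤ}
    (hD : (Int.gcd 3 (discr K) : ℤ) ^ 2 * D = -3 * discr K) :
    ∃ a b c : ℤ, 0 < a ∧ b ^ 2 - 4 * a * c = D ∧
      Algebra.trace ℤ (𝓞 K) ((B 0 : 𝓞 K) ^ 2) = 2 * Int.gcd 3 (discr K) * a ∧
      Algebra.trace ℤ (𝓞 K) ((B 0 : 𝓞 K) * (B 1 : 𝓞 K)) = Int.gcd 3 (discr K) * b ∧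
      Algebra.trace ℤ (𝓞 K) ((B 1 : 𝓞 K) ^ 2) = 2 * Int.gcd 3 (discr K) * c := by
  set u : 𝓞 K := ↑(B 0) with hu
  set v : 𝓞 K := ↑(B 1)
  have hg : 0 < (Int.gcd 3 (discr K) : ℤ) := mod_cast Int.gcd_pos_of_ne_zero_left _ three_ne_zero
  have hd := fun {x} => two_mul_gcd_dvd_trace_sq (x := x) hK hW
  generalize (Int.gcd 3 (discr K) : ℤ) = g at *
  have hu₀ : Algebra.trace ℤ (𝓞 K) u = 0 := LinearMap.mem_ker.1 (B 0).2
  have hv₀ : Algebra.trace ℤ (𝓞 K) v = 0 := LinearMap.mem_ker.1 (B 1).2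
  obtain ⟨a, ha⟩ := hd hu₀
  obtain ⟨c, hc⟩ := hd hv₀
  obtain ⟨e, he⟩ := hd (x := u + v) (by rw [map_add, hu₀, hv₀, add_zero])
  have hb : Algebra.trace ℤ (𝓞 K) (u * v) = g * (e - a - c) := by
    have h : (u + v) ^ 2 = u ^ 2 + (2 : ℤ) • (u * v) + v ^ 2 := by
      rw [zsmul_eq_mul]
      push_cast
      ring
    rw [h, map_add, map_add, map_smul, ha, hc, smul_eq_mul] at he
    linarith
  refine ⟨a, e - a - c, c, ?_, ?_, ha, hb, hc⟩
  · have hu' : (u : K) ≠ 0 := by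
      rw [Ne, RingOfIntegers.coe_eq_zero_iff, hu, ZeroMemClass.coe_eq_zero]
      exact B.ne_zero 0
    have h := trace_sq_pos hu'
    rw [← map_pow, ← Algebra.coe_trace_int, ha, Int.cast_pos] at h
    exact pos_of_mul_pos_right h (by positivity)
  · have coe {x : 𝓞 K} (hx : Algebra.trace ℤ (𝓞 K) x = 0) : Algebra.trace ℚ K (x : K) = 0 := by
      rw [← Algebra.coe_trace_int, hx, Int.cast_zero]
    have h := trace_mul_trace_sub_sq σ (coe hu₀) (coe hv₀)
    rw [hW] at h
    simp only [← map_pow, ← map_mul, ← Algebra.coe_trace_int, ha, hb, hc, Rat.cast_intCast] at h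
    norm_cast at h
    refine mul_left_cancel₀ (pow_ne_zero 2 hg.ne') ?_
    linarith

end TraceForm

section CubicResolvent
variable {F K : Type*} [Field F] [NumberField F] [Field K] [NumberField K]
  (σ : Fin 3 ≃ (K →ₐ[ℚ] ℂ)) {ω : ℂ} {ρ : F →ₐ[ℚ] ℂ} {τ : F ≃ₐ[ℚ] F} {δ θ α : F} {u v : K}
  {a b c k D d : ℤ} {g : ℕ}

lemma exists_two_mul_add_one_mul_eq {W : ℂ} (hW : W ^ 2 = d) (hd : d ≠ 0) (hδ : δ ^ 2 = (D : F))
    (hD : (g : ℤ) ^ 2 * D = -3 * d) (ρ : F →ₐ[ℚ] ℂ) :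
    ∃ ω : ℂ, ω ^ 2 + ω + 1 = 0 ∧ (2 * ω + 1) * W = g * ρ δ := by
  have hd' : (d : ℂ) ≠ 0 := mod_cast hd
  have hW₀ : W ≠ 0 := fun h => hd' (by rw [← hW, h, zero_pow two_ne_zero])
  have hρ : ρ δ ^ 2 = D := by rw [← map_pow, hδ, map_intCast]
  have hD' : (g : ℂ) ^ 2 * D = -3 * d := mod_cast hD
  refine ⟨(g * ρ δ / W - 1) / 2, ?_, ?_⟩
  · have h : (g * ρ δ / W) ^ 2 = -3 := by
      rw [div_pow, mul_pow, hρ, hW, hD', mul_div_cancel_right₀ _ hd']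
    linear_combination h / 4
  · linear_combination div_mul_cancel₀ (g * ρ δ) hW₀

lemma lagrangeResolvent_sq_mul_self (hω : ω ^ 2 + ω + 1 = 0) (hu : Algebra.trace ℚ K u = 0)
    (ha : Algebra.trace ℚ K (u ^ 2) = 2 * g * a) :
    lagrangeResolvent σ (ω ^ 2) u * lagrangeResolvent σ ω u = 3 * g * a := by
  have h := two_mul_lagrangeResolvent_mul σ hω hu hu
  rw [← sq, ha, areaForm, mul_comm (σ 0 u), sub_self] at h
  push_cast at h
  linear_combination h / 2

lemma lagrangeResolvent_sq_mul (hω : ω ^ 2 + ω + 1 = 0) (hu : Algebra.trace ℚ K u = 0)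
    (hv : Algebra.trace ℚ K v = 0) (hb : Algebra.trace ℚ K (u * v) = g * b)
    (hW : (2 * ω + 1) * areaForm σ u v = g * ρ δ) (hθ : 2 * θ = b + δ) :
    lagrangeResolvent σ (ω ^ 2) u * lagrangeResolvent σ ω v = 3 * g * ρ θ := by
  have h := two_mul_lagrangeResolvent_mul σ hω hu hv
  have hθ' := congrArg ρ hθ
  rw [map_mul, map_ofNat, map_add, map_intCast] at hθ'
  rw [hb] at h
  push_cast at h
  linear_combination h / 2 + 3 / 2 * hW - 3 / 2 * g * hθ'

lemma lagrangeResolvent_sq_mul_add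
    (hua : lagrangeResolvent σ (ω ^ 2) u * lagrangeResolvent σ ω u = 3 * g * a)
    (huθ : lagrangeResolvent σ (ω ^ 2) u * lagrangeResolvent σ ω v = 3 * g * ρ θ) (s t : ℤ) :
    lagrangeResolvent σ (ω ^ 2) u * lagrangeResolvent σ ω (s * u + t * v) =
      3 * g * ρ (s * a + t * θ) := by
  simp only [lagrangeResolvent_add, lagrangeResolvent_intCast_mul, map_add, map_mul, map_intCast]
  linear_combination s * hua + t * huθ

lemma apply_coeff_mul_lagrangeResolvent_pow (hω : ω ^ 2 + ω + 1 = 0)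
    (hu : Algebra.trace ℚ K u = 0) (ha₀ : a ≠ 0) (ha : Algebra.trace ℚ K (u ^ 2) = 2 * g * a)
    (hW : (2 * ω + 1) * areaForm σ u v = g * ρ δ)
    (hk : areaForm σ u (3 * u ^ 2 - (Algebra.trace ℚ K (u ^ 2) : K)) = k * areaForm σ u v)
    (hα : 54 * a ^ 3 * α = 27 * (Algebra.norm ℚ u : F) - 3 * g * k * δ) :
    ρ α * lagrangeResolvent σ (ω ^ 2) u ^ 3 = g ^ 3 := by
  have h := two_mul_lagrangeResolvent_pow_three σ hω hu
  have hα' := congrArg ρ hα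
  simp only [map_sub, map_mul, map_pow, map_ofNat, map_intCast, map_natCast, map_ratCast] at hα'
  rw [hk] at h
  have hcube : lagrangeResolvent σ ω u ^ 3 = 27 * a ^ 3 * ρ α := by
    linear_combination h / 2 - hα' / 2 - 3 / 2 * k * hW
  have h' := congrArg (· ^ 3) (lagrangeResolvent_sq_mul_self σ hω hu ha)
  have ha' : (27 * a ^ 3 : ℂ) ≠ 0 := mul_ne_zero (by norm_num) (pow_ne_zero 3 (mod_cast ha₀))
  refine mul_left_cancel₀ ha' ?_
  linear_combination h' - lagrangeResolvent σ (ω ^ 2) u ^ 3 * hcube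

lemma apply_coeff_mul_pow (hg : g ≠ 0) {x : F} {y : K}
    (hα : ρ α * lagrangeResolvent σ (ω ^ 2) u ^ 3 = g ^ 3)
    (hxy : lagrangeResolvent σ (ω ^ 2) u * lagrangeResolvent σ ω y = 3 * g * ρ x) :
    27 * ρ (α * x ^ 3) = lagrangeResolvent σ ω y ^ 3 := by
  have hg' : (g : ℂ) ^ 3 ≠ 0 := pow_ne_zero 3 (mod_cast hg)
  refine mul_right_cancel₀ hg' ?_
  rw [map_mul, map_pow]
  linear_combination lagrangeResolvent σ ω y ^ 3 * hα - ρ α * congrArg (· ^ 3) hxy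

lemma IsConj.apply_trace (hτ : IsConj τ) (ρ : F →ₐ[ℚ] ℂ) (x : F) :
    (Algebra.trace ℚ F x : ℂ) = ρ x + ρ (τ x) := by
  rw [← map_add, ← (hτ x).1, map_ratCast]

lemma IsConj.apply_norm (hτ : IsConj τ) (ρ : F →ₐ[ℚ] ℂ) (x : F) :
    (Algebra.norm ℚ x : ℂ) = ρ x * ρ (τ x) := by
  rw [← map_mul, ← (hτ x).2, map_ratCast]

lemma IsConj.norm_coeff_mul_pow (hτ : IsConj τ) (hg : g ≠ 0)
    (hua : lagrangeResolvent σ (ω ^ 2) u * lagrangeResolvent σ ω u = 3 * g * a)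
    (h : ρ α * lagrangeResolvent σ (ω ^ 2) u ^ 3 = g ^ 3)
    (h' : ρ (τ α) * lagrangeResolvent σ ω u ^ 3 = g ^ 3) :
    Algebra.norm ℚ α * (3 * a) ^ 3 = g ^ 3 := by
  have hg' : (g : ℂ) ^ 3 ≠ 0 := pow_ne_zero 3 (mod_cast hg)
  have hN : (Algebra.norm ℚ α * (3 * a) ^ 3 : ℂ) = g ^ 3 := by
    refine mul_right_cancel₀ hg' ?_
    rw [hτ.apply_norm ρ]
    linear_combination congrArg₂ (· * ·) h h' - ρ α * ρ (τ α) * congrArg (· ^ 3) hua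
  exact_mod_cast hN

lemma IsConj.norm_eq_trace_coeff_mul_pow (hτ : IsConj τ) (hω : ω ^ 2 + ω + 1 = 0) {x : F} {y : K}
    (hy : Algebra.trace ℚ K y = 0)
    (h : 27 * ρ (α * x ^ 3) = lagrangeResolvent σ ω y ^ 3)
    (h' : 27 * ρ (τ (α * x ^ 3)) = lagrangeResolvent σ (ω ^ 2) y ^ 3) :
    Algebra.norm ℚ y = Algebra.trace ℚ F (α * x ^ 3) := by
  have hω' : (ω ^ 2) ^ 2 + ω ^ 2 + 1 = 0 := by linear_combination (ω ^ 2 - ω + 1) * hω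
  have hN := two_mul_lagrangeResolvent_pow_three σ hω hy
  have hN' := two_mul_lagrangeResolvent_pow_three σ hω' hy
  have hT : (Algebra.norm ℚ y : ℂ) = Algebra.trace ℚ F (α * x ^ 3) := by
    rw [hτ.apply_trace ρ]
    linear_combination -(hN + hN' + 2 * h + 2 * h') / 54 +
      areaForm σ y (3 * y ^ 2 - (Algebra.trace ℚ K (y ^ 2) : K)) / 9 * hω
  exact_mod_cast hT

lemma exists_coeff (hF : Module.finrank ℚ F = 2) (hδ : δ ^ 2 = (D : F)) (hD : D < 0) (hg : g ≠ 0)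
    (hgD : (g : ℤ) ^ 2 * D = -3 * d) (hd : d ≠ 0) (hW : areaForm σ u v ^ 2 = d)
    (hu : Algebra.trace ℚ K u = 0) (hv : Algebra.trace ℚ K v = 0) (ha₀ : a ≠ 0)
    (ha : Algebra.trace ℚ K (u ^ 2) = 2 * g * a) (hb : Algebra.trace ℚ K (u * v) = g * b)
    (hk : areaForm σ u (3 * u ^ 2 - (Algebra.trace ℚ K (u ^ 2) : K)) = k * areaForm σ u v)
    (hθ : 2 * θ = b + δ) :
    ∃ α : F, Algebra.norm ℚ α * (3 * a) ^ 3 = g ^ 3 ∧ ∀ s t : ℤ,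
      Algebra.norm ℚ (s * u + t * v) = Algebra.trace ℚ F (α * (s * a + t * θ) ^ 3) := by
  obtain ⟨τ, hτ⟩ := exists_isConj hF
  let ρ : F →ₐ[ℚ] ℂ := IsAlgClosed.lift
  let ρ' : F →ₐ[ℚ] ℂ := ρ.comp τ.toAlgHom
  obtain ⟨ω, hω, hρ⟩ := exists_two_mul_add_one_mul_eq hW hd hδ hgD ρ
  have hω' : (ω ^ 2) ^ 2 + ω ^ 2 + 1 = 0 := by linear_combination (ω ^ 2 - ω + 1) * hω
  have hω₄ : (ω ^ 2) ^ 2 = ω := by linear_combination (ω ^ 2 - ω) * hω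
  have hρ' : (2 * ω ^ 2 + 1) * areaForm σ u v = g * ρ' δ := by
    have h : ρ' δ = -ρ δ := by
      rw [← map_neg, ← hτ.apply_of_sq_eq_intCast hF hδ hD]
      rfl
    rw [h]
    linear_combination 2 * areaForm σ u v * hω - hρ
  have hα : 54 * (a : F) ^ 3 * ((27 * (Algebra.norm ℚ u : F) - 3 * g * k * δ) / (54 * a ^ 3)) =
      27 * (Algebra.norm ℚ u : F) - 3 * g * k * δ :=
    mul_div_cancel₀ _ (mul_ne_zero (by norm_num) (pow_ne_zero 3 (mod_cast ha₀)))
  generalize (27 * (Algebra.norm ℚ u : F) - 3 * g * k * δ) / (54 * a ^ 3) = α at hα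
  have hua := lagrangeResolvent_sq_mul_self σ hω hu ha
  have hua' := lagrangeResolvent_sq_mul_self σ hω' hu ha
  have hαu := apply_coeff_mul_lagrangeResolvent_pow σ hω hu ha₀ ha hρ hk hα
  have hαu' := apply_coeff_mul_lagrangeResolvent_pow σ hω' hu ha₀ ha hρ' hk hα
  refine ⟨α, hτ.norm_coeff_mul_pow σ hg hua hαu (hω₄ ▸ hαu'), fun s t => ?_⟩
  refine hτ.norm_eq_trace_coeff_mul_pow σ (ρ := ρ) hω ?_ ?_ ?_
  · simp only [← zsmul_eq_mul, map_add, map_zsmul, hu, hv, smul_zero, add_zero]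
  · exact apply_coeff_mul_pow σ hg hαu (lagrangeResolvent_sq_mul_add σ hua
      (lagrangeResolvent_sq_mul σ hω hu hv hb hρ hθ) s t)
  · exact apply_coeff_mul_pow σ hg hαu' (lagrangeResolvent_sq_mul_add σ hua'
      (lagrangeResolvent_sq_mul σ hω' hu hv hb hρ' hθ) s t)

end CubicResolvent

section Existence
variable {F K : Type*} [Field F] [Field K]

lemma exists_coe_eq_and_coe_equiv_eq {I : Ideal (𝓞 F)} {L : Submodule ℤ (𝓞 K)}
    (A : Module.Basis (Fin 2) ℤ I) (B : Module.Basis (Fin 2) ℤ L) (x : I) :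
    ∃ s t : ℤ, ((x : 𝓞 F) : F) = s * (A 0 : 𝓞 F) + t * (A 1 : 𝓞 F) ∧
      ((A.equiv B (Equiv.refl _) x : 𝓞 K) : K) = s * (B 0 : 𝓞 K) + t * (B 1 : 𝓞 K) := by
  have h : x = A.repr x 0 • A 0 + A.repr x 1 • A 1 := by
    rw [← Fin.sum_univ_two fun i => A.repr x i • A i, A.sum_repr]
  refine ⟨A.repr x 0, A.repr x 1, ?_, ?_⟩
  · simpa using congrArg (algebraMap (𝓞 F) F ∘ Subtype.val) h
  · simpa using congrArg (fun y => ((A.equiv B (Equiv.refl _) y : 𝓞 K) : K)) h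

variable [NumberField F] [NumberField K] {δ θ : F} {u v : K} {a b c D : ℤ} {g : ℕ}

lemma trace_sq_add (ha : Algebra.trace ℚ K (u ^ 2) = 2 * g * a)
    (hb : Algebra.trace ℚ K (u * v) = g * b) (hc : Algebra.trace ℚ K (v ^ 2) = 2 * g * c)
    (s t : ℤ) : Algebra.trace ℚ K ((s * u + t * v) ^ 2) =
      2 * g * (a * s ^ 2 + b * s * t + c * t ^ 2) := by
  have h : (s * u + t * v) ^ 2 =
      (s ^ 2 : ℚ) • u ^ 2 + (2 * s * t : ℚ) • (u * v) + (t ^ 2 : ℚ) • v ^ 2 := by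
    simp only [Rat.smul_def]
    push_cast
    ring
  rw [h, map_add, map_add, map_smul, map_smul, map_smul, ha, hb, hc]
  simp only [smul_eq_mul]
  ring

lemma norm_add_of_two_mul_eq (hF : Module.finrank ℚ F = 2) (hδ : δ ^ 2 = (D : F)) (hD : D < 0)
    (hdisc : b ^ 2 - 4 * a * c = D) (hθ : 2 * θ = b + δ) (s t : ℤ) :
    Algebra.norm ℚ (s * a + t * θ) = a * (a * s ^ 2 + b * s * t + c * t ^ 2) := by
  have h := (trace_norm_of_two_mul_eq hF hδ hD (x := s * a + t * θ) (p := 2 * a * s + b * t)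
    (q := t) (by push_cast; linear_combination (t : F) * hθ)).2
  have hD' : (b ^ 2 - 4 * a * c : ℚ) = D := mod_cast hdisc
  linear_combination h / 4 + t ^ 2 * hD' / 4

/-- A representation from bases of the ideal and of the trace-zero lattice in which the quadratic
and the cubic forms agree. -/
noncomputable def CubicRepresentation.ofBasis {I : Ideal (𝓞 F)} (A : Module.Basis (Fin 2) ℤ I)
    (B : Module.Basis (Fin 2) ℤ (LinearMap.ker (Algebra.trace ℤ (𝓞 K)))) (α : F)
    (hα : Algebra.norm ℚ α * (3 * Ideal.absNorm I) ^ 3 = g ^ 3)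
    (hsq : ∀ s t : ℤ, Algebra.trace ℚ K ((s * (B 0 : 𝓞 K) + t * (B 1 : 𝓞 K)) ^ 2) *
      Ideal.absNorm I = 2 * g * Algebra.norm ℚ (s * (A 0 : 𝓞 F) + t * (A 1 : 𝓞 F) : F))
    (hcube : ∀ s t : ℤ, Algebra.norm ℚ (s * (B 0 : 𝓞 K) + t * (B 1 : 𝓞 K) : K) =
      Algebra.trace ℚ F (α * (s * (A 0 : 𝓞 F) + t * (A 1 : 𝓞 F)) ^ 3)) :
    CubicRepresentation F K g where
  ideal := I
  ideal_ne_bot := (Submodule.ne_bot_iff I).2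
    ⟨A 0, (A 0).2, fun h => A.ne_zero 0 (Subtype.ext h)⟩
  coeff := α
  norm_coeff := hα
  equiv := (A.equiv B (Equiv.refl _)).toEquiv.trans (Equiv.subtypeEquivRight fun x => by
    rw [LinearMap.mem_ker, ← Algebra.coe_trace_int, Int.cast_eq_zero])
  trace_sq {x} hx := by
    obtain ⟨s, t, hx', hy⟩ := exists_coe_eq_and_coe_equiv_eq A B ⟨x, hx⟩
    rw [hx', ← hsq, ← hy]
    rfl
  norm_equiv {x} hx := by
    obtain ⟨s, t, hx', hy⟩ := exists_coe_eq_and_coe_equiv_eq A B ⟨x, hx⟩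
    rw [hx', ← hcube, ← hy]
    rfl

lemma nonempty_cubicRepresentation [IsTotallyReal K] (hF : Module.finrank ℚ F = 2)
    (hδ : δ ^ 2 = (D : F)) (hD : D < 0) (hfund : IsFundamentalDiscriminant D)
    (hK : Module.finrank ℚ K = 3) (hd : ¬ (3 : ℤ) ^ 3 ∣ discr K)
    (hgD : (Int.gcd 3 (discr K) : ℤ) ^ 2 * D = -3 * discr K) :
    Nonempty (CubicRepresentation F K (Int.gcd 3 (discr K))) := by
  obtain ⟨σ⟩ := exists_equiv_algHom hK
  obtain ⟨t₀, ht₀⟩ := exists_trace_eq_one Nat.prime_three hK hd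
  obtain ⟨B, hW⟩ := exists_basis_areaForm_sq_eq_discr σ hK ht₀
  obtain ⟨a, b, c, ha₀, hdisc, ha, hb, hc⟩ := exists_traceForm hK hW hgD
  obtain ⟨k, hk⟩ := exists_int_areaForm_sq_eq (σ := σ) hK B (LinearMap.mem_ker.1 (B 0).2)
  obtain ⟨θ, hθ⟩ := exists_two_mul_eq_add hF hδ hD hdisc
  obtain ⟨A, hA₀, hA₁⟩ := exists_basis_span_pair hF hδ hD hfund ha₀.ne' hdisc hθ
  have hI := absNorm_span_pair hF hδ hD hfund ha₀.ne' hdisc hθ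
  have hIa : (Ideal.absNorm (Ideal.span {(a : 𝓞 F), θ}) : ℚ) = a := by
    rw [hI, Nat.cast_natAbs, abs_of_pos ha₀]
  have haF : ((a : 𝓞 F) : F) = a := map_intCast (algebraMap (𝓞 F) F) a
  have htr (x : LinearMap.ker (Algebra.trace ℤ (𝓞 K))) :
      Algebra.trace ℚ K ((x : 𝓞 K) : K) = 0 := by
    rw [← Algebra.coe_trace_int, LinearMap.mem_ker.1 x.2, Int.cast_zero]
  have hQ {x : 𝓞 K} {n : ℤ} (h : Algebra.trace ℤ (𝓞 K) x = n) :
      Algebra.trace ℚ K (x : K) = n := by rw [← Algebra.coe_trace_int, h]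
  have ha' := hQ ha
  have hb' := hQ hb
  have hc' := hQ hc
  push_cast [map_pow, map_mul] at ha' hb' hc'
  obtain ⟨α, hα, hcube⟩ := exists_coeff σ hF hδ hD (Int.gcd_pos_of_ne_zero_left _ three_ne_zero).ne'
    hgD (discr_ne_zero K) hW (htr _) (htr _) ha₀.ne' ha' hb' hk hθ
  refine ⟨.ofBasis A B α (by rw [hIa, hα]) (fun s t => ?_) fun s t => ?_⟩
  · rw [hIa, hA₀, hA₁, haF, norm_add_of_two_mul_eq hF hδ hD hdisc hθ,
      trace_sq_add ha' hb' hc']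
    ring
  · rw [hA₀, hA₁, haF, hcube]

end Existence

section MirrorDiscriminant

lemma not_three_dvd_of_squarefree_three_mul {m : ℤ} (hm : Squarefree (3 * m)) : ¬ (3 : ℤ) ∣ m := by
  rintro ⟨k, rfl⟩
  have h := Int.isUnit_iff.1 (hm 3 ⟨k, by ring⟩)
  omega

lemma squarefree_neg_three_mul {m : ℤ} (hm : Squarefree m) (h : ¬ (3 : ℤ) ∣ m) :
    Squarefree (-3 * m) :=
  squarefree_mul_iff.2 ⟨((Int.prime_three.coprime_iff_not_dvd).2 h).neg_left.isRelPrime,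
    Int.prime_three.neg.squarefree, hm⟩

lemma not_nine_dvd_of_isFundamentalDiscriminant {d : ℤ} (hd : IsFundamentalDiscriminant d) :
    ¬ (9 : ℤ) ∣ d := by
  rintro ⟨k, rfl⟩
  rcases hd.2 with ⟨-, h⟩ | ⟨h₄, h, -⟩
  · exact not_three_dvd_of_squarefree_three_mul (m := 3 * k) (by convert h using 1; ring) ⟨k, rfl⟩
  · obtain ⟨l, rfl⟩ : ∃ l, k = 4 * l := ⟨k / 4, by omega⟩
    refine not_three_dvd_of_squarefree_three_mul (m := 3 * l) ?_ ⟨l, rfl⟩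
    convert h using 1
    omega

lemma isFundamentalDiscriminant_neg_of_three_mul {d : ℤ}
    (hd : IsFundamentalDiscriminant (3 * d)) (hd₀ : 0 < d) : IsFundamentalDiscriminant (-d) := by
  refine ⟨by omega, hd.2.imp (fun h => ⟨by omega, ?_⟩) fun h => ⟨by omega, ?_, by omega⟩⟩
  · exact h.2.squarefree_of_dvd ⟨-3, by ring⟩
  · exact h.2.1.squarefree_of_dvd ⟨-3, by omega⟩

lemma isFundamentalDiscriminant_neg_three_mul {d : ℤ} (hd : IsFundamentalDiscriminant d)
    (h₃ : ¬ (3 : ℤ) ∣ d) : IsFundamentalDiscriminant (-3 * d) := by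
  refine ⟨by omega, hd.2.imp (fun h => ⟨by omega, squarefree_neg_three_mul h.2 h₃⟩)
    fun h => ⟨by omega, ?_, by omega⟩⟩
  convert squarefree_neg_three_mul h.2.1 (by omega) using 1
  omega

lemma exists_mirror_discriminant {d : ℤ} (hd : IsFundamentalDiscriminant d) (hd₀ : 0 < d) :
    ∃ D : ℤ, IsFundamentalDiscriminant D ∧ (Int.gcd 3 d : ℤ) ^ 2 * D = -3 * d := by
  by_cases h₃ : (3 : ℤ) ∣ d
  · rw [Int.gcd_eq_left (by norm_num) h₃]
    obtain ⟨d, rfl⟩ := h₃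
    exact ⟨-d, isFundamentalDiscriminant_neg_of_three_mul hd (by omega), by ring⟩
  · rw [Int.isCoprime_iff_gcd_eq_one.1 ((Int.prime_three.coprime_iff_not_dvd).2 h₃)]
    exact ⟨-3 * d, isFundamentalDiscriminant_neg_three_mul hd h₃, by norm_num⟩

end MirrorDiscriminant

section LinearIndependence
variable {F : Type*} [Field F] [NumberField F] [IsTotallyComplex F] {ι : Type*} [Fintype ι]
  {K : ι → Type*} [∀ i, Field (K i)] [∀ i, NumberField (K i)] {g v : ℕ} {a : ι → ℂ}

lemma CubicRepresentation.eq_zero_of_sum_mul_card_eq_zero (hF : Module.finrank ℚ F = 2)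
    (hu : ∀ u : (𝓞 F)ˣ, u = 1 ∨ u = -1) (hK : ∀ i, Module.finrank ℚ (K i) = 3)
    (hv : g * v = 3) (R : ∀ i, CubicRepresentation F (K i) g)
    (hiso : ∀ i j, Nonempty (K i ≃+* K j) → i = j)
    (h : ∀ m : ℕ, ∑ i, a i * (Nat.card {θ : 𝓞 (K i) // Algebra.trace ℚ (K i) θ = 0 ∧
      Algebra.trace ℚ (K i) (θ ^ 2 : K i) = 2 * g * m} : ℂ) = 0) : a = 0 := by
  obtain ⟨τ, hτ⟩ := exists_isConj hF
  have := finite_units hF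
  refine eq_zero_of_sum_mul_classCount_eq_zero hF (c := fun i => (idealClass (R i).ideal)⁻¹)
    (fun i j => ?_) (fun i j hij => hiso i j ?_) (fun i j hij => hiso i j ?_) fun m hm => ?_
  · rw [inv_pow, inv_pow, ← mul_inv, (R i).idealClass_pow_mul_idealClass_pow (R j) hF hv, inv_one]
  · exact (R i).nonempty_ringEquiv_of_idealClass_eq (R j) hF (hK i) (hK j) hv hu
      (inv_injective hij)
  · refine (R i).nonempty_ringEquiv_of_idealClass_eq ((R j).conj τ) hF (hK i) (hK j) hv hu ?_
    rw [conj, idealClass_conjIdeal hF hτ (R j).ideal_ne_bot]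
    exact inv_injective hij
  · have hcard : (Nat.card (𝓞 F)ˣ : ℂ) ≠ 0 := mod_cast Nat.card_pos.ne'
    have hg : g ≠ 0 := left_ne_zero_of_mul (hv.trans_ne three_ne_zero)
    have h' := h m
    simp only [(R _).card_trace_sq_eq hF hg hm, Nat.cast_mul, mul_left_comm (a _)] at h'
    rw [← Finset.mul_sum] at h'
    exact (mul_eq_zero.1 h').resolve_left hcard

end LinearIndependence

end CubicTheta

open NumberField CubicTheta

/-- The theta series of pairwise non-isomorphic totally real cubic fields of the same
positive fundamental discriminant `d` are linearly independent over ℂ: if a ℂ-linear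
combination of their coefficient functions `m ↦ #{x ∈ O_{K_i}^0 : Tr(x²) = 2·gcd(3,d)·m}`
vanishes identically, then all the coefficients vanish. -/
theorem theta_series_linearly_independent
    (d : ℤ) (hdpos : 0 < d) (hfund : IsFundamentalDiscriminant d)
    (n : ℕ) (K : Fin n → Type*) [∀ i, Field (K i)] [∀ i, NumberField (K i)]
    (hdeg : ∀ i, Module.finrank ℚ (K i) = 3)
    (htr : ∀ i, ∀ (φ : K i →+* ℂ) (x : K i), (φ x).im = 0)
    (hdisc : ∀ i, NumberField.discr (K i) = d)
    (hnoniso : ∀ i j, i ≠ j → ¬ Nonempty (K i ≃+* K j))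
    (lam : Fin n → ℂ)
    (hlin : ∀ m : ℕ,
      ∑ i, lam i *
        (Nat.card {x : NumberField.RingOfIntegers (K i) //
          Algebra.trace ℚ (K i) (x : K i) = 0 ∧
            Algebra.trace ℚ (K i) ((x : K i) ^ 2) =
              ((2 * (Int.gcd 3 d : ℤ) * (m : ℤ) : ℤ) : ℚ)} : ℂ) = 0) :
    ∀ i, lam i = 0 := by
  intro i₀
  have _ (i) : IsTotallyReal (K i) := isTotallyReal_of_im_eq_zero (htr i)
  have hd : 20 < d := by
    have h := twenty_lt_abs_discr (hdeg i₀)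
    rwa [hdisc, abs_of_pos hdpos] at h
  have hd₂₇ : ¬ (3 : ℤ) ^ 3 ∣ d := fun h =>
    not_nine_dvd_of_isFundamentalDiscriminant hfund (.trans (by norm_num) h)
  obtain ⟨D, hDfund, hgD⟩ := exists_mirror_discriminant hfund hdpos
  obtain ⟨v, hv⟩ : Int.gcd 3 d ∣ 3 := Int.natCast_dvd_natCast.1 (Int.gcd_dvd_left ..)
  have hD : D < -4 := by
    have hg : (Int.gcd 3 d : ℤ) ≤ 3 := Int.le_of_dvd three_pos (Int.gcd_dvd_left ..)
    nlinarith
  have hD₀ : D < 0 := by omega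
  obtain ⟨F, _, _, δ, hF, hδ⟩ := exists_quadraticField hD₀
  have := isTotallyComplex_of_sq_eq_intCast hδ hD₀
  have R (i) : CubicRepresentation F (K i) (Int.gcd 3 d) := by
    rw [← hdisc i] at hd₂₇ hgD ⊢
    exact (nonempty_cubicRepresentation hF hδ hD₀ hDfund (hdeg i) hd₂₇ hgD).some
  refine congrFun (CubicRepresentation.eq_zero_of_sum_mul_card_eq_zero hF
    (units_eq_one_or_neg_one hF hδ hD hDfund) hdeg hv.symm R
    (fun i j => not_imp_not.1 (hnoniso i j)) fun m => ?_) i₀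
  simpa using hlin m
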